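/- arXiv:1708.07395 — 9 statements merged into one kernel-verified Lean document; each statement's English description precedes it below -/
import Mathlib

section
/- Identify ℝ^{2n} with ℂⁿ (n ≥ 1), with real inner product ⟨u,v⟩ = Re(∑ⱼ uⱼ·conj(vⱼ)) and standard symplectic form ω(u,v) = ⟨i·u, v⟩. Then the set {(a,b) ∈ ℂⁿ × ℂⁿ : ‖a‖ = ‖b‖ = 1 and ω(a,b) > 0} is path-connected, and likewise the set {(a,b) ∈ ℂⁿ × ℂⁿ : ‖a‖ = ‖b‖ = 1 and ω(a,b) < 0} is path-connected. -/
/-- The real inner product `⟨u,v⟩ = Re (∑ⱼ uⱼ conj vⱼ)` on `ℂⁿ ≅ ℝ^{2n}`. -/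
noncomputable def rinner {n : ℕ} (u v : EuclideanSpace ℂ (Fin n)) : ℝ :=
  (inner ℂ u v : ℂ).re

/-- The standard linear symplectic form `ω(u,v) = ⟨i·u, v⟩` on `ℂⁿ ≅ ℝ^{2n}`. -/
noncomputable def symp {n : ℕ} (u v : EuclideanSpace ℂ (Fin n)) : ℝ :=
  rinner (Complex.I • u) v

/-!
If a family of nonzero functionals `ω x` on a normed space depends continuously on a point `x` of a
path-connected space, then the pairs `(x, v)` with `0 < ω x v` form a bundle of open half-spaces.
A partition of unity gives it a continuous section, and every point can be joined to the section
inside its own convex fibre, so the total space is path-connected. Rescaling `v` to unit length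
keeps the sign of `ω x v`. The negative part is the positive part for `-ω`.
-/

open Set Topology

section HalfSpaceBundle

variable {X F : Type*} [TopologicalSpace X] [PathConnectedSpace X]

lemma isPathConnected_setOf_mem_of_starConvex [AddCommGroup F] [Module ℝ F] [TopologicalSpace F]
    [ContinuousAdd F] [ContinuousSMul ℝ F] {t : X → Set F} {s : X → F} (hs : Continuous s)
    (hst : ∀ x, s x ∈ t x) (ht : ∀ x, StarConvex ℝ (s x) (t x)) :
    IsPathConnected {p : X × F | p.2 ∈ t p.1} := by
  have hgraph : IsPathConnected (range fun x ↦ (x, s x)) := isPathConnected_range (by fun_prop)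
  have hsub : (range fun x ↦ (x, s x)) ⊆ {p : X × F | p.2 ∈ t p.1} := range_subset_iff.2 hst
  obtain ⟨p₀, hp₀, hjoin⟩ := hgraph
  refine ⟨p₀, hsub hp₀, fun ⟨x, v⟩ hv ↦ ((hjoin (mem_range_self x)).mono hsub).trans ?_⟩
  have hfibre : JoinedIn (t x) (s x) v := .of_segment_subset ((ht x).segment_subset hv)
  exact (hfibre.map (f := fun w ↦ (x, w)) (by fun_prop)).mono (image_subset_iff.2 fun _ hw ↦ hw)

variable [NormalSpace X] [ParacompactSpace X]

lemma isPathConnected_setOf_pos [AddCommGroup F] [Module ℝ F] [TopologicalSpace F]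
    [ContinuousAdd F] [ContinuousSMul ℝ F] {ω : X → F →ₗ[ℝ] ℝ}
    (hω : ∀ v, Continuous fun x ↦ ω x v) (hω₀ : ∀ x, ω x ≠ 0) :
    IsPathConnected {p : X × F | 0 < ω p.1 p.2} := by
  have hconvex (x : X) : Convex ℝ {v | 0 < ω x v} := convex_halfSpace_gt (ω x).isLinear 0
  have hlocal (x : X) : ∃ v, ∀ᶠ y in 𝓝 x, v ∈ {v | 0 < ω y v} := by
    obtain ⟨v, hv⟩ := (ω x).surjective (hω₀ x) 1
    exact ⟨v, (hω v).continuousAt.eventually_const_lt (by simp [hv])⟩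
  obtain ⟨s, hs⟩ := exists_continuous_forall_mem_convex_of_local_const hconvex hlocal
  exact isPathConnected_setOf_mem_of_starConvex s.continuous hs fun x ↦
    (hconvex x).starConvex (hs x)

lemma isPathConnected_setOf_norm_eq_one_and_pos [NormedAddCommGroup F] [NormedSpace ℝ F]
    {ω : X → F →ₗ[ℝ] ℝ} (hω : ∀ v, Continuous fun x ↦ ω x v) (hω₀ : ∀ x, ω x ≠ 0) :
    IsPathConnected {p : X × F | ‖p.2‖ = 1 ∧ 0 < ω p.1 p.2} := by
  have hnorm {p : X × F} (hp : 0 < ω p.1 p.2) : 0 < ‖p.2‖ :=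
    norm_pos_iff.2 fun h ↦ by simp [h] at hp
  have hcont : ContinuousOn (fun p : X × F ↦ (p.1, ‖p.2‖⁻¹ • p.2)) {p | 0 < ω p.1 p.2} :=
    continuousOn_fst.prodMk <|
      (continuousOn_snd.norm.inv₀ fun _ hp ↦ (hnorm hp).ne').smul continuousOn_snd
  convert (isPathConnected_setOf_pos hω hω₀).image' hcont
  ext ⟨x, v⟩
  constructor
  · rintro ⟨hv, hpos⟩
    exact ⟨(x, v), hpos, by simp [show ‖v‖ = 1 from hv]⟩
  · rintro ⟨p, hp, hpv⟩
    obtain ⟨rfl, rfl⟩ := Prod.mk.inj hpv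
    refine ⟨norm_smul_inv_norm (𝕜 := ℝ) (norm_pos_iff.1 (hnorm hp)), ?_⟩
    simpa using mul_pos (inv_pos.2 (hnorm hp)) hp

end HalfSpaceBundle

section SeparatingForm

variable {E F : Type*} [NormedAddCommGroup E] [NormedSpace ℝ E] [NormedAddCommGroup F]
  [NormedSpace ℝ F]

lemma isPathConnected_unit_pairs_pos (hE : 1 < Module.rank ℝ E) {ω : E →ₗ[ℝ] F →ₗ[ℝ] ℝ}
    (hω : ∀ v, Continuous fun u ↦ ω u v) (hsep : ω.SeparatingLeft) :
    IsPathConnected {p : E × F | ‖p.1‖ = 1 ∧ ‖p.2‖ = 1 ∧ 0 < ω p.1 p.2} := by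
  have : PathConnectedSpace (Metric.sphere (0 : E) 1) :=
    isPathConnected_iff_pathConnectedSpace.1 (isPathConnected_sphere hE 0 zero_le_one)
  have hne (a : Metric.sphere (0 : E) 1) : ω a ≠ 0 := fun h ↦
    ne_zero_of_mem_unit_sphere a (hsep a fun v ↦ by simp [h])
  have hsphere := isPathConnected_setOf_norm_eq_one_and_pos
    (fun v ↦ (hω v).comp continuous_subtype_val) hne
  convert hsphere.image (f := Prod.map Subtype.val id) (by fun_prop)
  ext ⟨a, b⟩
  simp [and_left_comm, and_comm]

theorem stmt_2_general (hE : 1 < Module.rank ℝ E) {ω : E →ₗ[ℝ] F →ₗ[ℝ] ℝ}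
    (hω : ∀ v, Continuous fun u ↦ ω u v) (hsep : ω.SeparatingLeft) :
    IsPathConnected {p : E × F | ‖p.1‖ = 1 ∧ ‖p.2‖ = 1 ∧ 0 < ω p.1 p.2} ∧
    IsPathConnected {p : E × F | ‖p.1‖ = 1 ∧ ‖p.2‖ = 1 ∧ ω p.1 p.2 < 0} := by
  refine ⟨isPathConnected_unit_pairs_pos hE hω hsep, ?_⟩
  have hsep_neg : (-ω).SeparatingLeft := fun u hu ↦ hsep u fun v ↦ neg_eq_zero.1 (hu v)
  simpa using isPathConnected_unit_pairs_pos hE (fun v ↦ (hω v).neg) hsep_neg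

end SeparatingForm

section Symplectic

lemma one_lt_rank_real_of_complex (V : Type*) [AddCommGroup V] [Module ℂ V] [Nontrivial V] :
    1 < Module.rank ℝ V := by
  rw [rank_real_of_complex]
  calc (1 : Cardinal) < 2 * 1 := by norm_num
    _ ≤ 2 * Module.rank ℂ V := by gcongr; exact Cardinal.one_le_iff_pos.2 rank_pos

variable {n : ℕ}

lemma symp_eq_im_inner (u v : EuclideanSpace ℂ (Fin n)) : symp u v = (inner ℂ u v).im := by
  simp [symp, rinner]

lemma continuous_symp_left (v : EuclideanSpace ℂ (Fin n)) : Continuous fun u ↦ symp u v := by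
  unfold symp rinner
  fun_prop

lemma symp_I_smul_self (u : EuclideanSpace ℂ (Fin n)) : symp u (Complex.I • u) = ‖u‖ ^ 2 := by
  simp [symp_eq_im_inner, inner_self_eq_norm_sq_to_K, ← Complex.ofReal_pow]

/-- The symplectic form `symp` as a real bilinear map. -/
noncomputable def sympₗ (n : ℕ) :
    EuclideanSpace ℂ (Fin n) →ₗ[ℝ] EuclideanSpace ℂ (Fin n) →ₗ[ℝ] ℝ :=
  LinearMap.mk₂ ℝ symp
    (fun u u' v ↦ by simp only [symp_eq_im_inner, inner_add_left, Complex.add_im])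
    (fun c u v ↦ by
      simp only [symp_eq_im_inner, inner_smul_left_eq_star_smul, conj_trivial, Complex.smul_im])
    (fun u v v' ↦ by simp only [symp_eq_im_inner, inner_add_right, Complex.add_im])
    (fun c u v ↦ by simp only [symp_eq_im_inner, inner_smul_right_eq_smul, Complex.smul_im])

lemma separatingLeft_sympₗ : (sympₗ n).SeparatingLeft := fun u hu ↦ by
  simpa [sympₗ, symp_I_smul_self] using hu (Complex.I • u)

end Symplectic

/-- The set of pairs of unit vectors `(a,b)` in `ℂⁿ ≅ ℝ^{2n}` with
`ω(a,b) > 0` is path-connected, and likewise for `ω(a,b) < 0`. -/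
theorem stmt_2 (n : ℕ) (hn : 1 ≤ n) :
    IsPathConnected {p : EuclideanSpace ℂ (Fin n) × EuclideanSpace ℂ (Fin n) |
        ‖p.1‖ = 1 ∧ ‖p.2‖ = 1 ∧ 0 < symp p.1 p.2} ∧
    IsPathConnected {p : EuclideanSpace ℂ (Fin n) × EuclideanSpace ℂ (Fin n) |
        ‖p.1‖ = 1 ∧ ‖p.2‖ = 1 ∧ symp p.1 p.2 < 0} := by
  have : NeZero n := ⟨Nat.one_le_iff_ne_zero.1 hn⟩
  exact stmt_2_general (one_lt_rank_real_of_complex _) (ω := sympₗ n) continuous_symp_left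
    separatingLeft_sympₗ
end

section
/- Let p : ℝ → ℝ be twice continuously differentiable and 2π-periodic, and set p̄(α) = (p(α) + p(α + π))/2. Then ∫₀^{2π} ∫_{α₁}^{α₁+π} (p(α₁) + p''(α₁))·(p(α₂) + p''(α₂))·sin(α₂ − α₁) dα₂ dα₁ = 2·∫₀^{2π} (p̄(α) + p̄''(α))·p̄(α) dα. -/
open Real

/-!
Since `(p' sin(· - α) - p cos(· - α))' = (p + p'') sin(· - α)`, the inner integral over a half turn
equals `p(α) + p(α + π) = 2 p̄(α)`. The outer integral is thus `2 ∫ (p + p'') p̄`. The function `p̄`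
is `π`-periodic, so averaging the integrand with its translate by `π` replaces the factor `p + p''`
by `p̄ + p̄''` and does not change the integral over a full turn.
-/

open MeasureTheory Set Function

theorem periodic_deriv {𝕜 F : Type*} [NontriviallyNormedField 𝕜] [NormedAddCommGroup F]
    [NormedSpace 𝕜 F] {f : 𝕜 → F} {T : 𝕜} (hf : Periodic f T) : Periodic (deriv f) T := fun x ↦ by
  rw [← deriv_comp_add_const, funext hf]

/-- The mean of `f` and its translate by `c`. For `c = π` and `f` the support function of a planar
convex domain, this is the support function `p̄` of the central symmetrization of the domain. -/
noncomputable def translateMean {E : Type*} [AddCommGroup E] [Module ℝ E] (c : ℝ) (f : ℝ → E)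
    (x : ℝ) : E :=
  (2⁻¹ : ℝ) • (f x + f (x + c))

namespace translateMean

section Algebra

variable {E : Type*} [AddCommGroup E] [Module ℝ E] {c : ℝ}

theorem apply_add (f g : ℝ → E) (x : ℝ) :
    translateMean c (fun y ↦ f y + g y) x = translateMean c f x + translateMean c g x := by
  simp only [translateMean, ← smul_add, add_add_add_comm]

theorem periodic {f : ℝ → E} (hf : Periodic f (2 * c)) : Periodic (translateMean c f) c :=
  fun x ↦ by
    have hx : f (x + c + c) = f x := by rw [add_assoc, ← two_mul, hf]
    rw [translateMean, translateMean, hx, add_comm (f (x + c))]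

theorem apply_smul_of_periodic (f : ℝ → ℝ) {g : ℝ → E} (hg : Periodic g c) (x : ℝ) :
    translateMean c (fun y ↦ f y • g y) x = translateMean c f x • g x := by
  simp only [translateMean, hg x, ← add_smul, smul_smul, smul_eq_mul]

end Algebra

variable {E : Type*} [NormedAddCommGroup E] [NormedSpace ℝ E] {c : ℝ} {f : ℝ → E}

theorem continuous (hf : Continuous f) : Continuous (translateMean c f) := by
  unfold translateMean
  fun_prop

theorem deriv_eq (hf : Differentiable ℝ f) :
    deriv (translateMean c f) = translateMean c (deriv f) :=
  funext fun x ↦ (((hf x).hasDerivAt.add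
    ((hf (x + c)).hasDerivAt.comp_add_const x c)).const_smul (2⁻¹ : ℝ)).deriv

theorem intervalIntegral_eq (hf : Periodic f (2 * c)) {a : ℝ}
    (hint : IntervalIntegrable f volume a (a + 2 * c)) :
    ∫ x in a..a + 2 * c, translateMean c f x = ∫ x in a..a + 2 * c, f x := by
  rcases eq_or_ne c 0 with rfl | hc
  · simp
  have hint' : ∀ u v, IntervalIntegrable f volume u v :=
    hf.intervalIntegrable (mul_ne_zero two_ne_zero hc) hint
  have hshift : ∫ x in a..a + 2 * c, f (x + c) = ∫ x in a..a + 2 * c, f x := by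
    rw [intervalIntegral.integral_comp_add_right, add_right_comm]
    exact hf.intervalIntegral_add_eq (a + c) a
  have hint_shift : IntervalIntegrable (fun x ↦ f (x + c)) volume a (a + 2 * c) :=
    (IntervalIntegrable.comp_add_right_iff).2 (hint' _ _)
  simp only [translateMean]
  rw [intervalIntegral.integral_smul, intervalIntegral.integral_add hint hint_shift, hshift,
    ← two_smul ℝ, inv_smul_smul₀ two_ne_zero]

end translateMean

section SineKernel

variable {E : Type*} [NormedAddCommGroup E] [NormedSpace ℝ E] [CompleteSpace E]
  {f f' f'' : ℝ → E}

theorem integral_sin_sub_smul_add_deriv2 {a b : ℝ} (c : ℝ)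
    (hf : ∀ x ∈ uIcc a b, HasDerivAt f (f' x) x)
    (hf' : ∀ x ∈ uIcc a b, HasDerivAt f' (f'' x) x)
    (hf'' : IntervalIntegrable f'' volume a b) :
    ∫ x in a..b, sin (x - c) • (f x + f'' x) =
      (sin (b - c) • f' b - cos (b - c) • f b) - (sin (a - c) • f' a - cos (a - c) • f a) := by
  have hprim : ∀ x ∈ uIcc a b, HasDerivAt (fun x ↦ sin (x - c) • f' x - cos (x - c) • f x)
      (sin (x - c) • (f x + f'' x)) x := fun x hx ↦ by
    have hsin := ((hasDerivAt_sin (x - c)).comp_sub_const x c).smul (hf' x hx)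
    have hcos := ((hasDerivAt_cos (x - c)).comp_sub_const x c).smul (hf x hx)
    refine (hsin.sub hcos).congr_deriv ?_
    module
  have hf_int : IntervalIntegrable f volume a b :=
    ContinuousOn.intervalIntegrable fun x hx ↦ (hf x hx).continuousAt.continuousWithinAt
  exact intervalIntegral.integral_eq_sub_of_hasDerivAt hprim
    ((hf_int.add hf'').continuousOn_smul (by fun_prop))

theorem integral_half_turn_sin_sub_smul_add_deriv2 {a : ℝ}
    (hf : ∀ x ∈ uIcc a (a + π), HasDerivAt f (f' x) x)
    (hf' : ∀ x ∈ uIcc a (a + π), HasDerivAt f' (f'' x) x)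
    (hf'' : IntervalIntegrable f'' volume a (a + π)) :
    ∫ x in a..a + π, sin (x - a) • (f x + f'' x) = (2 : ℝ) • translateMean π f a := by
  rw [integral_sin_sub_smul_add_deriv2 a hf hf' hf'', translateMean, smul_inv_smul₀ two_ne_zero]
  simp [add_comm]

end SineKernel

theorem integral_integral_mul_add_deriv2_mul_sin {g q : ℝ → ℝ}
    (hg : Periodic g (2 * π)) (hg_int : IntervalIntegrable g volume 0 (2 * π))
    (hq : Periodic q (2 * π)) (hq_diff : Differentiable ℝ q) (hq_diff' : Differentiable ℝ (deriv q))
    (hq_int : IntervalIntegrable (deriv (deriv q)) volume 0 (2 * π)) :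
    ∫ a in (0 : ℝ)..2 * π, ∫ x in a..a + π, g a * (q x + deriv (deriv q) x) * sin (x - a) =
      2 * ∫ a in (0 : ℝ)..2 * π, translateMean π g a * translateMean π q a := by
  have hinner (a : ℝ) : ∫ x in a..a + π, g a * (q x + deriv (deriv q) x) * sin (x - a) =
      2 * (g a * translateMean π q a) := by
    have hint : IntervalIntegrable (deriv (deriv q)) volume a (a + π) :=
      (periodic_deriv (periodic_deriv hq)).intervalIntegrable₀ two_pi_pos.ne' hq_int _ _
    have hhalf := integral_half_turn_sin_sub_smul_add_deriv2 (a := a)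
      (fun x _ ↦ (hq_diff x).hasDerivAt) (fun x _ ↦ (hq_diff' x).hasDerivAt) hint
    simp only [smul_eq_mul] at hhalf
    rw [mul_left_comm, ← hhalf, ← intervalIntegral.integral_const_mul]
    simp only [mul_assoc, mul_comm (sin _)]
  have hqbar : Periodic (translateMean π q) π := translateMean.periodic hq
  have hprod_int : IntervalIntegrable (fun a ↦ g a * translateMean π q a) volume 0 (2 * π) :=
    hg_int.mul_continuousOn (translateMean.continuous hq_diff.continuous).continuousOn
  have hprod : Periodic (fun a ↦ g a * translateMean π q a) (2 * π) := hg.mul (hqbar.nat_mul 2)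
  have hmean (a : ℝ) : translateMean π (fun x ↦ g x * translateMean π q x) a =
      translateMean π g a * translateMean π q a :=
    translateMean.apply_smul_of_periodic g hqbar a
  have havg := translateMean.intervalIntegral_eq hprod (a := 0) (by rwa [zero_add])
  simp only [hmean, zero_add] at havg
  simp only [hinner, intervalIntegral.integral_const_mul, havg]

theorem stmt_4_general {p : ℝ → ℝ} (hp : Differentiable ℝ p) (hp' : Differentiable ℝ (deriv p))
    (hp'' : IntervalIntegrable (deriv (deriv p)) volume 0 (2 * π)) (hper : Periodic p (2 * π))
    {pbar : ℝ → ℝ} (hpbar : ∀ α, pbar α = (p α + p (α + π)) / 2) :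
    (∫ α₁ in (0 : ℝ)..2 * π, ∫ α₂ in α₁..α₁ + π,
        (p α₁ + deriv (deriv p) α₁) * (p α₂ + deriv (deriv p) α₂) * sin (α₂ - α₁)) =
      2 * ∫ α in (0 : ℝ)..2 * π, (pbar α + deriv (deriv pbar) α) * pbar α := by
  obtain rfl : pbar = translateMean π p := funext fun α ↦ by
    rw [hpbar, translateMean, smul_eq_mul, div_eq_inv_mul]
  have hweight : Periodic (fun α ↦ p α + deriv (deriv p) α) (2 * π) :=
    hper.add (periodic_deriv (periodic_deriv hper))
  have hweight_int : IntervalIntegrable (fun α ↦ p α + deriv (deriv p) α) volume 0 (2 * π) :=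
    (hp.continuous.intervalIntegrable _ _).add hp''
  rw [integral_integral_mul_add_deriv2_mul_sin hweight hweight_int hper hp hp' hp'',
    translateMean.deriv_eq hp, translateMean.deriv_eq hp']
  simp only [translateMean.apply_add]

/-- For a `C²`, `2π`-periodic `p : ℝ → ℝ` and
`p̄(α) = (p(α) + p(α+π))/2`,
`∫₀^{2π} ∫_{α₁}^{α₁+π} (p(α₁)+p''(α₁))(p(α₂)+p''(α₂)) sin(α₂−α₁) dα₂ dα₁
  = 2 ∫₀^{2π} (p̄(α)+p̄''(α)) p̄(α) dα`. -/
theorem stmt_4 (p : ℝ → ℝ) (hp : ContDiff ℝ 2 p)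
    (hper : ∀ α, p (α + 2 * π) = p α)
    (pbar : ℝ → ℝ) (hpbar : ∀ α, pbar α = (p α + p (α + π)) / 2) :
    (∫ α₁ in (0:ℝ)..(2 * π), ∫ α₂ in α₁..(α₁ + π),
        (p α₁ + deriv (deriv p) α₁) * (p α₂ + deriv (deriv p) α₂) * Real.sin (α₂ - α₁))
      = 2 * ∫ α in (0:ℝ)..(2 * π), (pbar α + deriv (deriv pbar) α) * pbar α :=
  stmt_4_general (hp.differentiable two_ne_zero) hp.differentiable_deriv_two
    ((hp.deriv' (n := 1)).continuous_deriv_one.intervalIntegrable _ _) hper hpbar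
end

section
/- Let γ : ℝ → ℝ² be a C² curve parameterized by arc length, i.e. ‖γ'(t)‖ = 1 for all t, let J : ℝ² → ℝ² be the rotation by π/2 (J(a,b) = (−b,a)), and define the curvature k(t) ∈ ℝ by γ''(t) = k(t)·Jγ'(t). Let S(t₁,t₂) = ω(γ(t₁), γ(t₂)), where ω(u,v) = u₁v₂ − u₂v₁. Then for all t₁, t₂, the second derivative of the map s ↦ S(t₁, s) at s = t₂ equals k(t₂)·ω(γ(t₁), Jγ'(t₂)); consequently, if k(t₂) = 0, then for all t₁, t₃ the quantity S₂₂(t₁,t₂) + S₁₁(t₂,t₃) vanishes, where S₂₂(t₁,t₂) is the second derivative of s ↦ S(t₁,s) at t₂ and S₁₁(t₂,t₃) is the second derivative of s ↦ S(s,t₃) at t₂. -/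
/-- The standard symplectic (area) form `ω(u,v) = u₁v₂ − u₂v₁` on `ℝ²`. -/
def symp2 (u v : ℝ × ℝ) : ℝ := u.1 * v.2 - u.2 * v.1

/-- Rotation by `π/2`: `J(a,b) = (−b,a)`. -/
def Jrot (u : ℝ × ℝ) : ℝ × ℝ := (-u.2, u.1)

open scoped Topology

section Bilinear

variable {𝕜 E F G : Type*} [NontriviallyNormedField 𝕜]
  [NormedAddCommGroup E] [NormedSpace 𝕜 E] [NormedAddCommGroup F] [NormedSpace 𝕜 F]
  [NormedAddCommGroup G] [NormedSpace 𝕜 G]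

theorem deriv_deriv_continuousLinearMap_comp (L : E →L[𝕜] F) {γ : 𝕜 → E} {t : 𝕜}
    (hγ : ∀ᶠ s in 𝓝 t, DifferentiableAt 𝕜 γ s) (hγ' : DifferentiableAt 𝕜 (deriv γ) t) :
    deriv (deriv fun s => L (γ s)) t = L (deriv (deriv γ) t) := by
  have deriv_comp : (deriv fun s => L (γ s)) =ᶠ[𝓝 t] fun s => L (deriv γ s) :=
    hγ.mono fun s hs => (L.hasFDerivAt.comp_hasDerivAt s hs.hasDerivAt).deriv
  rw [deriv_comp.deriv_eq]
  exact (L.hasFDerivAt.comp_hasDerivAt t hγ'.hasDerivAt).deriv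

theorem deriv_deriv_bilinear_right (B : E →L[𝕜] F →L[𝕜] G) (u : E) {γ : 𝕜 → F} {t : 𝕜}
    (hγ : ∀ᶠ s in 𝓝 t, DifferentiableAt 𝕜 γ s) (hγ' : DifferentiableAt 𝕜 (deriv γ) t) :
    deriv (deriv fun s => B u (γ s)) t = B u (deriv (deriv γ) t) :=
  deriv_deriv_continuousLinearMap_comp (B u) hγ hγ'

theorem deriv_deriv_bilinear_left (B : E →L[𝕜] F →L[𝕜] G) (v : F) {γ : 𝕜 → E} {t : 𝕜}
    (hγ : ∀ᶠ s in 𝓝 t, DifferentiableAt 𝕜 γ s) (hγ' : DifferentiableAt 𝕜 (deriv γ) t) :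
    deriv (deriv fun s => B (γ s) v) t = B (deriv (deriv γ) t) v :=
  deriv_deriv_continuousLinearMap_comp (B.flip v) hγ hγ'

/-- The vector `n` plays the role of the normal `Jγ'(t₂)`. -/
theorem stmt_5_general (ω : E →L[𝕜] E →L[𝕜] F) (γ : 𝕜 → E) (t₂ : 𝕜)
    (hγ : ∀ᶠ s in 𝓝 t₂, DifferentiableAt 𝕜 γ s) (hγ' : DifferentiableAt 𝕜 (deriv γ) t₂)
    (k : 𝕜) (n : E) (hk : deriv (deriv γ) t₂ = k • n) :
    (∀ t₁, deriv (deriv fun s => ω (γ t₁) (γ s)) t₂ = k • ω (γ t₁) n) ∧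
    (k = 0 → ∀ t₁ t₃,
      deriv (deriv fun s => ω (γ t₁) (γ s)) t₂
        + deriv (deriv fun s => ω (γ s) (γ t₃)) t₂ = 0) := by
  refine ⟨fun t₁ => ?_, fun hk₀ t₁ t₃ => ?_⟩
  · rw [deriv_deriv_bilinear_right ω _ hγ hγ', hk, map_smul]
  · have acceleration_eq_zero : deriv (deriv γ) t₂ = 0 := by rw [hk, hk₀, zero_smul]
    rw [deriv_deriv_bilinear_right ω _ hγ hγ', deriv_deriv_bilinear_left ω _ hγ hγ',
      acceleration_eq_zero, map_zero, ContinuousLinearMap.map_zero₂, add_zero]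

end Bilinear

/-- The area form `symp2` bundled as a continuous bilinear map, so that the calculus of
continuous linear maps applies to it. -/
noncomputable def symp2CLM : ℝ × ℝ →L[ℝ] ℝ × ℝ →L[ℝ] ℝ :=
  (ContinuousLinearMap.mul ℝ ℝ).bilinearComp (.fst ℝ ℝ ℝ) (.snd ℝ ℝ ℝ) -
    (ContinuousLinearMap.mul ℝ ℝ).bilinearComp (.snd ℝ ℝ ℝ) (.fst ℝ ℝ ℝ)

theorem symp2CLM_apply (u v : ℝ × ℝ) : symp2CLM u v = symp2 u v := rfl

/-- For a `C²` arc-length parameterized plane curve `γ` with curvature `k`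
(defined by `γ'' = k · Jγ'`) and generating function `S(t₁,t₂) = ω(γ(t₁),γ(t₂))`:
`S₂₂(t₁,t₂) = k(t₂)·ω(γ(t₁), Jγ'(t₂))`; consequently if `k(t₂) = 0` then
`S₂₂(t₁,t₂) + S₁₁(t₂,t₃) = 0` for all `t₁, t₃`. -/
theorem stmt_5 (γ : ℝ → ℝ × ℝ) (hγ : ContDiff ℝ 2 γ)
    (harc : ∀ t, (deriv γ t).1 ^ 2 + (deriv γ t).2 ^ 2 = 1)
    (k : ℝ → ℝ) (hk : ∀ t, deriv (deriv γ) t = k t • Jrot (deriv γ t)) :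
    (∀ t₁ t₂, deriv (deriv fun s => symp2 (γ t₁) (γ s)) t₂
        = k t₂ * symp2 (γ t₁) (Jrot (deriv γ t₂))) ∧
    (∀ t₂, k t₂ = 0 → ∀ t₁ t₃,
        deriv (deriv fun s => symp2 (γ t₁) (γ s)) t₂
          + deriv (deriv fun s => symp2 (γ s) (γ t₃)) t₂ = 0) := by
  have general t₂ := stmt_5_general symp2CLM γ t₂ (.of_forall (hγ.differentiable two_ne_zero))
    (hγ.differentiable_deriv_two t₂) (k t₂) (Jrot (deriv γ t₂)) (hk t₂)
  simp only [symp2CLM_apply, smul_eq_mul] at general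
  exact ⟨fun t₁ t₂ => (general t₂).1 t₁, fun t₂ => (general t₂).2⟩
end

section
/- Let γ : ℝ → ℝ² be a smooth (C^∞) curve in affine parameterization, i.e. det(γ'(t), γ''(t)) = 1 for all t, where det(u,v) = u₁v₂ − u₂v₁. Fix t₀ ∈ ℝ and let δ : (−r, r) → ℝ (r > 0) be a C³ function with δ(0) = 0 such that det(γ(t₀ + δ(ε)) − γ(t₀ − ε), γ'(t₀)) = 0 for all ε ∈ (−r, r). Then δ'(0)² = 1 and δ''(0) = 0. In particular, if δ'(0) ≥ 0 then δ(ε) = ε + O(ε³) as ε → 0. -/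
open Asymptotics

/-- The standard area form `det(u,v) = u₁v₂ − u₂v₁` on `ℝ²`. -/
def det2 (u v : ℝ × ℝ) : ℝ := u.1 * v.2 - u.2 * v.1

/-!
Differentiating `det(γ', γ'') = 1` gives `det(γ', γ''') = 0`, so the height of `γ` over its tangent
line at `γ(t₀)` is `det(γ(t₀ + s) − γ(t₀), γ'(t₀)) = −s²/2 + O(s⁴)`, without a cubic term. The chord
condition equates the heights at `s = δ(ε)` and `s = −ε`, so `δ² − ε² = O(ε⁴)`. With `a = δ'(0)`
this gives `a² = 1`, and in `(δ − aε)(δ + aε) = O(ε⁴)` the second factor is comparable to `ε`, so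
`δ = aε + O(ε³)`. Comparison with the second-order Taylor expansion of `δ` gives `δ''(0) = 0`.
-/

open Filter Topology

theorem differentiableAt_iteratedDeriv_of_contDiffAt {𝕜 F : Type*} [NontriviallyNormedField 𝕜]
    [NormedAddCommGroup F] [NormedSpace 𝕜 F] {f : 𝕜 → F} {x : 𝕜} {n : WithTop ℕ∞} {m : ℕ}
    (hf : ContDiffAt 𝕜 n f x) (hmn : m < n) : DifferentiableAt 𝕜 (iteratedDeriv m f) x := by
  simpa only [iteratedDeriv_eq_equiv_comp, LinearIsometryEquiv.comp_differentiableAt_iff] using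
    hf.differentiableAt_iteratedFDeriv hmn

section Taylor

variable {E : Type*} [NormedAddCommGroup E] [NormedSpace ℝ E] {f : ℝ → E} {x₀ : ℝ} {n : ℕ}

theorem taylor_isLittleO_of_contDiffAt (hf : ContDiffAt ℝ n f x₀) :
    (fun s ↦ f (x₀ + s) -
      ∑ k ∈ Finset.range (n + 1), ((k.factorial : ℝ)⁻¹ * s ^ k) • iteratedDeriv k f x₀)
      =o[𝓝 0] fun s ↦ s ^ n := by
  obtain ⟨u, hu, hfu⟩ := hf.contDiffOn le_rfl (by simp)
  obtain ⟨ρ, hρ, hball⟩ := Metric.mem_nhds_iff.1 (by simpa using hu)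
  have hx₀ : x₀ ∈ Metric.ball x₀ ρ := Metric.mem_ball_self hρ
  have htaylor := taylor_isLittleO (convex_ball x₀ ρ) hx₀ (hfu.mono hball)
  rw [Metric.isOpen_ball.nhdsWithin_eq hx₀] at htaylor
  have hshift : Tendsto (x₀ + ·) (𝓝 0) (𝓝 x₀) := by
    simpa using (continuous_const_add x₀).tendsto 0
  simpa [Function.comp_def, taylor_within_apply,
    iteratedDerivWithin_of_isOpen Metric.isOpen_ball hx₀] using htaylor.comp_tendsto hshift

theorem taylor_isBigO_of_contDiffAt (hf : ContDiffAt ℝ n f x₀) :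
    (fun s ↦ f (x₀ + s) -
      ∑ k ∈ Finset.range n, ((k.factorial : ℝ)⁻¹ * s ^ k) • iteratedDeriv k f x₀)
      =O[𝓝 0] fun s ↦ s ^ n := by
  have hlast : (fun s : ℝ ↦ ((n.factorial : ℝ)⁻¹ * s ^ n) • iteratedDeriv n f x₀)
      =O[𝓝 0] fun s ↦ s ^ n := by
    simpa using ((isBigO_refl (fun s : ℝ ↦ s ^ n) _).const_mul_left _).smul
      (isBigO_const_const (iteratedDeriv n f x₀) (one_ne_zero : (1 : ℝ) ≠ 0) _)
  refine ((taylor_isLittleO_of_contDiffAt hf).isBigO.add hlast).congr_left fun s ↦ ?_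
  rw [Finset.sum_range_succ]
  abel

end Taylor

theorem eq_zero_of_isLittleO_pow_smul {E : Type*} [NormedAddCommGroup E] [NormedSpace ℝ E]
    {n : ℕ} {v : E} (h : (fun s : ℝ ↦ s ^ n • v) =o[𝓝 0] fun s ↦ s ^ n) : v = 0 := by
  by_contra hv
  have hpow : (fun s : ℝ ↦ s ^ n) =O[𝓝 0] fun s ↦ s ^ n • v :=
    .of_bound ‖v‖⁻¹ <| .of_forall fun s ↦ by
      rw [norm_smul, mul_comm, mul_inv_cancel_right₀ (norm_ne_zero_iff.2 hv)]
  have hne : ∃ᶠ s : ℝ in 𝓝 0, s ^ n ≠ 0 :=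
    (eventually_mem_nhdsWithin (s := {(0 : ℝ)}ᶜ)).frequently.filter_mono nhdsWithin_le_nhds |>.mono
      fun s hs ↦ pow_ne_zero n hs
  exact hpow.not_isLittleO hne h

theorem deriv_deriv_eq_zero_of_isLittleO {E : Type*} [NormedAddCommGroup E] [NormedSpace ℝ E]
    {f : ℝ → E} {x₀ : ℝ} (hf : ContDiffAt ℝ 2 f x₀)
    (h : (fun s ↦ f (x₀ + s) - f x₀ - s • deriv f x₀) =o[𝓝 0] fun s ↦ s ^ 2) :
    deriv (deriv f) x₀ = 0 := by
  have htaylor := h.sub (taylor_isLittleO_of_contDiffAt hf)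
  have : (2⁻¹ : ℝ) • deriv (deriv f) x₀ = 0 := by
    refine eq_zero_of_isLittleO_pow_smul (htaylor.congr_left fun s ↦ ?_)
    simp only [Finset.sum_range_succ, Finset.sum_range_zero, iteratedDeriv_succ, iteratedDeriv_zero,
      Nat.factorial]
    push_cast
    module
  simpa using this

theorem hasDerivAt_det2 {u v : ℝ → ℝ × ℝ} {u' v' : ℝ × ℝ} {t : ℝ}
    (hu : HasDerivAt u u' t) (hv : HasDerivAt v v' t) :
    HasDerivAt (fun s ↦ det2 (u s) (v s)) (det2 u' (v t) + det2 (u t) v') t := by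
  refine ((hu.hasFDerivAt.fst.hasDerivAt.mul hv.hasFDerivAt.snd.hasDerivAt).sub
    (hu.hasFDerivAt.snd.hasDerivAt.mul hv.hasFDerivAt.fst.hasDerivAt)).congr_deriv ?_
  simp only [ContinuousLinearMap.comp_apply, ContinuousLinearMap.toSpanSingleton_apply, one_smul,
    ContinuousLinearMap.coe_fst', ContinuousLinearMap.coe_snd', det2]
  ring

theorem det2_self (u : ℝ × ℝ) : det2 u u = 0 := by
  simp only [det2]
  ring

theorem det2_isBigO_left {α : Type*} {l : Filter α} {u : α → ℝ × ℝ} {g : α → ℝ}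
    (hu : u =O[l] g) (v : ℝ × ℝ) : (fun x ↦ det2 (u x) v) =O[l] g := by
  simpa [det2, mul_comm] using (hu.prod_left_fst.const_mul_left v.2).sub
    (hu.prod_left_snd.const_mul_left v.1)

/-- The signed height of `γ (t₀ + s)` over the tangent line to `γ` at `γ t₀`, scaled by the
Euclidean speed at `t₀` and positive to the right of the tangent vector. Chords joining points of
equal height are parallel to the tangent. Presupposes that `γ` is differentiable at `t₀`. -/
noncomputable def tangentHeight (γ : ℝ → ℝ × ℝ) (t₀ s : ℝ) : ℝ :=
  det2 (γ (t₀ + s) - γ t₀) (deriv γ t₀)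

section TangentHeight

variable {γ : ℝ → ℝ × ℝ} {t₀ c : ℝ}

theorem tangentHeight_sub_tangentHeight (s s' : ℝ) :
    tangentHeight γ t₀ s - tangentHeight γ t₀ s' =
      det2 (γ (t₀ + s) - γ (t₀ + s')) (deriv γ t₀) := by
  simp only [tangentHeight, det2, Prod.fst_sub, Prod.snd_sub]
  ring

theorem det2_deriv_iteratedDeriv_three_eq_zero (hγ : ContDiffAt ℝ 3 γ t₀)
    (haff : ∀ᶠ t in 𝓝 t₀, det2 (deriv γ t) (deriv (deriv γ) t) = c) :
    det2 (deriv γ t₀) (iteratedDeriv 3 γ t₀) = 0 := by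
  have hderiv {k : ℕ} (hk : k < 3) :
      HasDerivAt (iteratedDeriv k γ) (iteratedDeriv (k + 1) γ t₀) t₀ := by
    rw [iteratedDeriv_succ]
    exact (differentiableAt_iteratedDeriv_of_contDiffAt hγ (mod_cast hk)).hasDerivAt
  have hprod := hasDerivAt_det2 (hderiv (k := 1) (by norm_num)) (hderiv (k := 2) (by norm_num))
  have hconst : HasDerivAt (fun t ↦ det2 (iteratedDeriv 1 γ t) (iteratedDeriv 2 γ t)) 0 t₀ := by
    refine (hasDerivAt_const t₀ c).congr_of_eventuallyEq ?_
    simpa [EventuallyEq, iteratedDeriv_succ] using haff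
  simpa [det2_self] using hprod.unique hconst

theorem tangentHeight_sub_sq_isBigO (hγ : ContDiffAt ℝ 4 γ t₀)
    (haff : ∀ᶠ t in 𝓝 t₀, det2 (deriv γ t) (deriv (deriv γ) t) = c) :
    (fun s ↦ tangentHeight γ t₀ s - -(c / 2) * s ^ 2) =O[𝓝 0] fun s ↦ s ^ 4 := by
  have htaylor (s : ℝ) :
      ∑ k ∈ Finset.range 4, ((k.factorial : ℝ)⁻¹ * s ^ k) • iteratedDeriv k γ t₀ =
        γ t₀ + s • deriv γ t₀ + (s ^ 2 / 2) • deriv (deriv γ) t₀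
          + (s ^ 3 / 6) • iteratedDeriv 3 γ t₀ := by
    simp [Finset.sum_range_succ, iteratedDeriv_succ, Nat.factorial, div_eq_inv_mul]
  have hquad := haff.self_of_nhds
  have hcubic := det2_deriv_iteratedDeriv_three_eq_zero (hγ.of_le (by norm_num)) haff
  refine (det2_isBigO_left (taylor_isBigO_of_contDiffAt hγ) (deriv γ t₀)).congr_left fun s ↦ ?_
  rw [htaylor]
  simp only [tangentHeight, det2, Prod.fst_sub, Prod.snd_sub, Prod.fst_add, Prod.snd_add,
    Prod.smul_fst, Prod.smul_snd, smul_eq_mul] at hquad hcubic ⊢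
  linear_combination (s ^ 2 / 2) * hquad + (s ^ 3 / 6) * hcubic

end TangentHeight

theorem pow_sub_pow_isBigO_of_eventually_eq {α : Type*} {l : Filter α} {f : ℝ → ℝ} {k : ℝ}
    {m n : ℕ} {u v : α → ℝ} (hk : k ≠ 0)
    (hf : (fun s ↦ f s - k * s ^ m) =O[𝓝 0] fun s ↦ s ^ n)
    (hv : Tendsto v l (𝓝 0)) (huv : u =O[l] v) (heq : ∀ᶠ x in l, f (u x) = f (v x)) :
    (fun x ↦ u x ^ m - v x ^ m) =O[l] fun x ↦ v x ^ n := by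
  have hfu := (hf.comp_tendsto (huv.trans_tendsto hv)).trans (huv.pow n)
  have hdiff : (fun x ↦ k * (u x ^ m - v x ^ m)) =O[l] fun x ↦ v x ^ n := by
    refine ((hf.comp_tendsto hv).sub hfu).congr' ?_ .rfl
    filter_upwards [heq] with x hx
    simp only [Function.comp_apply, hx]
    ring
  exact (isBigO_const_mul_left_iff hk).1 hdiff

theorem isBigO_pow_of_mul_isBigO_pow_succ {g : ℝ → ℝ} {n : ℕ} (hg : g 0 = 0)
    (h : (fun x ↦ x * g x) =O[𝓝 0] fun x ↦ x ^ (n + 1)) : g =O[𝓝 0] fun x ↦ x ^ n := by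
  have hinv := (isBigO_refl (fun x : ℝ ↦ x⁻¹) (𝓝 0)).mul h
  refine (hinv.congr_left fun x ↦ ?_).trans (isBigO_of_le _ fun x ↦ ?_)
  all_goals rcases eq_or_ne x 0 with rfl | hx
  · simp [hg]
  · exact inv_mul_cancel_left₀ hx _
  · simp
  · rw [pow_succ', inv_mul_cancel_left₀ hx]

section LinearApproximation

variable {δ : ℝ → ℝ} {a b : ℝ}

theorem sub_mul_isLittleO_of_hasDerivAt_zero (hδ : HasDerivAt δ a 0) (hδ0 : δ 0 = 0) :
    (fun ε ↦ δ ε - a * ε) =o[𝓝 0] fun ε ↦ ε := by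
  simpa [hδ0, mul_comm] using hδ.isLittleO

theorem sq_eq_of_sq_sub_mul_sq_isLittleO (hδ : HasDerivAt δ a 0) (hδ0 : δ 0 = 0)
    (hsq : (fun ε ↦ δ ε ^ 2 - b * ε ^ 2) =o[𝓝 0] fun ε ↦ ε ^ 2) : a ^ 2 = b := by
  have hdiff := sub_mul_isLittleO_of_hasDerivAt_zero hδ hδ0
  have hsum : (fun ε ↦ δ ε + a * ε) =O[𝓝 0] fun ε ↦ ε :=
    (hdiff.isBigO.add ((isBigO_refl _ _).const_mul_left (2 * a))).congr_left fun ε ↦ by ring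
  have hprod : (fun ε ↦ δ ε ^ 2 - a ^ 2 * ε ^ 2) =o[𝓝 0] fun ε ↦ ε ^ 2 :=
    (hdiff.mul_isBigO hsum).congr (fun ε ↦ by ring) fun ε ↦ by ring
  refine sub_eq_zero.1 (eq_zero_of_isLittleO_pow_smul (n := 2) ?_)
  exact (hsq.sub hprod).congr_left fun ε ↦ by rw [smul_eq_mul]; ring

theorem sub_mul_isBigO_of_sq_sub_sq_isBigO (hδ : HasDerivAt δ a 0) (hδ0 : δ 0 = 0) (ha : a ≠ 0)
    {n : ℕ} (hsq : (fun ε ↦ δ ε ^ 2 - a ^ 2 * ε ^ 2) =O[𝓝 0] fun ε ↦ ε ^ (n + 1)) :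
    (fun ε ↦ δ ε - a * ε) =O[𝓝 0] fun ε ↦ ε ^ n := by
  have h2a : 2 * a ≠ 0 := mul_ne_zero two_ne_zero ha
  have hequiv : (fun ε ↦ δ ε + a * ε) ~[𝓝 0] fun ε ↦ 2 * a * ε :=
    ((sub_mul_isLittleO_of_hasDerivAt_zero hδ hδ0).const_mul_right h2a).congr_left
      fun ε ↦ by rw [Pi.sub_apply]; ring
  have hsum : (fun ε ↦ ε) =O[𝓝 0] fun ε ↦ δ ε + a * ε :=
    (isBigO_self_const_mul h2a _ _).trans hequiv.isBigO_symm
  refine isBigO_pow_of_mul_isBigO_pow_succ (by simp [hδ0]) ?_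
  exact (hsum.mul (isBigO_refl (fun ε ↦ δ ε - a * ε) _)).trans (hsq.congr_left fun ε ↦ by ring)

end LinearApproximation

theorem stmt_6_general {γ : ℝ → ℝ × ℝ} {δ : ℝ → ℝ} {t₀ c : ℝ} (hc : c ≠ 0)
    (hγ : ContDiffAt ℝ 4 γ t₀)
    (haff : ∀ᶠ t in 𝓝 t₀, det2 (deriv γ t) (deriv (deriv γ) t) = c)
    (hδ : ContDiffAt ℝ 2 δ 0) (hδ0 : δ 0 = 0)
    (hchord : ∀ᶠ ε in 𝓝 0, det2 (γ (t₀ + δ ε) - γ (t₀ - ε)) (deriv γ t₀) = 0) :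
    deriv δ 0 ^ 2 = 1 ∧ deriv (deriv δ) 0 = 0 ∧
    (0 ≤ deriv δ 0 → (fun ε ↦ δ ε - ε) =O[𝓝 0] fun ε ↦ ε ^ 3) := by
  have hδ' : HasDerivAt δ (deriv δ 0) 0 := (hδ.differentiableAt (by norm_num)).hasDerivAt
  have hδO : δ =O[𝓝 0] fun ε ↦ -ε := by simpa [hδ0] using hδ'.isBigO_sub.neg_right
  have hheights : ∀ᶠ ε in 𝓝 0, tangentHeight γ t₀ (δ ε) = tangentHeight γ t₀ (-ε) := by
    filter_upwards [hchord] with ε hε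
    rwa [← sub_eq_zero, tangentHeight_sub_tangentHeight, ← sub_eq_add_neg]
  have hsq : (fun ε ↦ δ ε ^ 2 - ε ^ 2) =O[𝓝 0] fun ε ↦ ε ^ 4 := by
    have hneg : Tendsto (fun ε : ℝ ↦ -ε) (𝓝 0) (𝓝 0) := by simpa using tendsto_neg (0 : ℝ)
    simpa [Even.neg_pow (⟨2, rfl⟩ : Even 4)] using pow_sub_pow_isBigO_of_eventually_eq
      (by simpa using hc) (tangentHeight_sub_sq_isBigO hγ haff) hneg hδO hheights
  have ha : deriv δ 0 ^ 2 = 1 := by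
    refine sq_eq_of_sq_sub_mul_sq_isLittleO hδ' hδ0 ?_
    simpa using hsq.trans_isLittleO (isLittleO_pow_pow (by norm_num))
  have hcubic : (fun ε ↦ δ ε - deriv δ 0 * ε) =O[𝓝 0] fun ε ↦ ε ^ 3 :=
    sub_mul_isBigO_of_sq_sub_sq_isBigO hδ' hδ0 (by intro h; simp [h] at ha)
      (by simpa [ha] using hsq)
  refine ⟨ha, deriv_deriv_eq_zero_of_isLittleO hδ ?_, fun hpos ↦ ?_⟩
  · simpa [hδ0, mul_comm] using hcubic.trans_isLittleO (isLittleO_pow_pow (by norm_num))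
  · have hone : deriv δ 0 = 1 := (pow_eq_one_iff_of_nonneg hpos two_ne_zero).1 ha
    simpa [hone] using hcubic

/-- Let `γ` be a smooth plane curve in affine parameterization
(`det(γ',γ'') ≡ 1`), `t₀ ∈ ℝ`, and let `δ : (−r,r) → ℝ` be `C³` with `δ(0) = 0` and
`det(γ(t₀+δ(ε)) − γ(t₀−ε), γ'(t₀)) = 0` on `(−r,r)`.  Then `δ'(0)² = 1` and `δ''(0) = 0`;
in particular, if `δ'(0) ≥ 0` then `δ(ε) = ε + O(ε³)` as `ε → 0`. -/
theorem stmt_6 (γ : ℝ → ℝ × ℝ) (hγ : ContDiff ℝ (⊤ : ℕ∞) γ)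
    (haff : ∀ t, det2 (deriv γ t) (deriv (deriv γ) t) = 1)
    (t₀ r : ℝ) (hr : 0 < r) (δ : ℝ → ℝ)
    (hδ : ContDiffOn ℝ 3 δ (Set.Ioo (-r) r)) (hδ0 : δ 0 = 0)
    (hchord : ∀ ε ∈ Set.Ioo (-r) r,
        det2 (γ (t₀ + δ ε) - γ (t₀ - ε)) (deriv γ t₀) = 0) :
    deriv δ 0 ^ 2 = 1 ∧ deriv (deriv δ) 0 = 0 ∧
    (0 ≤ deriv δ 0 → (fun ε => δ ε - ε) =O[nhds 0] fun ε => ε ^ 3) := by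
  have hIoo : Set.Ioo (-r) r ∈ 𝓝 0 := Ioo_mem_nhds (neg_lt_zero.2 hr) hr
  exact stmt_6_general one_ne_zero (contDiff_infty.1 hγ 4).contDiffAt (.of_forall haff)
    ((hδ.contDiffAt hIoo).of_le (by norm_num)) hδ0 (eventually_of_mem hIoo hchord)
end

section
/- Let ℓ > 0 and let γ : ℝ → ℝ² be a smooth ℓ-periodic curve parameterized by arc length (‖γ'(s)‖ = 1 for all s), injective on [0, ℓ), whose curvature κ(s) := det(γ'(s), γ''(s)) is strictly positive for all s. Let A = ½·∫₀^ℓ det(γ(s), γ'(s)) ds be the area enclosed by γ. Then (∫₀^ℓ κ(s)^{1/3} ds)³ ≤ 8π²·A, and equality holds if and only if the image of γ is an ellipse, i.e. the image of the unit circle under a map x ↦ Tx + b with T ∈ GL(2,ℝ) and b ∈ ℝ². -/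
open Real

/-!
Parameterize the curve by the angle of its tangent and let `ρ` be its radius of curvature, so that
its affine length is `L = ∫ ρ ^ (2 / 3)` and, with `l = L / (2 * π)`, the inequality to prove reads
`∫ (3 * ρ ^ (2 / 3) - det2 c c' / l ^ 2) ≤ 4 * π * l`. Cut the curve into two arcs at a pair of
parallel tangents. On each arc the AM-GM inequality `3 * ρ ^ (2 / 3) ≤ y ^ 2 + 2 * ρ / y`, with `y`
the cube root of the radius of curvature of an ellipse of area `π * l ^ 3` between the same two
tangents, bounds the integrand by an exact derivative whose integral over the arc is `2 * π * l`.
Equality forces `y ^ 3 = ρ`, a differential equation solved by elliptical arcs only. Conversely,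
both sides of the inequality scale alike under affine maps, which reduces ellipses to the unit
circle.

That the tangent of a simple closed curve turns only once is seen from the support function: it
crosses its shift by one turn, so some tangent line touches the curve at parameters one turn apart,
and the curve has a double point in between.
-/

section Calculus

open Set Filter MeasureTheory
open scoped Topology

theorem sq_add_two_mul_div_sub_three_mul_rpow {x y : ℝ} (hx : 0 ≤ x) (hy : y ≠ 0) :
    y ^ 2 + 2 * x / y - 3 * x ^ ((2 : ℝ) / 3) =
      (y - x ^ ((1 : ℝ) / 3)) ^ 2 * (y + 2 * x ^ ((1 : ℝ) / 3)) / y := by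
  have hcube : (x ^ ((1 : ℝ) / 3)) ^ 3 = x := by rw [← rpow_mul_natCast hx]; norm_num
  have hsq : x ^ ((2 : ℝ) / 3) = (x ^ ((1 : ℝ) / 3)) ^ 2 := by
    rw [← rpow_mul_natCast hx]; norm_num
  rw [hsq]
  field_simp
  linear_combination -2 * hcube

theorem three_mul_rpow_two_thirds_le {x y : ℝ} (hx : 0 ≤ x) (hy : 0 < y) :
    3 * x ^ ((2 : ℝ) / 3) ≤ y ^ 2 + 2 * x / y := by
  rw [← sub_nonneg, sq_add_two_mul_div_sub_three_mul_rpow hx hy.ne']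
  positivity

theorem cube_eq_of_three_mul_rpow_two_thirds_eq {x y : ℝ} (hx : 0 ≤ x) (hy : 0 < y)
    (h : 3 * x ^ ((2 : ℝ) / 3) = y ^ 2 + 2 * x / y) : y ^ 3 = x := by
  have hdiff := sq_add_two_mul_div_sub_three_mul_rpow hx hy.ne'
  rw [h, sub_self, eq_comm, div_eq_zero_iff, or_iff_left hy.ne', mul_eq_zero,
    or_iff_left (by positivity), sq_eq_zero_iff, sub_eq_zero] at hdiff
  rw [hdiff, ← rpow_mul_natCast hx]
  norm_num

theorem eq_left_of_hasDerivAt_zero {f : ℝ → ℝ} {a b : ℝ} (hf : ContinuousOn f (Icc a b))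
    (hf' : ∀ t ∈ Ioo a b, HasDerivAt f 0 t) {t : ℝ} (ht : t ∈ Icc a b) : f t = f a := by
  rcases ht.1.eq_or_lt with rfl | hat
  · rfl
  obtain ⟨c, -, hc⟩ := exists_hasDerivAt_eq_slope f 0 hat
    (hf.mono (Icc_subset_Icc_right ht.2)) fun s hs ↦ hf' s ⟨hs.1, hs.2.trans_le ht.2⟩
  rw [Pi.zero_apply, eq_comm, div_eq_zero_iff, or_iff_left (sub_ne_zero.2 hat.ne')] at hc
  exact sub_eq_zero.1 hc

theorem eqOn_deriv_of_integral_eq_sub {f F F' : ℝ → ℝ} {a b : ℝ} (hf : Continuous f)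
    (hF : ContinuousOn F (Icc a b)) (hF' : ∀ t ∈ Ioo a b, HasDerivAt F (F' t) t)
    (hle : ∀ t ∈ Ioo a b, f t ≤ F' t) (heq : ∫ t in a..b, f t = F b - F a) :
    EqOn f F' (Ioo a b) := by
  set H : ℝ → ℝ := fun t ↦ F t - ∫ s in a..t, f s with hH
  have hint : ∀ t, HasDerivAt (fun t ↦ ∫ s in a..t, f s) (f t) t := fun t ↦
    intervalIntegral.integral_hasDerivAt_right (hf.intervalIntegrable _ _)
      (hf.stronglyMeasurableAtFilter _ _) hf.continuousAt
  have hH' : ∀ t ∈ Ioo a b, HasDerivAt H (F' t - f t) t := fun t ht ↦ (hF' t ht).sub (hint t)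
  have hmono : MonotoneOn H (Icc a b) := by
    refine monotoneOn_of_hasDerivWithinAt_nonneg (convex_Icc a b) (f' := fun t ↦ F' t - f t)
      (hF.sub fun t _ ↦ (hint t).continuousAt.continuousWithinAt) ?_ ?_ <;> rw [interior_Icc]
    · exact fun t ht ↦ (hH' t ht).hasDerivWithinAt
    · exact fun t ht ↦ sub_nonneg.2 (hle t ht)
  have hends : H a = H b := by simp only [hH, heq, intervalIntegral.integral_same]; ring
  have hconst : ∀ t ∈ Ioo a b, H t = H a := fun t ht ↦ by
    have hab := ht.1.le.trans ht.2.le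
    exact le_antisymm
      (hends ▸ hmono (Ioo_subset_Icc_self ht) (right_mem_Icc.2 hab) ht.2.le)
      (hmono (left_mem_Icc.2 hab) (Ioo_subset_Icc_self ht) ht.1.le)
  intro t ht
  have hderiv : HasDerivAt H 0 t := (hasDerivAt_const t (H a)).congr_of_eventuallyEq <| by
    filter_upwards [isOpen_Ioo.mem_nhds ht] with s hs using hconst s hs
  linarith [(hH' t ht).unique hderiv]

theorem continuousAt_mul_tan {f : ℝ → ℝ} {t : ℝ} (hcos : cos t = 0) (hf : f t = 0)
    (hf' : HasDerivAt f 0 t) : ContinuousAt (fun s ↦ f s * tan s) t := by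
  have hsin : sin t ≠ 0 := fun h ↦ by simpa [h, hcos] using sin_sq_add_cos_sq t
  have hlim : Tendsto (fun s ↦ slope f t s / slope cos t s * sin s) (𝓝[≠] t)
      (𝓝 (0 / -sin t * sin t)) :=
    ((hasDerivAt_iff_tendsto_slope.1 hf').div (hasDerivAt_iff_tendsto_slope.1 (hasDerivAt_cos t))
      (neg_ne_zero.2 hsin)).mul (continuous_sin.continuousAt.tendsto.mono_left nhdsWithin_le_nhds)
  rw [continuousAt_iff_punctured_nhds, hf, zero_mul]
  rw [zero_div, zero_mul] at hlim
  refine hlim.congr' ?_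
  filter_upwards [self_mem_nhdsWithin] with s hs
  rw [slope_def_field, slope_def_field, hf, hcos, tan_eq_sin_div_cos, sub_zero, sub_zero,
    div_div_div_cancel_right₀ (sub_ne_zero.2 hs)]
  ring

theorem exists_continuous_rightInverse_of_strictMonoOn {f : ℝ → ℝ} {a b : ℝ} (hab : a ≤ b)
    (hf : ContinuousOn f (Icc a b)) (hmono : StrictMonoOn f (Icc a b)) :
    ∃ g : ℝ → ℝ, Continuous g ∧ (∀ y, g y ∈ Icc a b) ∧ ∀ y ∈ Icc (f a) (f b), f (g y) = y := by
  have hle : f a ≤ f b := hmono.monotoneOn (left_mem_Icc.2 hab) (right_mem_Icc.2 hab) hab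
  have himage : f '' Icc a b = Icc (f a) (f b) :=
    (hmono.monotoneOn.mapsTo_Icc.image_subset).antisymm (intermediate_value_Icc hab hf)
  let e : Icc a b ≃o f '' Icc a b := hmono.orderIso
  have : OrdConnected (f '' Icc a b) := himage ▸ ordConnected_Icc
  let proj : ℝ → f '' Icc a b := fun y ↦ ⟨projIcc (f a) (f b) hle y, himage.ge (Subtype.coe_prop _)⟩
  have hproj : Continuous proj := (continuous_subtype_val.comp continuous_projIcc).subtype_mk _
  refine ⟨fun y ↦ e.symm (proj y), continuous_subtype_val.comp (e.symm.continuous.comp hproj),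
    fun y ↦ Subtype.coe_prop _, fun y hy ↦ ?_⟩
  calc f (e.symm (proj y)) = e (e.symm (proj y)) := rfl
    _ = proj y := by rw [e.apply_symm_apply]
    _ = y := congrArg Subtype.val (projIcc_of_mem hle hy)

end Calculus

section Det2

open MeasureTheory

theorem det2_map (T : ℝ × ℝ →ₗ[ℝ] ℝ × ℝ) (u v : ℝ × ℝ) :
    det2 (T u) (T v) = det2 (T (1, 0)) (T (0, 1)) * det2 u v := by
  have hT : ∀ w : ℝ × ℝ, T w = w.1 • T (1, 0) + w.2 • T (0, 1) := fun w ↦ by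
    rw [← map_smul, ← map_smul, ← map_add]
    congr 1
    ext <;> simp
  rw [hT u, hT v]
  simp only [det2, Prod.fst_add, Prod.snd_add, Prod.smul_fst, Prod.smul_snd, smul_eq_mul]
  ring

theorem continuous_det2 {X : Type*} [TopologicalSpace X] {u v : X → ℝ × ℝ} (hu : Continuous u)
    (hv : Continuous v) : Continuous fun t ↦ det2 (u t) (v t) := by
  unfold det2
  fun_prop

theorem integral_det2_sub_left {c c' : ℝ → ℝ × ℝ} {a b : ℝ} (hc : ∀ t, HasDerivAt c (c' t) t)
    (hc' : Continuous c') (hab : c a = c b) (p : ℝ × ℝ) :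
    ∫ t in a..b, det2 (c t - p) (c' t) = ∫ t in a..b, det2 (c t) (c' t) := by
  have hcont : Continuous c := continuous_iff_continuousAt.2 fun t ↦ (hc t).continuousAt
  have hp : ∀ t, HasDerivAt (fun t ↦ det2 p (c t)) (det2 p (c' t)) t := fun t ↦
    (((ContinuousLinearMap.snd ℝ ℝ ℝ).hasFDerivAt.comp_hasDerivAt t (hc t)).const_mul p.1).sub
      (((ContinuousLinearMap.fst ℝ ℝ ℝ).hasFDerivAt.comp_hasDerivAt t (hc t)).const_mul p.2)
  have hint : Continuous fun t ↦ det2 p (c' t) := continuous_det2 continuous_const hc'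
  have hzero : ∫ t in a..b, det2 p (c' t) = 0 := by
    rw [intervalIntegral.integral_eq_sub_of_hasDerivAt (fun t _ ↦ hp t)
      (hint.intervalIntegrable _ _), hab, sub_self]
  rw [← sub_zero (∫ t in a..b, det2 (c t) (c' t)), ← hzero,
    ← intervalIntegral.integral_sub ((continuous_det2 hcont hc').intervalIntegrable _ _)
      (hint.intervalIntegrable _ _)]
  congr 1 with t
  simp only [det2, Prod.fst_sub, Prod.snd_sub]
  ring

end Det2

/-- `c` traverses a strictly convex arc by its tangent angle: `c'(t) = ρ(t) (cos t, sin t)`, where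
the continuous positive function `ρ` is the radius of curvature. -/
structure IsTangentAngleParam (c : ℝ → ℝ × ℝ) (ρ : ℝ → ℝ) : Prop where
  continuous_radius : Continuous ρ
  radius_pos : ∀ t, 0 < ρ t
  hasDerivAt : ∀ t, HasDerivAt c (ρ t * cos t, ρ t * sin t) t

namespace IsTangentAngleParam

open Set

variable {c : ℝ → ℝ × ℝ} {ρ : ℝ → ℝ}

theorem hasDerivAt_fst (h : IsTangentAngleParam c ρ) (t : ℝ) :
    HasDerivAt (fun t ↦ (c t).1) (ρ t * cos t) t :=
  (ContinuousLinearMap.fst ℝ ℝ ℝ).hasFDerivAt.comp_hasDerivAt t (h.hasDerivAt t)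

theorem hasDerivAt_snd (h : IsTangentAngleParam c ρ) (t : ℝ) :
    HasDerivAt (fun t ↦ (c t).2) (ρ t * sin t) t :=
  (ContinuousLinearMap.snd ℝ ℝ ℝ).hasFDerivAt.comp_hasDerivAt t (h.hasDerivAt t)

protected theorem continuous (h : IsTangentAngleParam c ρ) : Continuous c :=
  continuous_iff_continuousAt.2 fun t ↦ (h.hasDerivAt t).continuousAt

theorem continuous_velocity (h : IsTangentAngleParam c ρ) :
    Continuous fun t ↦ (ρ t * cos t, ρ t * sin t) := by
  have := h.continuous_radius
  fun_prop

theorem strictMonoOn_fst (h : IsTangentAngleParam c ρ) :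
    StrictMonoOn (fun t ↦ (c t).1) (Icc (-(π / 2)) (π / 2)) := by
  refine strictMonoOn_of_hasDerivWithinAt_pos (f' := fun t ↦ ρ t * cos t) (convex_Icc _ _)
    h.continuous.fst.continuousOn (fun t _ ↦ (h.hasDerivAt_fst t).hasDerivWithinAt) fun t ht ↦ ?_
  rw [interior_Icc] at ht
  exact mul_pos (h.radius_pos t) (cos_pos_of_mem_Ioo ht)

protected theorem rotate (h : IsTangentAngleParam c ρ) (α : ℝ) :
    IsTangentAngleParam (fun t ↦ (cos α * (c (t + α)).1 + sin α * (c (t + α)).2,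
      -sin α * (c (t + α)).1 + cos α * (c (t + α)).2)) (fun t ↦ ρ (t + α)) where
  continuous_radius := h.continuous_radius.comp (continuous_add_const α)
  radius_pos t := h.radius_pos _
  hasDerivAt t := by
    have hX := (h.hasDerivAt_fst (t + α)).comp_add_const t α
    have hY := (h.hasDerivAt_snd (t + α)).comp_add_const t α
    refine (((hX.const_mul (cos α)).add (hY.const_mul (sin α))).prodMk
      ((hX.const_mul (-sin α)).add (hY.const_mul (cos α)))).congr_deriv ?_
    have hcos : cos t = cos (t + α) * cos α + sin (t + α) * sin α := by
      rw [← cos_sub, add_sub_cancel_right]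
    have hsin : sin t = sin (t + α) * cos α - cos (t + α) * sin α := by
      rw [← sin_sub, add_sub_cancel_right]
    rw [hcos, hsin]
    ext <;> simp only [] <;> ring

theorem half_turn (h : IsTangentAngleParam c ρ) :
    IsTangentAngleParam (fun t ↦ -c (t + π)) (fun t ↦ ρ (t + π)) where
  continuous_radius := h.continuous_radius.comp (continuous_add_const π)
  radius_pos t := h.radius_pos _
  hasDerivAt t := by
    refine ((h.hasDerivAt (t + π)).comp_add_const t π).neg.congr_deriv ?_
    ext <;> simp [cos_add_pi, sin_add_pi]

end IsTangentAngleParam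

section HalfTurnArc

open Set MeasureTheory

/-- The midpoint of the chord spanned by the arc `c '' [-π/2, π/2]`, the centre of the comparison
ellipses in the half-turn estimate. -/
noncomputable def chordCenter (c : ℝ → ℝ × ℝ) : ℝ × ℝ :=
  (1 / 2 : ℝ) • (c (-(π / 2)) + c (π / 2))

/-- Half of the chord vector spanned by the arc `c '' [-π/2, π/2]`. -/
noncomputable def halfChord (c : ℝ → ℝ × ℝ) : ℝ × ℝ :=
  (1 / 2 : ℝ) • (c (π / 2) - c (-(π / 2)))

/-- The eccentric angle of `c t`, normalised to run from `-π/2` to `π/2` along the arc: the abscissa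
of `c t` is that of `chordCenter c + sin (eccentricAngle c t) • halfChord c`. -/
noncomputable def eccentricAngle (c : ℝ → ℝ × ℝ) (t : ℝ) : ℝ :=
  arcsin (((c t).1 - (chordCenter c).1) / (halfChord c).1)

/-- The ratio `y` with which the inequality `3 ρ ^ (2 / 3) ≤ y ^ 2 + 2 ρ / y` is applied at
parameter `t`; on the ellipse with semiaxes `halfChord c` and `(0, l ^ 3 / (halfChord c).1)` it
equals `ρ ^ (1 / 3)`. -/
noncomputable def arcRatio (c : ℝ → ℝ × ℝ) (l t : ℝ) : ℝ :=
  (halfChord c).1 * cos (eccentricAngle c t) / (l * cos t)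

/-- The calibration for the half-turn estimate with scale `l`: its derivative bounds the density
`3 ρ ^ (2 / 3) - det2 (c - chordCenter c) c' / l ^ 2` from above, and its increment along the arc
is `2 * π * l`. -/
noncomputable def calibration (c : ℝ → ℝ × ℝ) (l t : ℝ) : ℝ :=
  (((halfChord c).1 ^ 2 - ((c t).1 - (chordCenter c).1) ^ 2) * tan t +
    ((c t).1 - (chordCenter c).1) * ((c t).2 - (chordCenter c).2)) / l ^ 2 +
    2 * l * eccentricAngle c t

theorem chordCenter_add_halfChord (c : ℝ → ℝ × ℝ) : chordCenter c + halfChord c = c (π / 2) := by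
  unfold chordCenter halfChord
  module

theorem chordCenter_sub_halfChord (c : ℝ → ℝ × ℝ) :
    chordCenter c - halfChord c = c (-(π / 2)) := by
  unfold chordCenter halfChord
  module

theorem sub_chordCenter_right (c : ℝ → ℝ × ℝ) : c (π / 2) - chordCenter c = halfChord c := by
  rw [sub_eq_iff_eq_add', chordCenter_add_halfChord]

theorem sub_chordCenter_left (c : ℝ → ℝ × ℝ) : c (-(π / 2)) - chordCenter c = -halfChord c := by
  rw [sub_eq_iff_eq_add', ← sub_eq_add_neg, chordCenter_sub_halfChord]

end HalfTurnArc

namespace IsTangentAngleParam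

open Set MeasureTheory

variable {c : ℝ → ℝ × ℝ} {ρ : ℝ → ℝ}

theorem halfChord_fst_pos (h : IsTangentAngleParam c ρ) : 0 < (halfChord c).1 := by
  have hlt := h.strictMonoOn_fst (left_mem_Icc.2 (by linarith [pi_pos]))
    (right_mem_Icc.2 (by linarith [pi_pos])) (by linarith [pi_pos] : -(π / 2) < π / 2)
  simp only [halfChord, Prod.smul_fst, Prod.fst_sub, smul_eq_mul]
  linarith

theorem eccentricAngle_right (h : IsTangentAngleParam c ρ) : eccentricAngle c (π / 2) = π / 2 := by
  rw [eccentricAngle, ← Prod.fst_sub, sub_chordCenter_right, div_self h.halfChord_fst_pos.ne',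
    arcsin_one]

theorem eccentricAngle_left (h : IsTangentAngleParam c ρ) :
    eccentricAngle c (-(π / 2)) = -(π / 2) := by
  rw [eccentricAngle, ← Prod.fst_sub, sub_chordCenter_left, Prod.fst_neg, neg_div,
    div_self h.halfChord_fst_pos.ne', arcsin_neg_one]

theorem continuous_eccentricAngle (h : IsTangentAngleParam c ρ) : Continuous (eccentricAngle c) :=
  continuous_arcsin.comp ((h.continuous.fst.sub continuous_const).div_const _)

theorem abscissa_mem_Icc (h : IsTangentAngleParam c ρ) {t : ℝ} (ht : t ∈ Icc (-(π / 2)) (π / 2)) :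
    ((c t).1 - (chordCenter c).1) / (halfChord c).1 ∈ Icc (-1) 1 := by
  have hr := h.halfChord_fst_pos
  have hleft := h.strictMonoOn_fst.monotoneOn (left_mem_Icc.2 (ht.1.trans ht.2)) ht ht.1
  have hright := h.strictMonoOn_fst.monotoneOn ht (right_mem_Icc.2 (ht.1.trans ht.2)) ht.2
  simp only [← chordCenter_sub_halfChord c, ← chordCenter_add_halfChord c, Prod.fst_sub,
    Prod.fst_add] at hleft hright
  rw [mem_Icc, le_div_iff₀ hr, div_le_iff₀ hr]
  constructor <;> linarith

theorem abscissa_mem_Ioo (h : IsTangentAngleParam c ρ) {t : ℝ} (ht : t ∈ Ioo (-(π / 2)) (π / 2)) :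
    ((c t).1 - (chordCenter c).1) / (halfChord c).1 ∈ Ioo (-1) 1 := by
  have hr := h.halfChord_fst_pos
  have hlt := ht.1.trans ht.2
  have hleft := h.strictMonoOn_fst (left_mem_Icc.2 hlt.le) (Ioo_subset_Icc_self ht) ht.1
  have hright := h.strictMonoOn_fst (Ioo_subset_Icc_self ht) (right_mem_Icc.2 hlt.le) ht.2
  simp only [← chordCenter_sub_halfChord c, ← chordCenter_add_halfChord c, Prod.fst_sub,
    Prod.fst_add] at hleft hright
  rw [mem_Ioo, lt_div_iff₀ hr, div_lt_iff₀ hr]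
  constructor <;> linarith

theorem halfChord_mul_sin_eccentricAngle (h : IsTangentAngleParam c ρ) {t : ℝ}
    (ht : t ∈ Icc (-(π / 2)) (π / 2)) :
    (halfChord c).1 * sin (eccentricAngle c t) = (c t).1 - (chordCenter c).1 := by
  rw [eccentricAngle, sin_arcsin (h.abscissa_mem_Icc ht).1 (h.abscissa_mem_Icc ht).2,
    mul_div_cancel₀ _ h.halfChord_fst_pos.ne']

theorem cos_eccentricAngle_pos (h : IsTangentAngleParam c ρ) {t : ℝ}
    (ht : t ∈ Ioo (-(π / 2)) (π / 2)) : 0 < cos (eccentricAngle c t) :=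
  cos_pos_of_mem_Ioo
    ⟨neg_pi_div_two_lt_arcsin.2 (h.abscissa_mem_Ioo ht).1,
      arcsin_lt_pi_div_two.2 (h.abscissa_mem_Ioo ht).2⟩

theorem hasDerivAt_eccentricAngle (h : IsTangentAngleParam c ρ) {t : ℝ}
    (ht : t ∈ Ioo (-(π / 2)) (π / 2)) :
    HasDerivAt (eccentricAngle c)
      (ρ t * cos t / ((halfChord c).1 * cos (eccentricAngle c t))) t := by
  have hx := h.abscissa_mem_Ioo ht
  refine ((hasDerivAt_arcsin hx.1.ne' hx.2.ne).comp t
    (((h.hasDerivAt_fst t).sub_const _).div_const _)).congr_deriv ?_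
  rw [eccentricAngle, cos_arcsin]
  ring

theorem arcRatio_pos (h : IsTangentAngleParam c ρ) {l t : ℝ} (hl : 0 < l)
    (ht : t ∈ Ioo (-(π / 2)) (π / 2)) : 0 < arcRatio c l t :=
  div_pos (mul_pos h.halfChord_fst_pos (h.cos_eccentricAngle_pos ht))
    (mul_pos hl (cos_pos_of_mem_Ioo ht))

theorem hasDerivAt_calibration (h : IsTangentAngleParam c ρ) {l t : ℝ} (hl : 0 < l)
    (ht : t ∈ Ioo (-(π / 2)) (π / 2)) :
    HasDerivAt (calibration c l) (arcRatio c l t ^ 2 + 2 * ρ t / arcRatio c l t -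
      det2 (c t - chordCenter c) (ρ t * cos t, ρ t * sin t) / l ^ 2) t := by
  have hr := h.halfChord_fst_pos
  have hcos := cos_pos_of_mem_Ioo ht
  have hψ := h.cos_eccentricAngle_pos ht
  have hX := (h.hasDerivAt_fst t).sub_const (chordCenter c).1
  have hY := (h.hasDerivAt_snd t).sub_const (chordCenter c).2
  refine ((((((hX.pow 2).const_sub ((halfChord c).1 ^ 2)).mul (hasDerivAt_tan hcos.ne')).add
    (hX.mul hY)).div_const (l ^ 2)).add
      ((h.hasDerivAt_eccentricAngle ht).const_mul (2 * l))).congr_deriv ?_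
  simp only [det2, arcRatio, Prod.fst_sub, Prod.snd_sub, Pi.pow_apply,
    ← h.halfChord_mul_sin_eccentricAngle (Ioo_subset_Icc_self ht), tan_eq_sin_div_cos]
  field_simp
  rw [sin_sq (eccentricAngle c t)]
  ring

theorem continuousOn_calibration (h : IsTangentAngleParam c ρ) (l : ℝ) :
    ContinuousOn (calibration c l) (Icc (-(π / 2)) (π / 2)) := by
  have hX : Continuous fun t ↦ (c t).1 - (chordCenter c).1 :=
    h.continuous.fst.sub continuous_const
  have hY : Continuous fun t ↦ (c t).2 - (chordCenter c).2 :=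
    h.continuous.snd.sub continuous_const
  have htan : ContinuousOn
      (fun t ↦ ((halfChord c).1 ^ 2 - ((c t).1 - (chordCenter c).1) ^ 2) * tan t)
      (Icc (-(π / 2)) (π / 2)) := fun t ht ↦ ContinuousAt.continuousWithinAt <| by
    by_cases hcos : cos t = 0
    · have hderiv := (((h.hasDerivAt_fst t).sub_const (chordCenter c).1).pow 2).const_sub
        ((halfChord c).1 ^ 2)
      refine continuousAt_mul_tan hcos ?_ (hderiv.congr_deriv (by simp [hcos]))
      have hends : t = -(π / 2) ∨ t = π / 2 := by
        by_contra! hne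
        exact (cos_pos_of_mem_Ioo
          ⟨ht.1.lt_of_ne' hne.1, ht.2.lt_of_ne hne.2⟩).ne' hcos
      rcases hends with rfl | rfl
      · rw [← Prod.fst_sub, sub_chordCenter_left, Prod.fst_neg]
        ring
      · rw [← Prod.fst_sub, sub_chordCenter_right, sub_self]
    · exact (continuousAt_const.sub (hX.continuousAt.pow 2)).mul (continuousAt_tan.2 hcos)
  exact ((htan.add (hX.mul hY).continuousOn).div_const _).add
    (h.continuous_eccentricAngle.const_mul _).continuousOn

theorem calibration_right_sub_left (h : IsTangentAngleParam c ρ) (l : ℝ) :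
    calibration c l (π / 2) - calibration c l (-(π / 2)) = 2 * π * l := by
  simp only [calibration, h.eccentricAngle_left, h.eccentricAngle_right, ← Prod.fst_sub,
    ← Prod.snd_sub, sub_chordCenter_left, sub_chordCenter_right, Prod.fst_neg, Prod.snd_neg]
  ring

end IsTangentAngleParam

section Ellipse

/-- An ellipse in the plane: the image of the unit circle under an invertible affine map. -/
def IsEllipse (S : Set (ℝ × ℝ)) : Prop :=
  ∃ (T : (ℝ × ℝ) ≃ₗ[ℝ] (ℝ × ℝ)) (b : ℝ × ℝ),
    S = (fun q => T q + b) '' {q : ℝ × ℝ | q.1 ^ 2 + q.2 ^ 2 = 1}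

theorem isEllipse_image_of_det2_ne_zero {v w : ℝ × ℝ} (hvw : det2 v w ≠ 0) (b : ℝ × ℝ) :
    IsEllipse ((fun q ↦ q.1 • v + q.2 • w + b) '' {q : ℝ × ℝ | q.1 ^ 2 + q.2 ^ 2 = 1}) := by
  let T : ℝ × ℝ →ₗ[ℝ] ℝ × ℝ :=
    (LinearMap.fst ℝ ℝ ℝ).smulRight v + (LinearMap.snd ℝ ℝ ℝ).smulRight w
  have hT : Function.Injective T := (injective_iff_map_eq_zero T).2 fun q hq ↦ by
    have hq₁ : q.1 * v.1 + q.2 * w.1 = 0 := congrArg Prod.fst hq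
    have hq₂ : q.1 * v.2 + q.2 * w.2 = 0 := congrArg Prod.snd hq
    have hfst : q.1 * det2 v w = 0 := by
      unfold det2
      linear_combination w.2 * hq₁ - w.1 * hq₂
    have hsnd : q.2 * det2 v w = 0 := by
      unfold det2
      linear_combination v.1 * hq₂ - v.2 * hq₁
    exact Prod.ext ((mul_eq_zero_iff_right hvw).1 hfst) ((mul_eq_zero_iff_right hvw).1 hsnd)
  exact ⟨LinearEquiv.ofInjectiveEndo T hT, b, rfl⟩

theorem image_circle_eq_union (v w b : ℝ × ℝ) :
    (fun q ↦ q.1 • v + q.2 • w + b) '' {q : ℝ × ℝ | q.1 ^ 2 + q.2 ^ 2 = 1} =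
      (fun q ↦ q.1 • v + q.2 • w + b) '' {q : ℝ × ℝ | q.1 ^ 2 + q.2 ^ 2 = 1 ∧ q.2 ≤ 0} ∪
        (fun x ↦ -x) '' ((fun q ↦ q.1 • v + q.2 • w + -b) ''
          {q : ℝ × ℝ | q.1 ^ 2 + q.2 ^ 2 = 1 ∧ q.2 ≤ 0}) := by
  rw [Set.image_image]
  refine Set.Subset.antisymm ?_ (Set.union_subset ?_ ?_)
  · rintro _ ⟨q, hq, rfl⟩
    rcases le_total q.2 0 with hq₂ | hq₂
    · exact Or.inl ⟨q, ⟨hq, hq₂⟩, rfl⟩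
    · refine Or.inr ⟨-q, ⟨by simpa using hq, by simpa using hq₂⟩, ?_⟩
      simp only [Prod.fst_neg, Prod.snd_neg]
      module
  · rintro _ ⟨q, hq, rfl⟩
    exact ⟨q, hq.1, rfl⟩
  · rintro _ ⟨q, hq, rfl⟩
    refine ⟨-q, by simpa using hq.1, ?_⟩
    simp only [Prod.fst_neg, Prod.snd_neg]
    module

end Ellipse

section HalfTurnEstimate

open Set MeasureTheory

/-- The integrand of `3 ∫ ρ ^ (2 / 3) - (∫ det2 (c - p) c') / l ^ 2`, where
`c' t = ρ t • (cos t, sin t)`. -/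
noncomputable def affineDensity (c : ℝ → ℝ × ℝ) (ρ : ℝ → ℝ) (p : ℝ × ℝ) (l t : ℝ) : ℝ :=
  3 * ρ t ^ ((2 : ℝ) / 3) - det2 (c t - p) (ρ t * cos t, ρ t * sin t) / l ^ 2

theorem affineDensity_half_turn (c : ℝ → ℝ × ℝ) (ρ : ℝ → ℝ) (p : ℝ × ℝ) (l t : ℝ) :
    affineDensity (fun t ↦ -c (t + π)) (fun t ↦ ρ (t + π)) (-p) l t =
      affineDensity c ρ p l (t + π) := by
  simp only [affineDensity, det2, cos_add_pi, sin_add_pi, Prod.fst_sub, Prod.snd_sub,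
    Prod.fst_neg, Prod.snd_neg]
  ring

theorem chordCenter_half_turn {c : ℝ → ℝ × ℝ} (hc : Function.Periodic c (2 * π)) :
    chordCenter (fun t ↦ -c (t + π)) = -chordCenter c := by
  have hright : c (π / 2 + π) = c (-(π / 2)) := by rw [← hc (-(π / 2))]; ring_nf
  have hleft : -(π / 2) + π = π / 2 := by ring
  simp only [chordCenter, hright, hleft]
  module

theorem halfChord_half_turn {c : ℝ → ℝ × ℝ} (hc : Function.Periodic c (2 * π)) :
    halfChord (fun t ↦ -c (t + π)) = halfChord c := by
  have hright : c (π / 2 + π) = c (-(π / 2)) := by rw [← hc (-(π / 2))]; ring_nf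
  have hleft : -(π / 2) + π = π / 2 := by ring
  simp only [halfChord, hright, hleft]
  module

end HalfTurnEstimate

namespace IsTangentAngleParam

open Set MeasureTheory

variable {c : ℝ → ℝ × ℝ} {ρ : ℝ → ℝ} {l : ℝ}

theorem continuous_rpow_radius (h : IsTangentAngleParam c ρ) :
    Continuous fun t ↦ ρ t ^ ((2 : ℝ) / 3) :=
  h.continuous_radius.rpow_const fun t ↦ Or.inl (h.radius_pos t).ne'

theorem continuous_affineDensity (h : IsTangentAngleParam c ρ) (p : ℝ × ℝ) (l : ℝ) :
    Continuous (affineDensity c ρ p l) :=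
  (h.continuous_rpow_radius.const_mul 3).sub
    ((continuous_det2 (h.continuous.sub continuous_const) h.continuous_velocity).div_const _)

theorem affineDensity_le (h : IsTangentAngleParam c ρ) (hl : 0 < l) {t : ℝ}
    (ht : t ∈ Ioo (-(π / 2)) (π / 2)) :
    affineDensity c ρ (chordCenter c) l t ≤ arcRatio c l t ^ 2 + 2 * ρ t / arcRatio c l t -
      det2 (c t - chordCenter c) (ρ t * cos t, ρ t * sin t) / l ^ 2 :=
  sub_le_sub_right (three_mul_rpow_two_thirds_le (h.radius_pos t).le (h.arcRatio_pos hl ht)) _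

theorem integral_halfTurn_affineDensity_le (h : IsTangentAngleParam c ρ) (hl : 0 < l) :
    ∫ t in -(π / 2)..π / 2, affineDensity c ρ (chordCenter c) l t ≤ 2 * π * l := by
  rw [← h.calibration_right_sub_left]
  exact intervalIntegral.integral_le_sub_of_hasDeriv_right_of_le (by linarith [pi_pos])
    (h.continuousOn_calibration l) (fun t ht ↦ (h.hasDerivAt_calibration hl ht).hasDerivWithinAt)
    (h.continuous_affineDensity _ l).integrableOn_Icc fun t ht ↦ h.affineDensity_le hl ht

theorem arcRatio_cube_of_integral_eq (h : IsTangentAngleParam c ρ) (hl : 0 < l)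
    (heq : ∫ t in -(π / 2)..π / 2, affineDensity c ρ (chordCenter c) l t = 2 * π * l) :
    ∀ t ∈ Ioo (-(π / 2)) (π / 2), arcRatio c l t ^ 3 = ρ t := by
  intro t ht
  rw [← h.calibration_right_sub_left] at heq
  have hder := eqOn_deriv_of_integral_eq_sub (h.continuous_affineDensity _ l)
    (h.continuousOn_calibration l) (fun t ht ↦ h.hasDerivAt_calibration hl ht)
    (fun t ht ↦ h.affineDensity_le hl ht) heq ht
  exact cube_eq_of_three_mul_rpow_two_thirds_eq (h.radius_pos t).le (h.arcRatio_pos hl ht)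
    (sub_left_inj.1 hder)

-- First of the two quadratures that solve the differential equation `arcRatio ^ 3 = ρ`.
theorem exists_tan_eccentricAngle_eq (h : IsTangentAngleParam c ρ) (hl : 0 < l)
    (hcube : ∀ t ∈ Ioo (-(π / 2)) (π / 2), arcRatio c l t ^ 3 = ρ t) :
    ∃ d, ∀ t ∈ Ioo (-(π / 2)) (π / 2),
      l ^ 3 / (halfChord c).1 * tan (eccentricAngle c t) = (halfChord c).1 * tan t + d := by
  have hderiv : ∀ t ∈ Ioo (-(π / 2)) (π / 2), HasDerivAt (fun t ↦
      l ^ 3 / (halfChord c).1 * tan (eccentricAngle c t) - (halfChord c).1 * tan t) 0 t := by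
    intro t ht
    have hr := h.halfChord_fst_pos
    have hcos := cos_pos_of_mem_Ioo ht
    have hψ := h.cos_eccentricAngle_pos ht
    refine ((((hasDerivAt_tan hψ.ne').comp t (h.hasDerivAt_eccentricAngle ht)).const_mul _).sub
      ((hasDerivAt_tan hcos.ne').const_mul _)).congr_deriv ?_
    rw [← hcube t ht, arcRatio]
    field_simp
    ring
  obtain ⟨d, hd⟩ := isOpen_Ioo.exists_is_const_of_deriv_eq_zero isPreconnected_Ioo
    (fun t ht ↦ (hderiv t ht).differentiableAt.differentiableWithinAt)
    fun t ht ↦ (hderiv t ht).deriv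
  exact ⟨d, fun t ht ↦ sub_eq_iff_eq_add'.1 (hd t ht)⟩

theorem exists_snd_add_cos_eccentricAngle_eq (h : IsTangentAngleParam c ρ) (hl : 0 < l)
    (hcube : ∀ t ∈ Ioo (-(π / 2)) (π / 2), arcRatio c l t ^ 3 = ρ t) :
    ∃ e C, ∀ t ∈ Icc (-(π / 2)) (π / 2),
      (c t).2 + l ^ 3 / (halfChord c).1 * cos (eccentricAngle c t) + e * (c t).1 = C := by
  obtain ⟨d, hd⟩ := h.exists_tan_eccentricAngle_eq hl hcube
  have hderiv : ∀ t ∈ Ioo (-(π / 2)) (π / 2), HasDerivAt (fun t ↦ (c t).2 +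
      l ^ 3 / (halfChord c).1 * cos (eccentricAngle c t) + d / (halfChord c).1 * (c t).1) 0 t := by
    intro t ht
    have hr := h.halfChord_fst_pos
    have hcos := cos_pos_of_mem_Ioo ht
    have hψ := h.cos_eccentricAngle_pos ht
    refine (((h.hasDerivAt_snd t).add ((h.hasDerivAt_eccentricAngle ht).cos.const_mul _)).add
      ((h.hasDerivAt_fst t).const_mul _)).congr_deriv ?_
    have htan := hd t ht
    rw [tan_eq_sin_div_cos, tan_eq_sin_div_cos] at htan
    field_simp at htan ⊢
    linear_combination -ρ t * htan
  exact ⟨_, _, fun t ht ↦ eq_left_of_hasDerivAt_zero ((h.continuous.snd.add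
    ((continuous_cos.comp h.continuous_eccentricAngle).const_mul _)).add
      (h.continuous.fst.const_mul _)).continuousOn hderiv ht⟩

theorem eq_ellipse_arc_of_arcRatio_cube (h : IsTangentAngleParam c ρ) (hl : 0 < l)
    (hcube : ∀ t ∈ Ioo (-(π / 2)) (π / 2), arcRatio c l t ^ 3 = ρ t) {t : ℝ}
    (ht : t ∈ Icc (-(π / 2)) (π / 2)) :
    c t = sin (eccentricAngle c t) • halfChord c +
      (-cos (eccentricAngle c t)) • (0, l ^ 3 / (halfChord c).1) + chordCenter c := by
  obtain ⟨e, C, hconst⟩ := h.exists_snd_add_cos_eccentricAngle_eq hl hcube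
  have hr := h.halfChord_fst_pos
  have hleft := hconst _ (left_mem_Icc.2 (ht.1.trans ht.2))
  have hright := hconst _ (right_mem_Icc.2 (ht.1.trans ht.2))
  rw [h.eccentricAngle_left, cos_neg, ← chordCenter_sub_halfChord c] at hleft
  rw [h.eccentricAngle_right, ← chordCenter_add_halfChord c] at hright
  simp only [Prod.fst_sub, Prod.snd_sub, Prod.fst_add, Prod.snd_add, cos_pi_div_two] at hleft hright
  have hsin := h.halfChord_mul_sin_eccentricAngle ht
  have hslope : (halfChord c).2 = -e * (halfChord c).1 := by linarith
  ext
  · simp only [Prod.fst_add, Prod.smul_fst, smul_eq_mul]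
    linarith
  · simp only [Prod.snd_add, Prod.smul_snd, smul_eq_mul, hslope]
    linear_combination hconst t ht - (hleft + hright) / 2 + e * hsin

theorem image_eq_of_arcRatio_cube (h : IsTangentAngleParam c ρ) (hl : 0 < l)
    (hcube : ∀ t ∈ Ioo (-(π / 2)) (π / 2), arcRatio c l t ^ 3 = ρ t) :
    c '' Icc (-(π / 2)) (π / 2) =
      (fun q ↦ q.1 • halfChord c + q.2 • (0, l ^ 3 / (halfChord c).1) + chordCenter c) ''
        {q : ℝ × ℝ | q.1 ^ 2 + q.2 ^ 2 = 1 ∧ q.2 ≤ 0} := by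
  have harc := fun {t} ↦ h.eq_ellipse_arc_of_arcRatio_cube hl hcube (t := t)
  ext x
  constructor
  · rintro ⟨t, ht, rfl⟩
    refine ⟨(sin (eccentricAngle c t), -cos (eccentricAngle c t)), ⟨?_, ?_⟩, (harc ht).symm⟩
    · rw [neg_sq, sin_sq_add_cos_sq]
    · exact neg_nonpos.2 (cos_nonneg_of_mem_Icc (arcsin_mem_Icc _))
  · rintro ⟨q, ⟨hq, hq₂⟩, rfl⟩
    have himage := intermediate_value_Icc (by linarith [pi_pos] : -(π / 2) ≤ π / 2)
      h.continuous_eccentricAngle.continuousOn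
    rw [h.eccentricAngle_left, h.eccentricAngle_right] at himage
    obtain ⟨t, ht, hψ⟩ := himage (arcsin_mem_Icc q.1)
    refine ⟨t, ht, ?_⟩
    have hcos : cos (arcsin q.1) = -q.2 := by
      rw [cos_arcsin, sub_eq_of_eq_add' hq.symm, sqrt_sq_eq_abs, abs_of_nonpos hq₂]
    rw [harc ht, hψ, hcos, neg_neg, sin_arcsin] <;> nlinarith [sq_nonneg q.2]

theorem integral_turn_affineDensity_eq_add (h : IsTangentAngleParam c ρ)
    (hper : Function.Periodic c (2 * π)) :
    ∫ t in -(π / 2)..-(π / 2) + 2 * π, affineDensity c ρ (chordCenter c) l t =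
      (∫ t in -(π / 2)..π / 2, affineDensity c ρ (chordCenter c) l t) +
        ∫ t in -(π / 2)..π / 2, affineDensity (fun t ↦ -c (t + π)) (fun t ↦ ρ (t + π))
          (chordCenter fun t ↦ -c (t + π)) l t := by
  have hint := fun a b ↦ (h.continuous_affineDensity (chordCenter c) l).intervalIntegrable
    (μ := volume) a b
  simp only [chordCenter_half_turn hper, affineDensity_half_turn,
    intervalIntegral.integral_comp_add_right]
  have hleft : -(π / 2) + π = π / 2 := by ring
  have hright : -(π / 2) + 2 * π = π / 2 + π := by ring
  rw [hleft, hright, intervalIntegral.integral_add_adjacent_intervals (hint _ _) (hint _ _)]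

theorem integral_turn_affineDensity_le (h : IsTangentAngleParam c ρ)
    (hper : Function.Periodic c (2 * π)) (hl : 0 < l) :
    ∫ t in -(π / 2)..-(π / 2) + 2 * π, affineDensity c ρ (chordCenter c) l t ≤ 4 * π * l := by
  rw [h.integral_turn_affineDensity_eq_add hper]
  linarith [h.integral_halfTurn_affineDensity_le hl,
    h.half_turn.integral_halfTurn_affineDensity_le hl]

theorem range_eq_union_half_turn (hper : Function.Periodic c (2 * π)) :
    range c = c '' Icc (-(π / 2)) (π / 2) ∪
      (fun x ↦ -x) '' ((fun t ↦ -c (t + π)) '' Icc (-(π / 2)) (π / 2)) := by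
  have hleft : -(π / 2) + π = π / 2 := by ring
  have hright : -(π / 2) + 2 * π = π / 2 + π := by ring
  rw [← hper.image_Icc two_pi_pos (-(π / 2)), hright, image_image]
  simp only [neg_neg]
  rw [← image_image c (· + π), image_add_const_Icc, hleft, ← image_union,
    Icc_union_Icc_eq_Icc] <;> linarith [pi_pos]

theorem isEllipse_range_of_integral_eq (h : IsTangentAngleParam c ρ)
    (hper : Function.Periodic c (2 * π)) (hl : 0 < l)
    (heq : ∫ t in -(π / 2)..-(π / 2) + 2 * π, affineDensity c ρ (chordCenter c) l t = 4 * π * l) :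
    IsEllipse (range c) := by
  rw [h.integral_turn_affineDensity_eq_add hper] at heq
  have hle := h.integral_halfTurn_affineDensity_le hl
  have hle' := h.half_turn.integral_halfTurn_affineDensity_le hl
  have hlower := h.image_eq_of_arcRatio_cube hl (h.arcRatio_cube_of_integral_eq hl (by linarith))
  have hupper := h.half_turn.image_eq_of_arcRatio_cube hl
    (h.half_turn.arcRatio_cube_of_integral_eq hl (by linarith))
  rw [halfChord_half_turn hper, chordCenter_half_turn hper] at hupper
  have hdet : det2 (halfChord c) (0, l ^ 3 / (halfChord c).1) ≠ 0 := by
    have hr := h.halfChord_fst_pos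
    simp only [det2, mul_zero, sub_zero]
    positivity
  have hellipse := isEllipse_image_of_det2_ne_zero hdet (chordCenter c)
  rwa [image_circle_eq_union, ← hlower, ← hupper, ← range_eq_union_half_turn hper] at hellipse

end IsTangentAngleParam

namespace IsTangentAngleParam

open Set MeasureTheory

variable {c : ℝ → ℝ × ℝ} {ρ : ℝ → ℝ}

theorem integral_turn_affineDensity (h : IsTangentAngleParam c ρ)
    (hper : Function.Periodic c (2 * π)) (p : ℝ × ℝ) (l : ℝ) :
    ∫ t in -(π / 2)..-(π / 2) + 2 * π, affineDensity c ρ p l t =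
      3 * (∫ t in -(π / 2)..-(π / 2) + 2 * π, ρ t ^ ((2 : ℝ) / 3)) -
        (∫ t in -(π / 2)..-(π / 2) + 2 * π, det2 (c t) (ρ t * cos t, ρ t * sin t)) / l ^ 2 := by
  rw [← integral_det2_sub_left h.hasDerivAt h.continuous_velocity (hper _).symm p]
  have hdet : Continuous fun t ↦ det2 (c t - p) (ρ t * cos t, ρ t * sin t) :=
    continuous_det2 (h.continuous.sub continuous_const) h.continuous_velocity
  simp only [affineDensity]
  rw [intervalIntegral.integral_sub ((h.continuous_rpow_radius.const_mul 3).intervalIntegrable _ _)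
    ((hdet.div_const _).intervalIntegrable _ _), intervalIntegral.integral_const_mul,
    intervalIntegral.integral_div]

theorem integral_rpow_radius_pos (h : IsTangentAngleParam c ρ) :
    0 < ∫ t in -(π / 2)..-(π / 2) + 2 * π, ρ t ^ ((2 : ℝ) / 3) :=
  intervalIntegral.intervalIntegral_pos_of_pos (h.continuous_rpow_radius.intervalIntegrable _ _)
    (fun t ↦ rpow_pos_of_pos (h.radius_pos t) _) (by linarith [two_pi_pos])

-- With the scale `l = L / (2 * π)` the bound `3 * L - I / l ^ 2 ≤ 4 * π * l` reads
-- `L ^ 3 ≤ 4 * π ^ 2 * I`.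
theorem integral_turn_affineDensity_sub (h : IsTangentAngleParam c ρ)
    (hper : Function.Periodic c (2 * π)) {L : ℝ}
    (hL : L = ∫ t in -(π / 2)..-(π / 2) + 2 * π, ρ t ^ ((2 : ℝ) / 3)) (p : ℝ × ℝ) :
    (∫ t in -(π / 2)..-(π / 2) + 2 * π, affineDensity c ρ p (L / (2 * π)) t) -
        4 * π * (L / (2 * π)) =
      (L ^ 3 - 4 * π ^ 2 *
        ∫ t in -(π / 2)..-(π / 2) + 2 * π, det2 (c t) (ρ t * cos t, ρ t * sin t)) / L ^ 2 := by
  have hpos : 0 < L := hL ▸ h.integral_rpow_radius_pos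
  rw [h.integral_turn_affineDensity hper, ← hL]
  field_simp
  ring

theorem affine_isoperimetric (h : IsTangentAngleParam c ρ) (hper : Function.Periodic c (2 * π)) :
    (∫ t in -(π / 2)..-(π / 2) + 2 * π, ρ t ^ ((2 : ℝ) / 3)) ^ 3 ≤ 4 * π ^ 2 *
      ∫ t in -(π / 2)..-(π / 2) + 2 * π, det2 (c t) (ρ t * cos t, ρ t * sin t) := by
  have hL := h.integral_rpow_radius_pos
  have hle := sub_nonpos.2 (h.integral_turn_affineDensity_le hper (div_pos hL two_pi_pos))
  rw [h.integral_turn_affineDensity_sub hper rfl, div_le_iff₀ (by positivity), zero_mul] at hle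
  exact sub_nonpos.1 hle

theorem isEllipse_range_of_affine_isoperimetric_eq (h : IsTangentAngleParam c ρ)
    (hper : Function.Periodic c (2 * π))
    (heq : (∫ t in -(π / 2)..-(π / 2) + 2 * π, ρ t ^ ((2 : ℝ) / 3)) ^ 3 = 4 * π ^ 2 *
      ∫ t in -(π / 2)..-(π / 2) + 2 * π, det2 (c t) (ρ t * cos t, ρ t * sin t)) :
    IsEllipse (range c) := by
  refine h.isEllipse_range_of_integral_eq hper (div_pos h.integral_rpow_radius_pos two_pi_pos) ?_
  rw [← sub_eq_zero, h.integral_turn_affineDensity_sub hper rfl, heq, sub_self, zero_div]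

end IsTangentAngleParam

section PeriodicShift

open Set Filter

theorem exists_eq_zero_deriv_nonneg_of_periodic {f f' : ℝ → ℝ} {T a b : ℝ} (hT : 0 < T)
    (hper : Function.Periodic f T) (hf : ∀ t, HasDerivAt f (f' t) t) (ha : f a ≤ 0)
    (hb : 0 ≤ f b) : ∃ t, f t = 0 ∧ 0 ≤ f' t := by
  by_contra! hneg
  have hle : ∀ t, a ≤ t → f t ≤ 0 := fun t ht ↦
    image_le_of_deriv_right_lt_deriv_boundary
      (continuous_iff_continuousAt.2 fun t ↦ (hf t).continuousAt).continuousOn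
      (fun t _ ↦ (hf t).hasDerivWithinAt) ha (fun t ↦ hasDerivAt_const t (0 : ℝ))
      (fun t _ ht ↦ hneg t ht) (right_mem_Icc.2 ht)
  obtain ⟨n, hn⟩ := Archimedean.arch (a - b + 1) hT
  set s := b + n • T
  have has : a < s := by linarith
  have hs : f s = 0 := (hle s has.le).antisymm (by rwa [hper.nsmul n b])
  have hmax : IsLocalMax f s := by
    filter_upwards [lt_mem_nhds has] with t ht
    rw [hs]
    exact hle t ht.le
  exact (hneg s hs).ne (hmax.hasDerivAt_eq_zero (hf s))

theorem exists_shift_eq_deriv_le_of_periodic {f f' : ℝ → ℝ} {T : ℝ} (hT : 0 < T)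
    (hper : Function.Periodic f T) (hf : ∀ t, HasDerivAt f (f' t) t) (a : ℝ) :
    ∃ t, f (t + a) = f t ∧ f' t ≤ f' (t + a) := by
  have hcont : Continuous f := continuous_iff_continuousAt.2 fun t ↦ (hf t).continuousAt
  have hcompact := hper.compact_of_continuous hT.ne' hcont
  obtain ⟨_, ⟨m, rfl⟩, hm⟩ := hcompact.exists_isGreatest (range_nonempty f)
  obtain ⟨_, ⟨m', rfl⟩, hm'⟩ := hcompact.exists_isLeast (range_nonempty f)
  have hdiff : Function.Periodic (fun t ↦ f (t + a) - f t) T := fun t ↦ by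
    simp only [add_right_comm t T a, hper t, hper (t + a)]
  obtain ⟨t, ht, ht'⟩ := exists_eq_zero_deriv_nonneg_of_periodic hT hdiff
    (fun t ↦ ((hf (t + a)).comp_add_const t a).sub (hf t))
    (sub_nonpos.2 (hm (mem_range_self (m + a)))) (sub_nonneg.2 (hm' (mem_range_self (m' + a))))
  exact ⟨t, sub_eq_zero.1 ht, sub_nonneg.1 ht'⟩

end PeriodicShift

namespace IsTangentAngleParam

open Set

variable {c : ℝ → ℝ × ℝ} {ρ : ℝ → ℝ}

theorem reflect (h : IsTangentAngleParam c ρ) :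
    IsTangentAngleParam (fun t ↦ (-(c (2 * π - t)).1, (c (2 * π - t)).2))
      (fun t ↦ ρ (2 * π - t)) where
  continuous_radius := h.continuous_radius.comp (continuous_const.sub continuous_id)
  radius_pos t := h.radius_pos _
  hasDerivAt t := by
    refine (((h.hasDerivAt_fst _).comp_const_sub (2 * π) t).neg.prodMk
      ((h.hasDerivAt_snd _).comp_const_sub (2 * π) t)).congr_deriv ?_
    ext <;> simp

theorem strictMonoOn_snd (h : IsTangentAngleParam c ρ) :
    StrictMonoOn (fun t ↦ (c t).2) (Icc 0 π) := by
  refine strictMonoOn_of_hasDerivWithinAt_pos (f' := fun t ↦ ρ t * sin t) (convex_Icc _ _)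
    h.continuous.snd.continuousOn (fun t _ ↦ (h.hasDerivAt_snd t).hasDerivWithinAt) fun t ht ↦ ?_
  rw [interior_Icc] at ht
  exact mul_pos (h.radius_pos t) (sin_pos_of_mem_Ioo ht)

theorem fst_pi_lt (h : IsTangentAngleParam c ρ) {t : ℝ} (ht : t ∈ Ico (π / 2) π) :
    (c π).1 < (c t).1 := by
  have hlt := h.half_turn.strictMonoOn_fst (a := t - π) (b := 0)
    ⟨by linarith [ht.1], by linarith [ht.2, pi_pos]⟩
    ⟨by linarith [pi_pos], by linarith [pi_pos]⟩ (sub_neg.2 ht.2)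
  simpa using hlt

theorem snd_pi_div_two_mem_Ico (h : IsTangentAngleParam c ρ) :
    (c (π / 2)).2 ∈ Ico (c 0).2 (c π).2 := by
  have hmid : π / 2 ∈ Icc 0 π := ⟨by positivity, by linarith [pi_pos]⟩
  exact ⟨(h.strictMonoOn_snd (left_mem_Icc.2 pi_pos.le) hmid (by positivity)).le,
    h.strictMonoOn_snd hmid (right_mem_Icc.2 pi_pos.le) (by linarith [pi_pos])⟩

theorem exists_continuous_rightInverse_snd (h : IsTangentAngleParam c ρ) :
    ∃ g : ℝ → ℝ, Continuous g ∧ g (c 0).2 = 0 ∧ (∀ y, g y ∈ Icc 0 π) ∧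
      (∀ y ∈ Icc (c 0).2 (c π).2, (c (g y)).2 = y) ∧
      ∀ y ∈ Ico (c (π / 2)).2 (c π).2, g y ∈ Ico (π / 2) π := by
  obtain ⟨g, hg, hmem, hinv⟩ := exists_continuous_rightInverse_of_strictMonoOn pi_pos.le
    h.continuous.snd.continuousOn h.strictMonoOn_snd
  have hmid := h.snd_pi_div_two_mem_Ico
  refine ⟨g, hg, ?_, hmem, hinv, fun y hy ↦ ?_⟩
  · exact h.strictMonoOn_snd.injOn (hmem _) (left_mem_Icc.2 pi_pos.le)
      (hinv _ (left_mem_Icc.2 (hmid.1.trans hmid.2.le)))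
  · rw [← hinv y ⟨hmid.1.trans hy.1, hy.2.le⟩] at hy
    exact ⟨(h.strictMonoOn_snd.le_iff_le ⟨by positivity, by linarith [pi_pos]⟩ (hmem y)).1 hy.1,
      (h.strictMonoOn_snd.lt_iff_lt (hmem y) (right_mem_Icc.2 pi_pos.le)).1 hy.2⟩

-- Both arcs over `[0, π]` are graphs over the ordinate; the sum of the two abscissas at height `y`
-- is nonpositive at the bottom and positive just below the top.
theorem exists_snd_eq_fst_add_eq_zero {c' : ℝ → ℝ × ℝ} {ρ' : ℝ → ℝ}
    (h : IsTangentAngleParam c ρ) (h' : IsTangentAngleParam c' ρ') (hbot : (c 0).2 = (c' 0).2)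
    (htop : (c π).2 = (c' π).2) (hsum₀ : (c 0).1 + (c' 0).1 ≤ 0)
    (hsumπ : (c π).1 + (c' π).1 = 0) :
    ∃ s ∈ Ico 0 π, ∃ t ∈ Icc 0 π, (c s).2 = (c' t).2 ∧ (c s).1 + (c' t).1 = 0 := by
  obtain ⟨α, hα, hα₀, hα_mem, hα_eq, hα_top⟩ := h.exists_continuous_rightInverse_snd
  obtain ⟨β, hβ, hβ₀, hβ_mem, hβ_eq, hβ_top⟩ := h'.exists_continuous_rightInverse_snd
  rw [← hbot, ← htop] at hβ_eq
  rw [← hbot] at hβ₀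
  rw [← htop] at hβ_top
  set y₁ := max (c (π / 2)).2 (c' (π / 2)).2
  have hy₁ : y₁ < (c π).2 :=
    max_lt h.snd_pi_div_two_mem_Ico.2 (htop ▸ h'.snd_pi_div_two_mem_Ico.2)
  have hy₀ : (c 0).2 ≤ y₁ := h.snd_pi_div_two_mem_Ico.1.trans (le_max_left _ _)
  have hcont : Continuous fun y ↦ (c (α y)).1 + (c' (β y)).1 :=
    (h.continuous.comp hα).fst.add (h'.continuous.comp hβ).fst
  have hend : 0 ≤ (c (α y₁)).1 + (c' (β y₁)).1 := by
    linarith [h.fst_pi_lt (hα_top y₁ ⟨le_max_left _ _, hy₁⟩),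
      h'.fst_pi_lt (hβ_top y₁ ⟨le_max_right _ _, hy₁⟩)]
  obtain ⟨y, hy, hsum⟩ := intermediate_value_Icc hy₀ hcont.continuousOn
    ⟨by simpa only [hα₀, hβ₀] using hsum₀, hend⟩
  have hyα := hα_eq y ⟨hy.1, hy.2.trans hy₁.le⟩
  have hα_lt : α y < π := (h.strictMonoOn_snd.lt_iff_lt (hα_mem y) (right_mem_Icc.2 pi_pos.le)).1
    (hyα.symm ▸ hy.2.trans_lt hy₁)
  exact ⟨α y, ⟨(hα_mem y).1, hα_lt⟩, β y, hβ_mem y,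
    hyα.trans (hβ_eq y ⟨hy.1, hy.2.trans hy₁.le⟩).symm, hsum⟩

theorem exists_lt_eq_of_snd_eq (h : IsTangentAngleParam c ρ) (hY : (c 0).2 = (c (2 * π)).2)
    (hX : (c 0).1 ≤ (c (2 * π)).1) : ∃ s t, s < t ∧ t ≤ s + 2 * π ∧ c s = c t := by
  have hπ : 2 * π - π = π := by ring
  obtain ⟨s, hs, t, ht, hsnd, hfst⟩ := h.exists_snd_eq_fst_add_eq_zero h.reflect
    (by simpa only [sub_zero] using hY) (by simp only [hπ])
    (by simpa only [sub_zero, ← sub_eq_add_neg, sub_nonpos] using hX)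
    (by simp only [hπ, add_neg_cancel])
  exact ⟨s, 2 * π - t, by linarith [hs.2, ht.2], by linarith [hs.1, ht.1],
    Prod.ext (add_neg_eq_zero.1 hfst) hsnd⟩

-- The support function `det2 (c t) (cos t, sin t)` and its shift by `2π` cross at some `α`, in the
-- direction that makes the turn starting at `α` a loop.
theorem exists_lt_eq_of_periodic (h : IsTangentAngleParam c ρ) {n : ℕ} (hn : n ≠ 0)
    (hper : Function.Periodic c (n * (2 * π))) : ∃ s t, s < t ∧ t ≤ s + 2 * π ∧ c s = c t := by
  have hperiod : 0 < n * (2 * π) := by positivity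
  have hsupport : ∀ t, HasDerivAt (fun t ↦ (c t).1 * sin t - (c t).2 * cos t)
      ((c t).1 * cos t + (c t).2 * sin t) t := fun t ↦
    (((h.hasDerivAt_fst t).mul (hasDerivAt_sin t)).sub
      ((h.hasDerivAt_snd t).mul (hasDerivAt_cos t))).congr_deriv (by ring)
  obtain ⟨α, hα, hα'⟩ := exists_shift_eq_deriv_le_of_periodic hperiod
    (fun t ↦ by simp only [hper t, sin_add_nat_mul_two_pi, cos_add_nat_mul_two_pi]) hsupport (2 * π)
  simp only [sin_add_two_pi, cos_add_two_pi] at hα hα'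
  obtain ⟨s, t, hst, hts, heq⟩ := (h.rotate α).exists_lt_eq_of_snd_eq
    (by simp only [zero_add, add_comm (2 * π)]; linarith)
    (by simp only [zero_add, add_comm (2 * π)]; linarith)
  rw [Prod.mk.injEq] at heq
  refine ⟨s + α, t + α, by linarith, by linarith, Prod.ext ?_ ?_⟩
  · linear_combination cos α * heq.1 - sin α * heq.2 -
      ((c (s + α)).1 - (c (t + α)).1) * sin_sq_add_cos_sq α
  · linear_combination sin α * heq.1 + cos α * heq.2 -
      ((c (s + α)).2 - (c (t + α)).2) * sin_sq_add_cos_sq α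

end IsTangentAngleParam

section PolarAngle

open MeasureTheory

/-- The Euclidean norm on `ℝ × ℝ`, whose Mathlib norm is the supremum norm. -/
noncomputable def euclideanNorm (u : ℝ × ℝ) : ℝ := √(u.1 ^ 2 + u.2 ^ 2)

theorem euclideanNorm_sq (u : ℝ × ℝ) : euclideanNorm u ^ 2 = u.1 ^ 2 + u.2 ^ 2 :=
  sq_sqrt (by positivity)

theorem euclideanNorm_pos {u : ℝ × ℝ} (hu : u ≠ 0) : 0 < euclideanNorm u := by
  refine sqrt_pos.2 ((by positivity : 0 ≤ u.1 ^ 2 + u.2 ^ 2).lt_of_ne' fun h ↦ hu ?_)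
  obtain ⟨h₁, h₂⟩ := (add_eq_zero_iff_of_nonneg (sq_nonneg _) (sq_nonneg _)).1 h
  exact Prod.ext (sq_eq_zero_iff.1 h₁) (sq_eq_zero_iff.1 h₂)

theorem continuous_euclideanNorm : Continuous euclideanNorm := by
  unfold euclideanNorm
  fun_prop

theorem exists_log_of_hasDerivAt {z z' : ℝ → ℂ} (hz : ∀ s, HasDerivAt z (z' s) s)
    (hz' : Continuous z') (hne : ∀ s, z s ≠ 0) :
    ∃ w : ℝ → ℂ, (∀ s, Complex.exp (w s) = z s) ∧ ∀ s, HasDerivAt w (z' s / z s) s := by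
  have hquot : Continuous fun s ↦ z' s / z s :=
    hz'.div (continuous_iff_continuousAt.2 fun s ↦ (hz s).continuousAt) hne
  set w : ℝ → ℂ := fun s ↦ Complex.log (z 0) + ∫ x in (0 : ℝ)..s, z' x / z x
  have hw : ∀ s, HasDerivAt w (z' s / z s) s := fun s ↦
    (intervalIntegral.integral_hasDerivAt_right (hquot.intervalIntegrable _ _)
      (hquot.stronglyMeasurableAtFilter _ _) hquot.continuousAt).const_add _
  have hderiv : ∀ s, HasDerivAt (fun s ↦ z s * Complex.exp (-w s)) 0 s := fun s ↦
    ((hz s).mul (hw s).neg.cexp).congr_deriv (by have := hne s; field_simp; ring)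
  refine ⟨w, fun s ↦ ?_, hw⟩
  have hconst := is_const_of_deriv_eq_zero (fun s ↦ (hderiv s).differentiableAt)
    (fun s ↦ (hderiv s).deriv) s 0
  have hw₀ : w 0 = Complex.log (z 0) := by simp [w]
  rw [hw₀, Complex.exp_neg, Complex.exp_neg, Complex.exp_log (hne 0), mul_inv_cancel₀ (hne 0),
    mul_inv_eq_one₀ (Complex.exp_ne_zero _)] at hconst
  exact hconst.symm

theorem exists_polar_angle {v v' : ℝ → ℝ × ℝ} (hv : ∀ s, HasDerivAt v (v' s) s)
    (hv' : Continuous v') (hne : ∀ s, v s ≠ 0) :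
    ∃ θ : ℝ → ℝ, (∀ s, v s = (euclideanNorm (v s) * cos (θ s), euclideanNorm (v s) * sin (θ s))) ∧
      ∀ s, HasDerivAt θ (det2 (v s) (v' s) / euclideanNorm (v s) ^ 2) s := by
  let e := Complex.equivRealProdCLM.symm
  obtain ⟨w, hexp, hw⟩ := exists_log_of_hasDerivAt (z := fun s ↦ e (v s)) (z' := fun s ↦ e (v' s))
    (fun s ↦ e.hasFDerivAt.comp_hasDerivAt s (hv s)) (e.continuous.comp hv')
    (fun s ↦ (map_ne_zero_iff e e.injective).2 (hne s))
  refine ⟨fun s ↦ (w s).im, fun s ↦ ?_, fun s ↦ ?_⟩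
  · have hre : exp (w s).re * cos (w s).im = (v s).1 := by
      rw [← Complex.exp_re, hexp]; rfl
    have him : exp (w s).re * sin (w s).im = (v s).2 := by
      rw [← Complex.exp_im, hexp]; rfl
    have hnorm : euclideanNorm (v s) = exp (w s).re := by
      rw [euclideanNorm, ← hre, ← him, sqrt_eq_iff_mul_self_eq (by positivity) (by positivity)]
      linear_combination exp (w s).re ^ 2 * sin_sq_add_cos_sq (w s).im
    rw [hnorm, hre, him]
  · refine (Complex.imCLM.hasFDerivAt.comp_hasDerivAt s (hw s)).congr_deriv ?_
    rw [Complex.imCLM_apply, Complex.div_im, euclideanNorm_sq, det2, Complex.normSq_apply]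
    simp only [e, Complex.equivRealProdCLM_symm_apply_re, Complex.equivRealProdCLM_symm_apply_im]
    ring

theorem exists_int_forall_add_period {θ θ' : ℝ → ℝ} {ℓ : ℝ} (hθ : ∀ s, HasDerivAt θ (θ' s) s)
    (hper : Function.Periodic θ' ℓ) (hcos : cos (θ ℓ) = cos (θ 0)) (hsin : sin (θ ℓ) = sin (θ 0)) :
    ∃ n : ℤ, ∀ s, θ (s + ℓ) = θ s + n * (2 * π) := by
  obtain ⟨n, hn⟩ := Real.Angle.angle_eq_iff_two_pi_dvd_sub.1 (Real.Angle.cos_sin_inj hcos hsin)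
  have hderiv : ∀ s, HasDerivAt (fun s ↦ θ (s + ℓ) - θ s) 0 s := fun s ↦
    (((hθ (s + ℓ)).comp_add_const s ℓ).sub (hθ s)).congr_deriv (by rw [hper, sub_self])
  refine ⟨n, fun s ↦ ?_⟩
  have hconst := is_const_of_deriv_eq_zero (fun s ↦ (hderiv s).differentiableAt)
    (fun s ↦ (hderiv s).deriv) s 0
  rw [zero_add, hn] at hconst
  linear_combination hconst

theorem exists_polar_angle_periodic {v v' : ℝ → ℝ × ℝ} {ℓ : ℝ} (hv : ∀ s, HasDerivAt v (v' s) s)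
    (hv' : Continuous v') (hne : ∀ s, v s ≠ 0) (hper : Function.Periodic v ℓ) :
    ∃ (θ : ℝ → ℝ) (n : ℤ),
      (∀ s, v s = (euclideanNorm (v s) * cos (θ s), euclideanNorm (v s) * sin (θ s))) ∧
      (∀ s, HasDerivAt θ (det2 (v s) (v' s) / euclideanNorm (v s) ^ 2) s) ∧
      ∀ s, θ (s + ℓ) = θ s + n * (2 * π) := by
  obtain ⟨θ, hpolar, hθ⟩ := exists_polar_angle hv hv' hne
  have hper' : Function.Periodic v' ℓ := fun s ↦
    ((hv (s + ℓ)).comp_add_const s ℓ).unique (by simpa only [hper _] using hv s)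
  have hnorm := (euclideanNorm_pos (hne 0)).ne'
  have hℓ := hpolar ℓ
  rw [hper.eq, hpolar 0, Prod.mk.injEq, ← hpolar 0] at hℓ
  obtain ⟨n, hn⟩ := exists_int_forall_add_period hθ (fun s ↦ by simp only [hper s, hper' s])
    (mul_left_cancel₀ hnorm hℓ.1).symm (mul_left_cancel₀ hnorm hℓ.2).symm
  exact ⟨θ, n, hpolar, hθ, hn⟩

end PolarAngle

section Reparametrization

open Set MeasureTheory

theorem exists_hasDerivAt_inverse_of_add_period {θ θ' : ℝ → ℝ} {ℓ P : ℝ}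
    (hθ : ∀ s, HasDerivAt θ (θ' s) s) (hpos : ∀ s, 0 < θ' s) (hP : 0 < P)
    (hadd : ∀ s, θ (s + ℓ) = θ s + P) :
    ∃ σ : ℝ → ℝ, Function.LeftInverse σ θ ∧ Function.RightInverse σ θ ∧
      (∀ t, HasDerivAt σ (θ' (σ t))⁻¹ t) ∧ ∀ t, σ (t + P) = σ t + ℓ := by
  have hmono : StrictMono θ := strictMono_of_hasDerivAt_pos hθ hpos
  have hcont : Continuous θ := continuous_iff_continuousAt.2 fun s ↦ (hθ s).continuousAt
  have hsurj : Function.Surjective θ := fun t ↦ by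
    let F : AddConstMap ℝ ℝ ℓ P := ⟨θ, hadd⟩
    have hF : ∀ n : ℤ, θ (0 + n • ℓ) = θ 0 + n • P := AddConstMapClass.map_add_zsmul F 0
    obtain ⟨n, hn, -⟩ := existsUnique_zsmul_near_of_pos hP (t - θ 0)
    refine mem_range_of_exists_le_of_exists_ge hcont ⟨_, (hF n).trans_le ?_⟩
      ⟨_, ((hF (n + 1)).trans_ge ?_)⟩ <;> linarith
  let e := hmono.orderIsoOfSurjective θ hsurj
  have hleft : Function.LeftInverse e.symm θ := e.symm_apply_apply
  have hright : Function.RightInverse e.symm θ := e.apply_symm_apply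
  refine ⟨e.symm, hleft, hright, fun t ↦ ?_, fun t ↦ hmono.injective ?_⟩
  · exact (hθ _).of_local_left_inverse e.symm.continuous.continuousAt (hpos _).ne'
      (.of_forall hright)
  · rw [hadd, hright, hright]

theorem integral_comp_mul_deriv_of_add_period {f σ σ' : ℝ → ℝ} {ℓ P : ℝ} (hf : Continuous f)
    (hper : Function.Periodic f ℓ) (hσ : ∀ t, HasDerivAt σ (σ' t) t) (hσ' : Continuous σ')
    (hadd : ∀ t, σ (t + P) = σ t + ℓ) (a : ℝ) :
    ∫ t in a..a + P, f (σ t) * σ' t = ∫ s in (0 : ℝ)..ℓ, f s := by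
  have hsubst := intervalIntegral.integral_comp_mul_deriv (fun t _ ↦ hσ t) hσ'.continuousOn hf
    (a := a) (b := a + P)
  simp only [Function.comp_apply] at hsubst
  rw [hsubst, hadd, hper.intervalIntegral_add_eq _ 0, zero_add]

theorem exists_int_add_mul_eq_of_injOn_Ico {α : Type*} {γ : ℝ → α} {ℓ : ℝ} (hℓ : 0 < ℓ)
    (hper : Function.Periodic γ ℓ) (hinj : InjOn γ (Ico 0 ℓ)) {s t : ℝ} (h : γ s = γ t) :
    ∃ m : ℤ, t = s + m * ℓ := by
  have hmod : ∀ x, γ (toIcoMod hℓ 0 x) = γ x := fun x ↦ hper.sub_zsmul_eq _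
  have hmem : ∀ x, toIcoMod hℓ 0 x ∈ Ico 0 ℓ := fun x ↦ by
    simpa only [zero_add] using toIcoMod_mem_Ico hℓ 0 x
  have hst := hinj (hmem s) (hmem t) ((hmod s).trans (h.trans (hmod t).symm))
  refine ⟨toIcoDiv hℓ 0 t - toIcoDiv hℓ 0 s, ?_⟩
  rw [toIcoMod, toIcoMod, zsmul_eq_mul, zsmul_eq_mul] at hst
  push_cast
  linear_combination -hst

end Reparametrization

section Oval

open Set

/-- The function `det(γ', γ'')`: the curvature where `γ` has unit speed, and for every
parameterization the cube of the speed of the affine arc length. -/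
noncomputable def curvatureDet (γ : ℝ → ℝ × ℝ) (s : ℝ) : ℝ := det2 (deriv γ s) (deriv (deriv γ) s)

/-- The affine length of a closed curve `γ` of period `ℓ`. -/
noncomputable def affineLength (γ : ℝ → ℝ × ℝ) (ℓ : ℝ) : ℝ :=
  ∫ s in (0 : ℝ)..ℓ, curvatureDet γ s ^ ((1 : ℝ) / 3)

/-- The area enclosed by a positively oriented simple closed curve `γ` of period `ℓ`. -/
noncomputable def enclosedArea (γ : ℝ → ℝ × ℝ) (ℓ : ℝ) : ℝ :=
  (1 / 2) * ∫ s in (0 : ℝ)..ℓ, det2 (γ s) (deriv γ s)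

/-- `γ` is a positively oriented simple closed `C²` curve of period `ℓ` and of nowhere vanishing
curvature, with no condition on its speed. -/
structure IsOval (γ : ℝ → ℝ × ℝ) (ℓ : ℝ) : Prop where
  period_pos : 0 < ℓ
  contDiff : ContDiff ℝ 2 γ
  periodic : Function.Periodic γ ℓ
  injOn : InjOn γ (Ico 0 ℓ)
  curvatureDet_pos : ∀ s, 0 < curvatureDet γ s

variable {γ : ℝ → ℝ × ℝ} {ℓ : ℝ}

theorem continuous_deriv_deriv_of_contDiff_two (hγ : ContDiff ℝ 2 γ) :
    Continuous (deriv (deriv γ)) :=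
  (ContDiff.iterate_deriv' 0 2 hγ).continuous

theorem continuous_curvatureDet (hγ : ContDiff ℝ 2 γ) : Continuous (curvatureDet γ) :=
  continuous_det2 (hγ.continuous_deriv one_le_two) (continuous_deriv_deriv_of_contDiff_two hγ)

theorem deriv_ne_zero_of_curvatureDet_pos {s : ℝ} (hκ : 0 < curvatureDet γ s) :
    deriv γ s ≠ 0 := by
  rintro h
  simp [curvatureDet, det2, h] at hκ

theorem periodic_deriv_s7 (hper : Function.Periodic γ ℓ) : Function.Periodic (deriv γ) ℓ := fun s ↦ by
  rw [← deriv_comp_add_const, funext hper]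

theorem cube_div_rpow_two_thirds {r k : ℝ} (hr : 0 < r) (hk : 0 < k) :
    (r ^ 3 / k) ^ ((2 : ℝ) / 3) = k ^ ((1 : ℝ) / 3) * (r ^ 2 / k) := by
  have hr₂ : (r ^ 3) ^ ((2 : ℝ) / 3) = r ^ 2 := by
    rw [← rpow_natCast, ← rpow_mul hr.le, ← rpow_natCast]
    norm_num
  have hk₁ : k ^ ((1 : ℝ) / 3) * k ^ ((2 : ℝ) / 3) = k := by
    rw [← rpow_add hk]
    norm_num
  rw [div_rpow (by positivity) hk.le, hr₂]
  field_simp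
  linear_combination -hk₁

theorem exists_tangentAngle_reparam (hℓ : 0 < ℓ) (hγ : ContDiff ℝ 2 γ)
    (hper : Function.Periodic γ ℓ) (hκ : ∀ s, 0 < curvatureDet γ s) :
    ∃ (σ : ℝ → ℝ) (n : ℕ), n ≠ 0 ∧ Function.Bijective σ ∧
      (∀ t, HasDerivAt σ (euclideanNorm (deriv γ (σ t)) ^ 2 / curvatureDet γ (σ t)) t) ∧
      (∀ t, σ (t + n * (2 * π)) = σ t + ℓ) ∧
      ∀ t, deriv γ (σ t) =
        (euclideanNorm (deriv γ (σ t)) * cos t, euclideanNorm (deriv γ (σ t)) * sin t) := by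
  have hne := fun s ↦ deriv_ne_zero_of_curvatureDet_pos (hκ s)
  obtain ⟨θ, n, hpolar, hθ, hadd⟩ := exists_polar_angle_periodic (v := deriv γ)
    (fun s ↦ (hγ.differentiable_deriv_two s).hasDerivAt)
    (continuous_deriv_deriv_of_contDiff_two hγ) hne
    (periodic_deriv_s7 hper)
  have hpos : ∀ s, 0 < det2 (deriv γ s) (deriv (deriv γ) s) / euclideanNorm (deriv γ s) ^ 2 :=
    fun s ↦ div_pos (hκ s) (pow_pos (euclideanNorm_pos (hne s)) 2)
  have hn : 0 < (n : ℝ) * (2 * π) := by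
    linarith [strictMono_of_hasDerivAt_pos hθ hpos (lt_add_of_pos_right 0 hℓ), hadd 0]
  lift n to ℕ using by exact_mod_cast (pos_of_mul_pos_left hn two_pi_pos.le).le
  obtain ⟨σ, hleft, hright, hσ, hσ_add⟩ :=
    exists_hasDerivAt_inverse_of_add_period hθ hpos hn hadd
  refine ⟨σ, n, ?_, ⟨hright.injective, hleft.surjective⟩, fun t ↦ ?_, hσ_add, fun t ↦ ?_⟩
  · rintro rfl
    simp at hn
  · exact (hσ t).congr_deriv (inv_div _ _)
  · simpa only [hright t] using hpolar (σ t)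

theorem isTangentAngleParam_comp (hγ : ContDiff ℝ 2 γ) (hκ : ∀ s, 0 < curvatureDet γ s)
    {σ : ℝ → ℝ}
    (hσ : ∀ t, HasDerivAt σ (euclideanNorm (deriv γ (σ t)) ^ 2 / curvatureDet γ (σ t)) t)
    (hpolar : ∀ t, deriv γ (σ t) =
      (euclideanNorm (deriv γ (σ t)) * cos t, euclideanNorm (deriv γ (σ t)) * sin t)) :
    IsTangentAngleParam (γ ∘ σ)
      fun t ↦ euclideanNorm (deriv γ (σ t)) ^ 3 / curvatureDet γ (σ t) where
  continuous_radius := by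
    have hσ_cont : Continuous σ := continuous_iff_continuousAt.2 fun t ↦ (hσ t).continuousAt
    have hnorm := continuous_euclideanNorm.comp (hγ.continuous_deriv one_le_two)
    exact ((hnorm.pow 3).div (continuous_curvatureDet hγ) fun s ↦ (hκ s).ne').comp hσ_cont
  radius_pos t :=
    div_pos (pow_pos (euclideanNorm_pos (deriv_ne_zero_of_curvatureDet_pos (hκ _))) 3) (hκ _)
  hasDerivAt t := by
    refine ((hγ.differentiable two_ne_zero _).hasDerivAt.scomp t (hσ t)).congr_deriv ?_
    obtain ⟨hfst, hsnd⟩ := Prod.ext_iff.1 (hpolar t)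
    ext <;> simp only [Prod.smul_fst, Prod.smul_snd, smul_eq_mul]
    · rw [hfst]
      ring
    · rw [hsnd]
      ring

namespace IsOval

theorem exists_tangentAngle_reparam_one_turn (h : IsOval γ ℓ) :
    ∃ σ : ℝ → ℝ, Function.Surjective σ ∧
      (∀ t, HasDerivAt σ (euclideanNorm (deriv γ (σ t)) ^ 2 / curvatureDet γ (σ t)) t) ∧
      (∀ t, σ (t + 2 * π) = σ t + ℓ) ∧
      ∀ t, deriv γ (σ t) =
        (euclideanNorm (deriv γ (σ t)) * cos t, euclideanNorm (deriv γ (σ t)) * sin t) := by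
  obtain ⟨σ, n, hn, hbij, hσ, hadd, hpolar⟩ :=
    exists_tangentAngle_reparam h.period_pos h.contDiff h.periodic h.curvatureDet_pos
  obtain ⟨s, t, hst, hts, heq⟩ :=
    (isTangentAngleParam_comp h.contDiff h.curvatureDet_pos hσ hpolar).exists_lt_eq_of_periodic hn
      fun t ↦ by rw [Function.comp_apply, hadd, h.periodic, Function.comp_apply]
  obtain ⟨m, hm⟩ := exists_int_add_mul_eq_of_injOn_Ico h.period_pos h.periodic h.injOn heq
  let F : AddConstMap ℝ ℝ (n * (2 * π)) ℓ := ⟨σ, hadd⟩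
  have hF : σ (s + m • (n * (2 * π))) = σ s + m • ℓ := AddConstMapClass.map_add_zsmul F s m
  have ht : t = s + (m * n : ℤ) * (2 * π) := by
    rw [hbij.injective (hm.trans ((congrArg _ (zsmul_eq_mul _ _).symm).trans hF.symm)),
      zsmul_eq_mul]
    push_cast
    ring
  have hpos : 0 < m * n := by
    have : 0 < ((m * n : ℤ) : ℝ) := pos_of_mul_pos_left (by linarith) two_pi_pos.le
    exact_mod_cast this
  have hle : m * n ≤ 1 := by
    have : ((m * n : ℤ) : ℝ) ≤ 1 := le_of_mul_le_mul_right (by linarith) two_pi_pos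
    exact_mod_cast this
  have hn₁ : n = 1 := by
    exact_mod_cast Int.eq_one_of_mul_eq_one_left n.cast_nonneg (hle.antisymm hpos)
  subst hn₁
  exact ⟨σ, hbij.surjective, hσ, by simpa using hadd, hpolar⟩

theorem exists_tangentAngleParam (h : IsOval γ ℓ) :
    ∃ c ρ, IsTangentAngleParam c ρ ∧ Function.Periodic c (2 * π) ∧ range c = range γ ∧
      ∫ t in -(π / 2)..-(π / 2) + 2 * π, ρ t ^ ((2 : ℝ) / 3) = affineLength γ ℓ ∧
      ∫ t in -(π / 2)..-(π / 2) + 2 * π, det2 (c t) (ρ t * cos t, ρ t * sin t) =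
        2 * enclosedArea γ ℓ := by
  obtain ⟨σ, hsurj, hσ, hadd, hpolar⟩ := h.exists_tangentAngle_reparam_one_turn
  have hparam := isTangentAngleParam_comp h.contDiff h.curvatureDet_pos hσ hpolar
  have hγ' := h.contDiff.continuous_deriv one_le_two
  have hκ := continuous_curvatureDet h.contDiff
  have hper' := periodic_deriv_s7 h.periodic
  have hσ' : Continuous fun t ↦ euclideanNorm (deriv γ (σ t)) ^ 2 / curvatureDet γ (σ t) :=
    (((continuous_euclideanNorm.comp hγ').pow 2).div hκ fun s ↦
      (h.curvatureDet_pos s).ne').comp (continuous_iff_continuousAt.2 fun t ↦ (hσ t).continuousAt)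
  refine ⟨_, _, hparam, fun t ↦ ?_, hsurj.range_comp γ, ?_, ?_⟩
  · rw [Function.comp_apply, hadd, h.periodic, Function.comp_apply]
  · rw [affineLength, ← integral_comp_mul_deriv_of_add_period
      (hκ.rpow_const fun s ↦ Or.inr (by norm_num))
      (fun s ↦ by simp only [curvatureDet, hper' s, periodic_deriv_s7 hper' s]) hσ hσ' hadd (-(π / 2))]
    congr 1 with t
    exact cube_div_rpow_two_thirds (euclideanNorm_pos
      (deriv_ne_zero_of_curvatureDet_pos (h.curvatureDet_pos _))) (h.curvatureDet_pos _)
  · rw [enclosedArea, ← integral_comp_mul_deriv_of_add_period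
      (continuous_det2 h.contDiff.continuous hγ')
      (fun s ↦ by simp only [h.periodic s, hper' s]) hσ hσ' hadd (-(π / 2)), ← mul_assoc,
      mul_one_div_cancel two_ne_zero, one_mul]
    congr 1 with t
    obtain ⟨hfst, hsnd⟩ := Prod.ext_iff.1 (hpolar t)
    rw [det2, det2, hfst, hsnd, Function.comp_apply]
    ring

end IsOval

end Oval

section AffineImage

open Set

variable {γ : ℝ → ℝ × ℝ} {ℓ : ℝ}

theorem hasDerivAt_linearMap_add {v : ℝ × ℝ} {s : ℝ} (hγ : HasDerivAt γ v s)
    (T : ℝ × ℝ →ₗ[ℝ] ℝ × ℝ) (b : ℝ × ℝ) : HasDerivAt (fun s ↦ T (γ s) + b) (T v) s :=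
  (T.toContinuousLinearMap.hasFDerivAt.comp_hasDerivAt s hγ).add_const b

theorem curvatureDet_linearMap_add (hγ : ContDiff ℝ 2 γ) (T : ℝ × ℝ →ₗ[ℝ] ℝ × ℝ) (b : ℝ × ℝ)
    (s : ℝ) : curvatureDet (fun s ↦ T (γ s) + b) s =
      det2 (T (1, 0)) (T (0, 1)) * curvatureDet γ s := by
  have hderiv : deriv (fun s ↦ T (γ s) + b) = fun s ↦ T (deriv γ s) := funext fun s ↦
    (hasDerivAt_linearMap_add (hγ.differentiable two_ne_zero s).hasDerivAt T b).deriv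
  have hderiv₂ := (hasDerivAt_linearMap_add (hγ.differentiable_deriv_two s).hasDerivAt T 0).deriv
  simp only [add_zero] at hderiv₂
  rw [curvatureDet, hderiv, hderiv₂, det2_map, curvatureDet]

theorem affineLength_linearMap_add_cube (hγ : ContDiff ℝ 2 γ) (hκ : ∀ s, 0 ≤ curvatureDet γ s)
    {T : ℝ × ℝ →ₗ[ℝ] ℝ × ℝ} (hT : 0 ≤ det2 (T (1, 0)) (T (0, 1))) (b : ℝ × ℝ) :
    affineLength (fun s ↦ T (γ s) + b) ℓ ^ 3 =
      det2 (T (1, 0)) (T (0, 1)) * affineLength γ ℓ ^ 3 := by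
  have hroot : (det2 (T (1, 0)) (T (0, 1)) ^ ((1 : ℝ) / 3)) ^ 3 = det2 (T (1, 0)) (T (0, 1)) := by
    rw [← rpow_mul_natCast hT]
    norm_num
  simp only [affineLength, curvatureDet_linearMap_add hγ, mul_rpow hT (hκ _)]
  rw [intervalIntegral.integral_const_mul, mul_pow, hroot]

theorem enclosedArea_linearMap_add (hγ : ContDiff ℝ 1 γ) (hper : Function.Periodic γ ℓ)
    (T : ℝ × ℝ →ₗ[ℝ] ℝ × ℝ) (b : ℝ × ℝ) :
    enclosedArea (fun s ↦ T (γ s) + b) ℓ = det2 (T (1, 0)) (T (0, 1)) * enclosedArea γ ℓ := by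
  have hc := fun s ↦ hasDerivAt_linearMap_add (hγ.differentiable one_ne_zero s).hasDerivAt T b
  have hc' : Continuous fun s ↦ T (deriv γ s) :=
    T.toContinuousLinearMap.continuous.comp (hγ.continuous_deriv le_rfl)
  rw [enclosedArea, funext fun s ↦ (hc s).deriv,
    ← integral_det2_sub_left hc hc' (by rw [hper.eq]) b]
  simp only [add_sub_cancel_right, fun s ↦ det2_map T (γ s) (deriv γ s)]
  rw [intervalIntegral.integral_const_mul, mul_left_comm, enclosedArea]

theorem IsOval.linearEquiv_add (h : IsOval γ ℓ) {T : (ℝ × ℝ) ≃ₗ[ℝ] ℝ × ℝ}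
    (hT : 0 < det2 (T (1, 0)) (T (0, 1))) (b : ℝ × ℝ) : IsOval (fun s ↦ T (γ s) + b) ℓ where
  period_pos := h.period_pos
  contDiff := (T.toContinuousLinearEquiv.contDiff.comp h.contDiff).add contDiff_const
  periodic s := by simp only [h.periodic s]
  injOn := ((add_left_injective b).comp T.injective).comp_injOn h.injOn
  curvatureDet_pos s := by
    have hdet := curvatureDet_linearMap_add h.contDiff (T : ℝ × ℝ →ₗ[ℝ] ℝ × ℝ) b s
    simp only [LinearEquiv.coe_coe] at hdet
    rw [hdet]
    exact mul_pos hT (h.curvatureDet_pos s)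

theorem IsEllipse.exists_linearEquiv_add {S : Set (ℝ × ℝ)} (hS : IsEllipse S) :
    ∃ (T : (ℝ × ℝ) ≃ₗ[ℝ] ℝ × ℝ) (b : ℝ × ℝ), 0 < det2 (T (1, 0)) (T (0, 1)) ∧
      ∀ q ∈ S, (T q + b).1 ^ 2 + (T q + b).2 ^ 2 = 1 := by
  obtain ⟨T, b, rfl⟩ := hS
  have hdet : det2 (T.symm (1, 0)) (T.symm (0, 1)) ≠ 0 := fun h ↦ by
    have hone := det2_map (T.symm : ℝ × ℝ →ₗ[ℝ] ℝ × ℝ) (T (1, 0)) (T (0, 1))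
    simp only [LinearEquiv.coe_coe, LinearEquiv.symm_apply_apply, h, zero_mul] at hone
    norm_num [det2] at hone
  rcases hdet.lt_or_gt with hneg | hpos
  · let R : (ℝ × ℝ) ≃ₗ[ℝ] ℝ × ℝ := (LinearEquiv.refl ℝ ℝ).prodCongr (LinearEquiv.neg ℝ)
    have hR : ∀ u v, det2 (R u) (R v) = -det2 u v := fun u v ↦ by
      simp only [det2, R, LinearEquiv.prodCongr_apply, LinearEquiv.refl_apply,
        LinearEquiv.neg_apply]
      ring
    refine ⟨T.symm.trans R, -R (T.symm b), ?_, ?_⟩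
    · simpa only [LinearEquiv.trans_apply, hR, neg_pos] using hneg
    · rintro _ ⟨q, hq, rfl⟩
      simpa [R] using hq
  · refine ⟨T.symm, -T.symm b, hpos, ?_⟩
    rintro _ ⟨q, hq, rfl⟩
    simpa using hq

theorem IsTangentAngleParam.eq_sin_neg_cos_of_sq_add_sq_eq_one {c : ℝ → ℝ × ℝ} {ρ : ℝ → ℝ}
    (h : IsTangentAngleParam c ρ) (hcirc : ∀ t, (c t).1 ^ 2 + (c t).2 ^ 2 = 1) (t : ℝ) :
    c t = (sin t, -cos t) ∧ ρ t = 1 := by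
  have hrad : ∀ s, (c s).1 * cos s + (c s).2 * sin s = 0 := fun s ↦ by
    have hderiv := ((((h.hasDerivAt_fst s).pow 2).add
      ((h.hasDerivAt_snd s).pow 2)).congr_of_eventuallyEq
      (.of_forall fun s ↦ (hcirc s).symm)).unique (hasDerivAt_const s 1)
    have hprod : ρ s * ((c s).1 * cos s + (c s).2 * sin s) = 0 := by linear_combination hderiv / 2
    exact (mul_eq_zero_iff_left (h.radius_pos s).ne').1 hprod
  have hρ : ρ t = (c t).1 * sin t - (c t).2 * cos t := by
    have hderiv := ((((h.hasDerivAt_fst t).mul (hasDerivAt_cos t)).add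
      ((h.hasDerivAt_snd t).mul (hasDerivAt_sin t))).congr_of_eventuallyEq
      (.of_forall fun s ↦ (hrad s).symm)).unique (hasDerivAt_const t 0)
    linear_combination hderiv - ρ t * sin_sq_add_cos_sq t
  have hρ_sq : ρ t ^ 2 = 1 ^ 2 := by
    rw [hρ]
    linear_combination hcirc t + ((c t).1 ^ 2 + (c t).2 ^ 2) * sin_sq_add_cos_sq t -
      ((c t).1 * cos t + (c t).2 * sin t) * hrad t
  have hρ₁ := (pow_left_inj₀ (h.radius_pos t).le zero_le_one two_ne_zero).1 hρ_sq
  rw [hρ₁] at hρ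
  refine ⟨Prod.ext ?_ ?_, hρ₁⟩
  · linear_combination cos t * hrad t - sin t * hρ - (c t).1 * sin_sq_add_cos_sq t
  · linear_combination sin t * hrad t + cos t * hρ - (c t).2 * sin_sq_add_cos_sq t

theorem IsOval.affineLength_and_enclosedArea_of_sq_add_sq_eq_one (h : IsOval γ ℓ)
    (hcirc : ∀ s, (γ s).1 ^ 2 + (γ s).2 ^ 2 = 1) :
    affineLength γ ℓ = 2 * π ∧ enclosedArea γ ℓ = π := by
  obtain ⟨c, ρ, hc, -, hrange, hlength, harea⟩ := h.exists_tangentAngleParam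
  have hcirc' : ∀ t, (c t).1 ^ 2 + (c t).2 ^ 2 = 1 := fun t ↦ by
    obtain ⟨s, hs⟩ := hrange ▸ mem_range_self t
    rw [← hs, hcirc]
  have hone : ∀ t, det2 (sin t, -cos t) (cos t, sin t) = 1 := fun t ↦ by
    rw [det2]
    linear_combination sin_sq_add_cos_sq t
  simp only [hc.eq_sin_neg_cos_of_sq_add_sq_eq_one hcirc', one_mul, one_rpow, hone,
    intervalIntegral.integral_const, add_sub_cancel_left, smul_eq_mul, mul_one] at hlength harea
  exact ⟨hlength.symm, by linarith⟩

namespace IsOval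

theorem affine_isoperimetric (h : IsOval γ ℓ) :
    affineLength γ ℓ ^ 3 ≤ 8 * π ^ 2 * enclosedArea γ ℓ := by
  obtain ⟨c, ρ, hc, hper, -, hlength, harea⟩ := h.exists_tangentAngleParam
  have hineq := hc.affine_isoperimetric hper
  rw [hlength, harea] at hineq
  linarith

theorem isEllipse_range_of_affine_isoperimetric_eq (h : IsOval γ ℓ)
    (heq : affineLength γ ℓ ^ 3 = 8 * π ^ 2 * enclosedArea γ ℓ) : IsEllipse (range γ) := by
  obtain ⟨c, ρ, hc, hper, hrange, hlength, harea⟩ := h.exists_tangentAngleParam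
  rw [← hrange]
  refine hc.isEllipse_range_of_affine_isoperimetric_eq hper ?_
  rw [hlength, harea]
  linarith

theorem affine_isoperimetric_eq_of_isEllipse (h : IsOval γ ℓ) (hE : IsEllipse (range γ)) :
    affineLength γ ℓ ^ 3 = 8 * π ^ 2 * enclosedArea γ ℓ := by
  obtain ⟨T, b, hT, hcirc⟩ := hE.exists_linearEquiv_add
  have hcircle := fun s ↦ hcirc _ (mem_range_self s)
  obtain ⟨hlength, harea⟩ :=
    (h.linearEquiv_add hT b).affineLength_and_enclosedArea_of_sq_add_sq_eq_one hcircle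
  have hL := affineLength_linearMap_add_cube (ℓ := ℓ) h.contDiff (fun s ↦ (h.curvatureDet_pos s).le)
    (T := (T : ℝ × ℝ →ₗ[ℝ] ℝ × ℝ)) hT.le b
  have hA := enclosedArea_linearMap_add (h.contDiff.of_le one_le_two) h.periodic
    (T : ℝ × ℝ →ₗ[ℝ] ℝ × ℝ) b
  simp only [LinearEquiv.coe_coe] at hL hA
  refine mul_left_cancel₀ hT.ne' ?_
  rw [← hL, mul_left_comm, ← hA, hlength, harea]
  ring

end IsOval

end AffineImage

theorem stmt_7_general {γ : ℝ → ℝ × ℝ} {ℓ : ℝ} (h : IsOval γ ℓ) :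
    affineLength γ ℓ ^ 3 ≤ 8 * π ^ 2 * enclosedArea γ ℓ ∧
      (affineLength γ ℓ ^ 3 = 8 * π ^ 2 * enclosedArea γ ℓ ↔ IsEllipse (Set.range γ)) :=
  ⟨h.affine_isoperimetric, h.isEllipse_range_of_affine_isoperimetric_eq,
    h.affine_isoperimetric_eq_of_isEllipse⟩

/-- **affine isoperimetric inequality.** For a smooth closed strictly convex
curve `γ` of length `ℓ`, parameterized by arc length, injective on `[0,ℓ)`, with curvature
`κ = det(γ',γ'') > 0` and enclosed area `A = ½∫₀^ℓ det(γ,γ')`, one has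
`(∫₀^ℓ κ^{1/3})³ ≤ 8π²A`, with equality iff the image of `γ` is an ellipse. -/
theorem stmt_7 (ℓ : ℝ) (hℓ : 0 < ℓ) (γ : ℝ → ℝ × ℝ) (hγ : ContDiff ℝ (⊤ : ℕ∞) γ)
    (hper : ∀ s, γ (s + ℓ) = γ s)
    (harc : ∀ s, (deriv γ s).1 ^ 2 + (deriv γ s).2 ^ 2 = 1)
    (hinj : Set.InjOn γ (Set.Ico 0 ℓ))
    (κ : ℝ → ℝ) (hκdef : ∀ s, κ s = det2 (deriv γ s) (deriv (deriv γ) s))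
    (hκpos : ∀ s, 0 < κ s)
    (A : ℝ) (hA : A = (1 / 2) * ∫ s in (0:ℝ)..ℓ, det2 (γ s) (deriv γ s)) :
    (∫ s in (0:ℝ)..ℓ, κ s ^ ((1:ℝ) / 3)) ^ 3 ≤ 8 * π ^ 2 * A ∧
    ((∫ s in (0:ℝ)..ℓ, κ s ^ ((1:ℝ) / 3)) ^ 3 = 8 * π ^ 2 * A ↔
      ∃ (T : (ℝ × ℝ) ≃ₗ[ℝ] (ℝ × ℝ)) (b : ℝ × ℝ),
        Set.range γ = (fun q => T q + b) '' {q : ℝ × ℝ | q.1 ^ 2 + q.2 ^ 2 = 1}) := by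
  obtain rfl : κ = curvatureDet γ := funext hκdef
  exact hA ▸ stmt_7_general ⟨hℓ, contDiff_infty.1 hγ 2, hper, hinj, hκpos⟩
end

section
/- Fix n ≥ 3. On E = (ℝ²)^{ℤ/nℤ}, for each i let vᵢ be the vector field whose i-th component at z is zᵢ₊₁ − zᵢ₋₁ and whose other components are 0, and for smooth vector fields X, Y : E → E define the Lie bracket [X,Y](z) = DY(z)(X(z)) − DX(z)(Y(z)). Then: (a) [vᵢ, vⱼ] = 0 identically whenever j ∉ {i−1, i, i+1} mod n; (b) for every z and every i, the bracket [vᵢ₊₁, vᵢ](z) is the vector whose i-th component is zᵢ₊₂ − zᵢ, whose (i+1)-st component is zᵢ₊₁ − zᵢ₋₁, and whose other components are 0; in particular, det(vᵢ(z)ᵢ-component, [vᵢ₊₁,vᵢ](z)ᵢ-component) = det(zᵢ₊₁ − zᵢ₋₁, zᵢ₊₂ − zᵢ), where det(u,v) = u₁v₂ − u₂v₁. -/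
/-- The vector field `vᵢ`: its `i`-th component at `z` is `zᵢ₊₁ − zᵢ₋₁`, other components `0`. -/
noncomputable def vfield {n : ℕ} [NeZero n] (i : ZMod n) (z : ZMod n → ℝ × ℝ) :
    ZMod n → ℝ × ℝ :=
  Pi.single i (z (i + 1) - z (i - 1))

/-- Lie bracket of vector fields on the vector space `(ℝ²)^{ℤ/nℤ}`:
`[X,Y](z) = DY(z)(X(z)) − DX(z)(Y(z))`. -/
noncomputable def bracket {n : ℕ} [NeZero n]
    (X Y : (ZMod n → ℝ × ℝ) → (ZMod n → ℝ × ℝ)) (z : ZMod n → ℝ × ℝ) :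
    ZMod n → ℝ × ℝ :=
  fderiv ℝ Y z (X z) - fderiv ℝ X z (Y z)

/-!
Each `vᵢ` is linear, so `[vᵢ, vⱼ]` is the commutator `vⱼ ∘ vᵢ - vᵢ ∘ vⱼ`. As the values of `vᵢ` are
supported at `i` while `vⱼ` reads only the coordinates `j ± 1`, the composite `vⱼ ∘ vᵢ` vanishes
unless `i = j ± 1`. For neighbouring indices exactly one of the two coordinates read survives,
because `2 ≠ 0` in `ℤ/nℤ` keeps `j + 1` and `j - 1` apart.
-/

theorem lieBracket_continuousLinearMap {𝕜 E : Type*} [NontriviallyNormedField 𝕜]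
    [NormedAddCommGroup E] [NormedSpace 𝕜 E] (A B : E →L[𝕜] E) (x : E) :
    VectorField.lieBracket 𝕜 A B x = B (A x) - A (B x) := by
  simp only [VectorField.lieBracket, ContinuousLinearMap.fderiv]

theorem zmod_two_ne_zero {n : ℕ} (hn : 2 < n) : (2 : ZMod n) ≠ 0 :=
  mod_cast (ZMod.natCast_eq_zero_iff 2 n).not.mpr (Nat.not_dvd_of_pos_of_lt two_pos hn)

section VertexFields

variable {n : ℕ} [NeZero n]

theorem bracket_eq_lieBracket (X Y : (ZMod n → ℝ × ℝ) → (ZMod n → ℝ × ℝ)) :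
    bracket X Y = VectorField.lieBracket ℝ X Y := rfl

/-- The vector field `vᵢ` as a continuous linear endomorphism of the space of `n`-gons, bundled so
that brackets of the `vᵢ` become commutators of linear maps. -/
noncomputable def vfieldCLM (i : ZMod n) : (ZMod n → ℝ × ℝ) →L[ℝ] (ZMod n → ℝ × ℝ) :=
  .single ℝ (fun _ ↦ ℝ × ℝ) i ∘L (.proj (i + 1) - .proj (i - 1))

theorem coe_vfieldCLM (i : ZMod n) : ⇑(vfieldCLM i) = vfield i := rfl

theorem bracket_vfield (i j : ZMod n) (z : ZMod n → ℝ × ℝ) :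
    bracket (vfield i) (vfield j) z = vfield j (vfield i z) - vfield i (vfield j z) := by
  simp only [bracket_eq_lieBracket, ← coe_vfieldCLM, lieBracket_continuousLinearMap]

theorem vfield_apply_self (i : ZMod n) (z : ZMod n → ℝ × ℝ) :
    vfield i z i = z (i + 1) - z (i - 1) :=
  Pi.single_eq_same i _

theorem vfield_apply_of_ne {i k : ZMod n} (h : k ≠ i) (z : ZMod n → ℝ × ℝ) :
    vfield i z k = 0 :=
  Pi.single_eq_of_ne h _

theorem vfield_vfield_eq_zero {i j : ZMod n} (hsub : j ≠ i - 1) (hadd : j ≠ i + 1)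
    (z : ZMod n → ℝ × ℝ) : vfield j (vfield i z) = 0 := by
  rw [vfield, vfield_apply_of_ne (mt eq_sub_of_add_eq hsub),
    vfield_apply_of_ne (mt sub_eq_iff_eq_add.mp hadd), sub_self, Pi.single_zero]

theorem bracket_vfield_eq_zero {i j : ZMod n} (hsub : j ≠ i - 1) (hadd : j ≠ i + 1)
    (z : ZMod n → ℝ × ℝ) : bracket (vfield i) (vfield j) z = 0 := by
  have hsub' : i ≠ j - 1 := mt eq_sub_iff_add_eq.mp hadd.symm
  have hadd' : i ≠ j + 1 := mt sub_eq_iff_eq_add.mpr hsub.symm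
  rw [bracket_vfield, vfield_vfield_eq_zero hsub hadd, vfield_vfield_eq_zero hsub' hadd', sub_zero]

theorem vfield_vfield_add_one (htwo : (2 : ZMod n) ≠ 0) (i : ZMod n) (z : ZMod n → ℝ × ℝ) :
    vfield i (vfield (i + 1) z) = Pi.single i (z (i + 2) - z i) := by
  have hne : i - 1 ≠ i + 1 := fun h ↦ htwo (by linear_combination -h)
  rw [vfield, vfield_apply_self, vfield_apply_of_ne hne, sub_zero, add_sub_cancel_right, add_assoc,
    one_add_one_eq_two]

theorem vfield_add_one_vfield (htwo : (2 : ZMod n) ≠ 0) (i : ZMod n) (z : ZMod n → ℝ × ℝ) :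
    vfield (i + 1) (vfield i z) = -Pi.single (i + 1) (z (i + 1) - z (i - 1)) := by
  have hne : i + 1 + 1 ≠ i := fun h ↦ htwo (by linear_combination h)
  rw [vfield, vfield_apply_of_ne hne, add_sub_cancel_right, vfield_apply_self, zero_sub,
    Pi.single_neg]

theorem bracket_vfield_add_one (htwo : (2 : ZMod n) ≠ 0) (i : ZMod n) (z : ZMod n → ℝ × ℝ) :
    bracket (vfield (i + 1)) (vfield i) z
      = Pi.single i (z (i + 2) - z i) + Pi.single (i + 1) (z (i + 1) - z (i - 1)) := by
  rw [bracket_vfield, vfield_vfield_add_one htwo, vfield_add_one_vfield htwo, sub_neg_eq_add]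

theorem bracket_vfield_add_one_apply_self (htwo : (2 : ZMod n) ≠ 0) (i : ZMod n)
    (z : ZMod n → ℝ × ℝ) : bracket (vfield (i + 1)) (vfield i) z i = z (i + 2) - z i := by
  have hne : i ≠ i + 1 := fun h ↦ htwo (by linear_combination -2 * h)
  rw [bracket_vfield_add_one htwo, Pi.add_apply, Pi.single_eq_same, Pi.single_eq_of_ne hne,
    add_zero]

end VertexFields

/-- For `n ≥ 3`: (a) `[vᵢ,vⱼ] = 0` whenever `j ∉ {i−1, i, i+1}` mod `n`;
(b) `[vᵢ₊₁,vᵢ](z)` has `i`-th component `zᵢ₊₂ − zᵢ`, `(i+1)`-st component `zᵢ₊₁ − zᵢ₋₁`, and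
all other components `0`; in particular
`det((vᵢ(z))ᵢ, ([vᵢ₊₁,vᵢ](z))ᵢ) = det(zᵢ₊₁ − zᵢ₋₁, zᵢ₊₂ − zᵢ)`. -/
theorem stmt_9 (n : ℕ) [NeZero n] (hn : 3 ≤ n) :
    (∀ i j : ZMod n, j ≠ i - 1 → j ≠ i → j ≠ i + 1 →
        ∀ z : ZMod n → ℝ × ℝ, bracket (vfield i) (vfield j) z = 0) ∧
    (∀ (z : ZMod n → ℝ × ℝ) (i : ZMod n),
        bracket (vfield (i + 1)) (vfield i) z
          = Pi.single i (z (i + 2) - z i) + Pi.single (i + 1) (z (i + 1) - z (i - 1))) ∧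
    (∀ (z : ZMod n → ℝ × ℝ) (i : ZMod n),
        det2 (vfield i z i) (bracket (vfield (i + 1)) (vfield i) z i)
          = det2 (z (i + 1) - z (i - 1)) (z (i + 2) - z i)) := by
  have htwo : (2 : ZMod n) ≠ 0 := zmod_two_ne_zero hn
  refine ⟨fun i j hsub _ hadd z ↦ bracket_vfield_eq_zero hsub hadd z,
    fun z i ↦ bracket_vfield_add_one htwo i z, fun z i ↦ ?_⟩
  rw [vfield_apply_self, bracket_vfield_add_one_apply_self htwo]
end

section
/- Let n ≥ 1, identify ℝ^{2n} with ℂⁿ, and let f : ℝ^{2n} → ℝ be a smooth (C^∞) function whose second derivative (Hessian) is positive definite at every point. Assume M := f⁻¹({1}) is nonempty and compact, and that there exists a point x₀ with f(x₀) < 1. Then for every integer k ≥ 3 there exist points z₁, …, z_k ∈ M (indices taken mod k) and nonzero real numbers t₁, …, t_k such that z_{i+1} − z_{i−1} = tᵢ·(i·∇f(zᵢ)) for every i, where ∇f denotes the gradient of f and i·∇f(zᵢ) is the complex multiplication of the gradient by i. -/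
/-!
Let `M` be a compact regular level set of `f` in a symplectic vector space, and let `X` be the
Hamiltonian vector field of `f`, with the convention `df = ω(·, X)`. A linear functional `ω(·, w)`
restricted to `M` can be extremal at `p` only if `w` is a multiple of `X p`. The symplectic area of
a polygon is affine in each vertex `zᵢ`, with slope `ω(·, zᵢ₊₁ - zᵢ₋₁)`, so an inscribed polygon of
maximal area satisfies `zᵢ₊₁ - zᵢ₋₁ = tᵢ X(zᵢ)`. If some `tᵢ` vanished, then moving `zᵢ` freely
along `M` would keep the area maximal, and the condition at `zᵢ₊₁` would place `M` on a line. A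
compact regular level set lies on no line `a + ℝu`: `ω(·, u)` is constant on `M`, so `u` is a
multiple of `X` everywhere on `M`, while for `v` with `ω(u, v) ≠ 0` the functional `ω(·, v)` has a
maximum on `M`, where `v` is a multiple of `X` too.

Convexity only enters to make the level set regular: a critical point would be a minimum of `f`.
-/

open Set Function

section Convexity

variable {E : Type*} [NormedAddCommGroup E] [NormedSpace ℝ E] {f : E → ℝ}

theorem convexOn_univ_of_iteratedFDeriv_two_nonneg (hf : ContDiff ℝ 2 f)
    (hhess : ∀ x v, 0 ≤ iteratedFDeriv ℝ 2 f x ![v, v]) : ConvexOn ℝ univ f := by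
  refine ⟨convex_univ, fun x _ y _ a b ha hb hab => ?_⟩
  have hline (s : ℝ) : HasDerivAt (AffineMap.lineMap x y : ℝ → E) (y - x) s :=
    AffineMap.hasDerivAt_lineMap
  have hderiv (s : ℝ) : HasDerivAt (fun s : ℝ => f (AffineMap.lineMap x y s))
      (fderiv ℝ f (AffineMap.lineMap x y s) (y - x)) s :=
    (hf.differentiable two_ne_zero _).hasFDerivAt.comp_hasDerivAt s (hline s)
  have hderiv2 (s : ℝ) :
      HasDerivAt (fun s : ℝ => fderiv ℝ f (AffineMap.lineMap x y s) (y - x))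
        (iteratedFDeriv ℝ 2 f (AffineMap.lineMap x y s) ![y - x, y - x]) s := by
    have hdf : Differentiable ℝ (fderiv ℝ f) :=
      (hf.fderiv_right (m := 1) le_rfl).differentiable one_ne_zero
    simpa [iteratedFDeriv_two_apply] using
      ((hdf _).hasFDerivAt.comp_hasDerivAt s (hline s)).clm_apply (hasDerivAt_const s (y - x))
  have hderiv_eq := funext fun s => (hderiv s).deriv
  have hconvex : ConvexOn ℝ univ (fun s : ℝ => f (AffineMap.lineMap x y s)) := by
    refine convexOn_univ_of_deriv2_nonneg (fun s => (hderiv s).differentiableAt) ?_ fun s => ?_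
    · exact hderiv_eq ▸ fun s => (hderiv2 s).differentiableAt
    · rw [iterate_succ_apply, iterate_one, hderiv_eq, (hderiv2 s).deriv]
      exact hhess _ _
  have hsegment := hconvex.2 (mem_univ 0) (mem_univ 1) ha hb hab
  rw [eq_sub_of_add_eq hab] at hsegment ⊢
  simpa [AffineMap.lineMap_apply_module] using hsegment

theorem add_apply_sub_le_of_convexOn {s : Set E} {f' : E →L[ℝ] ℝ} {x y : E}
    (hf : ConvexOn ℝ s f) (hx : x ∈ s) (hy : y ∈ s) (hf' : HasFDerivAt f f' x) :
    f x + f' (y - x) ≤ f y := by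
  have hderiv : HasDerivAt (f ∘ AffineMap.lineMap x y) (f' (y - x)) (0 : ℝ) :=
    HasFDerivAt.comp_hasDerivAt 0 (by simpa using hf') AffineMap.hasDerivAt_lineMap
  have hslope := (hf.comp_affineMap (AffineMap.lineMap x y)).le_slope_of_hasDerivAt
    (x := 0) (y := 1) (by simpa using hx) (by simpa using hy) one_pos hderiv
  simp only [slope_def_field, comp_apply, AffineMap.lineMap_apply_one, AffineMap.lineMap_apply_zero,
    sub_zero, div_one] at hslope
  linarith

theorem ne_zero_of_convexOn_of_lt {s : Set E} {f' : E →L[ℝ] ℝ} {x y : E}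
    (hf : ConvexOn ℝ s f) (hx : x ∈ s) (hy : y ∈ s) (hf' : HasFDerivAt f f' x) (hlt : f y < f x) :
    f' ≠ 0 := by
  rintro rfl
  have hle := add_apply_sub_le_of_convexOn hf hx hy hf'
  rw [zero_apply, add_zero] at hle
  exact hle.not_gt hlt

end Convexity

section LinearSymplectic

variable {E : Type*} [NormedAddCommGroup E] [NormedSpace ℝ E] {ω : E →L[ℝ] E →L[ℝ] ℝ}

/-- A symplectic form on a real normed space: a continuous bilinear form that is alternating and
weakly nondegenerate, i.e. `v ↦ ω(·, v)` is only required to be injective. -/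
structure IsSymplectic (ω : E →L[ℝ] E →L[ℝ] ℝ) : Prop where
  self_eq_zero : ∀ u, ω u u = 0
  eq_zero_of_forall_apply_eq_zero : ∀ v, (∀ u, ω u v = 0) → v = 0

namespace IsSymplectic

theorem apply_swap (hω : IsSymplectic ω) (u v : E) : ω u v = -ω v u := by
  have h := hω.self_eq_zero (u + v)
  simp only [map_add, add_apply, hω.self_eq_zero] at h
  linarith

theorem flip_injective (hω : IsSymplectic ω) : Injective ω.flip :=
  (injective_iff_map_eq_zero _).2 fun v hv =>
    hω.eq_zero_of_forall_apply_eq_zero v fun u => DFunLike.congr_fun hv u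

theorem exists_apply_ne_zero (hω : IsSymplectic ω) {u : E} (hu : u ≠ 0) : ∃ v, ω u v ≠ 0 := by
  contrapose! hu
  exact hω.eq_zero_of_forall_apply_eq_zero u fun v => by rw [hω.apply_swap, hu, neg_zero]

end IsSymplectic

variable {k : ℕ} [NeZero k]

/-- The symplectic area `∑ᵢ ω(zᵢ, zᵢ₊₁)` of the closed polygon with vertices `zᵢ`, indexed
modulo `k`; in the plane it is twice the signed area. -/
noncomputable def symplecticArea (ω : E →L[ℝ] E →L[ℝ] ℝ) (z : ZMod k → E) : ℝ :=
  ∑ i, ω (z i) (z (i + 1))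

theorem continuous_symplecticArea : Continuous (symplecticArea (k := k) ω) := by
  unfold symplecticArea
  fun_prop

theorem IsSymplectic.symplecticArea_update [Nontrivial (ZMod k)] (hω : IsSymplectic ω)
    (z : ZMod k → E) (i : ZMod k) (x : E) :
    symplecticArea ω (update z i x) =
      symplecticArea ω z + ω.flip (z (i + 1) - z (i - 1)) (x - z i) := by
  have hpred : i - 1 ≠ i := by simp
  have hsucc : i + 1 ≠ i := by simp
  rw [← sub_eq_iff_eq_add', symplecticArea, symplecticArea, ← Finset.sum_sub_distrib,
    Fintype.sum_eq_add i (i - 1) hpred.symm]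
  · simp only [sub_add_cancel, update_self, update_of_ne hpred, update_of_ne hsucc,
      ContinuousLinearMap.flip_apply, map_sub, sub_apply, hω.apply_swap (z (i - 1))]
    ring
  · rintro j ⟨hj, hj_pred⟩
    have hj_succ : j + 1 ≠ i := fun h => hj_pred (eq_sub_of_add_eq h)
    simp only [update_of_ne hj, update_of_ne hj_succ, sub_self]

end LinearSymplectic

section LevelSet

variable {E : Type*} [NormedAddCommGroup E] [NormedSpace ℝ E] [CompleteSpace E] {f : E → ℝ}

theorem exists_eq_smul_of_isLocalExtrOn_levelSet {f' φ : E →L[ℝ] ℝ} {p : E}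
    (hf : HasStrictFDerivAt f f' p) (hf' : f' ≠ 0) (hφ : IsLocalExtrOn φ {x | f x = f p} p) :
    ∃ t : ℝ, φ = t • f' := by
  obtain ⟨a, b, hab, hsum⟩ :=
    hφ.exists_multipliers_of_hasStrictFDerivAt_1d hf φ.hasStrictFDerivAt
  have hb : b ≠ 0 := by
    rintro rfl
    rw [zero_smul, add_zero, smul_eq_zero_iff_left hf'] at hsum
    exact hab (Prod.ext hsum rfl)
  refine ⟨-(b⁻¹ * a), ?_⟩
  rw [neg_smul (b⁻¹ * a) f', mul_smul, eq_neg_of_add_eq_zero_left hsum, smul_neg, neg_neg,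
    inv_smul_smul₀ hb]

variable {ω : E →L[ℝ] E →L[ℝ] ℝ} {X : E → E} {c : ℝ}

namespace IsSymplectic

theorem exists_eq_smul_of_isExtrOn_levelSet (hω : IsSymplectic ω) {p v w : E} (hp : f p = c)
    (hf : HasStrictFDerivAt f (ω.flip v) p) (hv : v ≠ 0)
    (hw : IsExtrOn (ω.flip w) (f ⁻¹' {c}) p) : ∃ t : ℝ, w = t • v := by
  have hflip : ω.flip v ≠ 0 := (map_ne_zero_iff _ hω.flip_injective).2 hv
  subst hp
  obtain ⟨t, ht⟩ := exists_eq_smul_of_isLocalExtrOn_levelSet hf hflip hw.localize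
  exact ⟨t, hω.flip_injective (by rw [ht, map_smul])⟩

theorem exists_sub_notMem_span_of_isCompact_levelSet (hω : IsSymplectic ω)
    (hf : ∀ p, f p = c → HasStrictFDerivAt f (ω.flip (X p)) p) (hX : ∀ p, f p = c → X p ≠ 0)
    (hcompact : IsCompact (f ⁻¹' {c})) (hne : (f ⁻¹' {c}).Nonempty) (a : E) {u : E} (hu : u ≠ 0) :
    ∃ x, f x = c ∧ x - a ∉ Submodule.span ℝ {u} := by
  by_contra! hline
  have hconst (x : E) (hx : f x = c) : ω.flip u x = ω.flip u a := by
    obtain ⟨s, hs⟩ := Submodule.mem_span_singleton.1 (hline x hx)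
    rw [← sub_eq_zero, ← map_sub, ← hs, map_smul, ContinuousLinearMap.flip_apply,
      hω.self_eq_zero, smul_zero]
  obtain ⟨v, huv⟩ := hω.exists_apply_ne_zero hu
  obtain ⟨p, hp, hpmax⟩ := hcompact.exists_isMaxOn hne (ω.flip v).continuous.continuousOn
  obtain ⟨s, hs⟩ := hω.exists_eq_smul_of_isExtrOn_levelSet hp (hf p hp) (hX p hp) hpmax.isExtr
  have humax : IsMaxOn (ω.flip u) (f ⁻¹' {c}) p :=
    fun x hx => ((hconst x hx).trans (hconst p hp).symm).le
  obtain ⟨t, ht⟩ := hω.exists_eq_smul_of_isExtrOn_levelSet hp (hf p hp) (hX p hp) humax.isExtr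
  apply huv
  rw [hs, ht, map_smul, map_smul, smul_apply, hω.self_eq_zero, smul_zero, smul_zero]

variable {k : ℕ} [NeZero k] [Nontrivial (ZMod k)] {z : ZMod k → E}

theorem exists_succ_sub_pred_eq_smul_of_isMaxOn (hω : IsSymplectic ω)
    (hf : ∀ p, f p = c → HasStrictFDerivAt f (ω.flip (X p)) p) (hX : ∀ p, f p = c → X p ≠ 0)
    (hz : ∀ i, f (z i) = c)
    (hmax : IsMaxOn (symplecticArea ω) {y | ∀ i, f (y i) = c} z) (i : ZMod k) :
    ∃ t : ℝ, z (i + 1) - z (i - 1) = t • X (z i) := by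
  refine hω.exists_eq_smul_of_isExtrOn_levelSet (hz i) (hf _ (hz i)) (hX _ (hz i))
    (IsMaxOn.isExtr fun x hx => ?_)
  have harea := hmax (a := update z i x) <|
    (forall_update_iff z fun _ y => f y = c).2 ⟨hx, fun j _ => hz j⟩
  rw [mem_ofPred_eq, hω.symplecticArea_update, map_sub] at harea
  rw [mem_ofPred_eq]
  linarith

theorem succ_ne_pred_of_isMaxOn (hω : IsSymplectic ω)
    (hf : ∀ p, f p = c → HasStrictFDerivAt f (ω.flip (X p)) p) (hX : ∀ p, f p = c → X p ≠ 0)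
    (hcompact : IsCompact (f ⁻¹' {c})) (hk : (2 : ZMod k) ≠ 0) (hz : ∀ i, f (z i) = c)
    (hmax : IsMaxOn (symplecticArea ω) {y | ∀ i, f (y i) = c} z) (i : ZMod k) :
    z (i + 1) ≠ z (i - 1) := by
  intro heq
  obtain ⟨x, hx, hx_line⟩ := hω.exists_sub_notMem_span_of_isCompact_levelSet hf hX hcompact
    ⟨z i, hz i⟩ (z (i + 1 + 1)) (hX _ (hz (i + 1)))
  have hz' : ∀ j, f (update z i x j) = c :=
    (forall_update_iff z fun _ y => f y = c).2 ⟨hx, fun j _ => hz j⟩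
  have harea : symplecticArea ω (update z i x) = symplecticArea ω z := by
    rw [hω.symplecticArea_update, heq, sub_self, map_zero, zero_apply, add_zero]
  have hmax' : IsMaxOn (symplecticArea ω) {y | ∀ i, f (y i) = c} (update z i x) :=
    fun y hy => (hmax hy).trans harea.ge
  obtain ⟨t, ht⟩ := hω.exists_succ_sub_pred_eq_smul_of_isMaxOn hf hX hz' hmax' (i + 1)
  have hsucc : i + 1 ≠ i := by simp
  have hsucc_succ : i + 1 + 1 ≠ i := by simpa [add_assoc, one_add_one_eq_two] using hk
  rw [add_sub_cancel_right, update_self, update_of_ne hsucc, update_of_ne hsucc_succ] at ht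
  refine hx_line (Submodule.mem_span_singleton.2 ⟨-t, ?_⟩)
  rw [neg_smul, ← ht, neg_sub]

end IsSymplectic

theorem stmt_11_general (hω : IsSymplectic ω)
    (hf : ∀ p, f p = c → HasStrictFDerivAt f (ω.flip (X p)) p) (hX : ∀ p, f p = c → X p ≠ 0)
    (hcompact : IsCompact (f ⁻¹' {c})) (hne : (f ⁻¹' {c}).Nonempty) {k : ℕ} (hk : 3 ≤ k) :
    ∃ (z : ZMod k → E) (t : ZMod k → ℝ),
      (∀ i, f (z i) = c) ∧ (∀ i, t i ≠ 0) ∧ ∀ i, z (i + 1) - z (i - 1) = t i • X (z i) := by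
  have : NeZero k := ⟨by lia⟩
  have : Fact (1 < k) := ⟨by lia⟩
  have htwo : (2 : ZMod k) ≠ 0 := Ring.two_ne_zero (by rw [ZMod.ringChar_zmod_n]; lia)
  obtain ⟨m, hm⟩ := hne
  have hpolygons : IsCompact {z : ZMod k → E | ∀ i, f (z i) = c} :=
    isCompact_pi_infinite fun _ => hcompact
  obtain ⟨z, hz, hmax⟩ := hpolygons.exists_isMaxOn ⟨fun _ => m, fun _ => hm⟩
    (continuous_symplecticArea (ω := ω)).continuousOn
  choose t ht using hω.exists_succ_sub_pred_eq_smul_of_isMaxOn hf hX hz hmax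
  refine ⟨z, t, hz, fun i hti => ?_, ht⟩
  apply hω.succ_ne_pred_of_isMaxOn hf hX hcompact htwo hz hmax i
  rw [← sub_eq_zero, ht, hti, zero_smul]

end LevelSet

section StdSymplecticForm

variable {V : Type*} [NormedAddCommGroup V] [InnerProductSpace ℂ V] [NormedSpace ℝ V]
  [IsScalarTower ℝ ℂ V]

/-- The standard symplectic form `ω(u, v) = ⟨i u, v⟩` of a complex inner product space, where
`⟨·, ·⟩` is the real part of the Hermitian inner product. It is written as the imaginary part of
that product, which is conjugate linear in the first variable. -/
noncomputable def stdSymplecticForm : V →L[ℝ] V →L[ℝ] ℝ :=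
  ContinuousLinearMap.compL ℝ V ℂ ℝ Complex.imCLM ∘L
    (isBoundedBilinearMap_inner (𝕜 := ℂ)).toContinuousLinearMap

theorem stdSymplecticForm_apply (u v : V) : stdSymplecticForm u v = (inner ℂ u v).im :=
  rfl

theorem stdSymplecticForm_apply_I_smul (u v : V) :
    stdSymplecticForm u (Complex.I • v) = (inner ℂ v u).re := by
  rw [stdSymplecticForm_apply, inner_smul_right, Complex.I_mul_im, ← inner_conj_symm,
    Complex.conj_re]

theorem isSymplectic_stdSymplecticForm :
    IsSymplectic (stdSymplecticForm : V →L[ℝ] V →L[ℝ] ℝ) where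
  self_eq_zero u := inner_self_im (𝕜 := ℂ) u
  eq_zero_of_forall_apply_eq_zero v hv := by
    refine inner_self_eq_zero.1 (Complex.ext ?_ (hv v))
    simpa [stdSymplecticForm_apply, inner_smul_left] using hv (Complex.I • v)

end StdSymplecticForm

/-- Let `f : ℝ^{2n} ≅ ℂⁿ → ℝ` be smooth with everywhere positive definite
Hessian, `M = f⁻¹{1}` nonempty and compact, and `f(x₀) < 1` for some `x₀`.  Let `g` be the
gradient of `f` (characterized by `df_x(v) = ⟨g(x), v⟩`).  Then for every `k ≥ 3` there are
points `z₁,…,z_k ∈ M` (indices mod `k`) and nonzero reals `t₁,…,t_k` with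
`z_{i+1} − z_{i−1} = tᵢ · (i·∇f(zᵢ))`, i.e. a `k`-periodic symplectic billiard trajectory. -/
theorem stmt_11 (n : ℕ) (hn : 1 ≤ n)
    (f : EuclideanSpace ℂ (Fin n) → ℝ) (hf : ContDiff ℝ (⊤ : ℕ∞) f)
    (hhess : ∀ (x v : EuclideanSpace ℂ (Fin n)), v ≠ 0 →
        0 < iteratedFDeriv ℝ 2 f x ![v, v])
    (M : Set (EuclideanSpace ℂ (Fin n))) (hM : M = f ⁻¹' {1})
    (hMne : M.Nonempty) (hMcomp : IsCompact M)
    (x₀ : EuclideanSpace ℂ (Fin n)) (hx₀ : f x₀ < 1)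
    (g : EuclideanSpace ℂ (Fin n) → EuclideanSpace ℂ (Fin n))
    (hg : ∀ x v, fderiv ℝ f x v = rinner (g x) v) :
    ∀ k : ℕ, 3 ≤ k →
      ∃ (z : ZMod k → EuclideanSpace ℂ (Fin n)) (t : ZMod k → ℝ),
        (∀ i, z i ∈ M) ∧ (∀ i, t i ≠ 0) ∧
        ∀ i, z (i + 1) - z (i - 1) = t i • (Complex.I • g (z i)) := by
  intro k hk
  subst hM
  have hhess_nonneg (x v) : 0 ≤ iteratedFDeriv ℝ 2 f x ![v, v] := by
    obtain rfl | hv := eq_or_ne v 0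
    · simp [iteratedFDeriv_two_apply]
    · exact (hhess x v hv).le
  have hconvex : ConvexOn ℝ univ f :=
    convexOn_univ_of_iteratedFDeriv_two_nonneg (contDiff_infty.1 hf 2) hhess_nonneg
  have hfderiv (z) : fderiv ℝ f z = stdSymplecticForm.flip (Complex.I • g z) :=
    ContinuousLinearMap.ext fun v => (hg z v).trans (stdSymplecticForm_apply_I_smul v (g z)).symm
  have hderiv (z) : HasStrictFDerivAt f (stdSymplecticForm.flip (Complex.I • g z)) z :=
    hfderiv z ▸ hf.contDiffAt.hasStrictFDerivAt (by simp)
  have hregular (z) (hz : f z = 1) : Complex.I • g z ≠ 0 := fun hgz =>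
    ne_zero_of_convexOn_of_lt hconvex (mem_univ z) (mem_univ x₀) (hderiv z).hasFDerivAt
      (hx₀.trans_eq hz.symm) (by rw [hgz, map_zero])
  exact stmt_11_general isSymplectic_stdSymplecticForm (fun z _ => hderiv z) hregular hMcomp hMne hk
end

section
/- Let n ≥ 1 and let a₁, …, aₙ be positive reals; define the ℝ-linear map R : ℂⁿ → ℂⁿ by (Rz)ⱼ = (i/aⱼ)·zⱼ, with inverse R⁻¹. Let Z₀, Z₁, Z₂, Z₃, Z₄ ∈ ℂⁿ be unit vectors (‖Zⱼ‖ = 1) and suppose there are positive reals t₁, t₂, t₃ with Z₂ − Z₀ = t₁·R(Z₁), Z₃ − Z₁ = t₂·R(Z₂), and Z₄ − Z₂ = t₃·R(Z₃). Set Wⱼ = R⁻¹(Zⱼ) for j = 0, 2, 4. Then: (a) each Wⱼ lies on the ellipsoid E = {w ∈ ℂⁿ : ∑ⱼ |wⱼ|²/aⱼ² = 1}; (b) W₀ ≠ W₂ and W₄ ≠ W₂; and (c) there exists t > 0 such that R²(W₂) = t·((W₀ − W₂)/‖W₀ − W₂‖ + (W₄ − W₂)/‖W₄ − W₂‖), i.e.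 the chord from W₀ to W₂ reflects to the chord from W₂ to W₄ under the usual (Birkhoff) billiard reflection in E, whose inward normal at W₂ is proportional to R²(W₂). -/
/-!
Since `R` is linear and injective, pulling `Z₂ - Z₀ = t₁ • R Z₁` back by `R⁻¹` gives
`W₂ - W₀ = t₁ • Z₁`: the unit vector `Z₁`, which was an impact point, is the direction of the chord
from `W₀` to `W₂`, and likewise `Z₃` is the direction of the chord from `W₂` to `W₄`. The remaining
relation `Z₃ - Z₁ = t₂ • R Z₂ = t₂ • R² W₂` then says that the change of direction at `W₂` is along
`R² W₂ = (-w j / a j ^ 2)ⱼ`, the inward normal of the ellipsoid at `W₂ = (w j)ⱼ`, which is the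
Birkhoff reflection law.
-/

open NormedSpace

section SymplecticReflection

variable {V : Type*} [AddCommGroup V] [Module ℝ V]

/-- `X`, `Y`, `Z` are consecutive impact points of the symplectic billiard in a hypersurface whose
characteristic direction at `Y` is the oriented line spanned by `R Y`. Membership in the
hypersurface is not part of the definition. -/
def IsSymplecticReflection (R : V → V) (X Y Z : V) : Prop :=
  ∃ t : ℝ, 0 < t ∧ Z - X = t • R Y

namespace IsSymplecticReflection

variable {R : V →ₗ[ℝ] V} {X Y Z : V}

theorem exists_sub_eq_smul (hR : Function.Injective R)
    (h : IsSymplecticReflection R (R X) Y (R Z)) : ∃ t : ℝ, 0 < t ∧ Z - X = t • Y := by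
  obtain ⟨t, ht, h⟩ := h
  exact ⟨t, ht, hR <| by rw [map_sub, map_smul, h]⟩

theorem ne (hR : Function.Injective R) (hY : Y ≠ 0)
    (h : IsSymplecticReflection R (R X) Y (R Z)) : X ≠ Z := by
  obtain ⟨t, ht, h⟩ := h.exists_sub_eq_smul hR
  exact (sub_ne_zero.mp (h ▸ smul_ne_zero ht.ne' hY)).symm

end IsSymplecticReflection

end SymplecticReflection

section BirkhoffReflection

variable {V : Type*} [NormedAddCommGroup V] [NormedSpace ℝ V]

/-- The Birkhoff (equal angle) reflection law at `Y` for a ray coming from `X` and leaving towards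
`Z`: the unit vectors from `Y` towards `X` and towards `Z` sum to a positive multiple of the inward
normal `ν`, which need not have length one. -/
def IsBirkhoffReflection (ν X Y Z : V) : Prop :=
  X ≠ Y ∧ Z ≠ Y ∧ ∃ t : ℝ, 0 < t ∧ ν = t • (normalize (X - Y) + normalize (Z - Y))

namespace IsSymplecticReflection

variable {R : V →ₗ[ℝ] V}

theorem normalize_sub {X Y Z : V} (hR : Function.Injective R)
    (h : IsSymplecticReflection R (R X) Y (R Z)) : normalize (Z - X) = normalize Y := by
  obtain ⟨t, ht, h⟩ := h.exists_sub_eq_smul hR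
  rw [h, normalize_smul_of_pos ht]

theorem isBirkhoffReflection {W₀ W₂ W₄ Z₁ Z₃ : V} (hR : Function.Injective R)
    (hZ₁ : ‖Z₁‖ = 1) (hZ₃ : ‖Z₃‖ = 1)
    (h₁ : IsSymplecticReflection R (R W₀) Z₁ (R W₂))
    (h₂ : IsSymplecticReflection R Z₁ (R W₂) Z₃)
    (h₃ : IsSymplecticReflection R (R W₂) Z₃ (R W₄)) :
    IsBirkhoffReflection (R (R W₂)) W₀ W₂ W₄ := by
  obtain ⟨t, ht, h₂⟩ := h₂
  have ne_zero {Z : V} (hZ : ‖Z‖ = 1) : Z ≠ 0 := norm_ne_zero_iff.mp (hZ ▸ one_ne_zero)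
  refine ⟨h₁.ne hR (ne_zero hZ₁), (h₃.ne hR (ne_zero hZ₃)).symm, t⁻¹, inv_pos.mpr ht, ?_⟩
  have incoming : normalize (W₀ - W₂) = -Z₁ := by
    rw [← neg_sub, normalize_neg, h₁.normalize_sub hR, normalize_eq_self_of_norm_eq_one hZ₁]
  have outgoing : normalize (W₄ - W₂) = Z₃ := by
    rw [h₃.normalize_sub hR, normalize_eq_self_of_norm_eq_one hZ₃]
  rw [incoming, outgoing, neg_add_eq_sub, h₂, inv_smul_smul₀ ht.ne']

end IsSymplecticReflection

end BirkhoffReflection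

section Ellipsoid

variable {ι : Type*} {a : ι → ℝ}

/-- The map `z ↦ ((i / a j) * z j)ⱼ`, whose value at a point `z` of the unit sphere spans the
characteristic direction there for the symplectic form `∑ a j dxⱼ ∧ dyⱼ`. -/
noncomputable def characteristicMap (a : ι → ℝ) : EuclideanSpace ℂ ι →ₗ[ℝ] EuclideanSpace ℂ ι where
  toFun z := WithLp.toLp 2 fun j ↦ Complex.I / a j * z j
  map_add' z w := by ext j; simp [mul_add]
  map_smul' t z := by ext j; simp [mul_left_comm]

theorem characteristicMap_apply (a : ι → ℝ) (z : EuclideanSpace ℂ ι) (j : ι) :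
    characteristicMap a z j = Complex.I / a j * z j :=
  rfl

theorem characteristicMap_injective (ha : ∀ j, a j ≠ 0) :
    Function.Injective (characteristicMap a) := by
  intro z w h
  ext j
  have hj : Complex.I / a j ≠ 0 :=
    div_ne_zero Complex.I_ne_zero (Complex.ofReal_ne_zero.mpr (ha j))
  exact mul_left_cancel₀ hj (congrArg (· j) h)

variable [Fintype ι]

/-- The ellipsoid in `ℂ^ι` with semi-axes `|a j|`, for nonzero `a j`, each repeated over the real
and imaginary parts of the `j`-th coordinate. -/
def ellipsoid (a : ι → ℝ) : Set (EuclideanSpace ℂ ι) :=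
  {w | ∑ j, ‖w j‖ ^ 2 / a j ^ 2 = 1}

theorem norm_characteristicMap_sq (a : ι → ℝ) (w : EuclideanSpace ℂ ι) :
    ‖characteristicMap a w‖ ^ 2 = ∑ j, ‖w j‖ ^ 2 / a j ^ 2 := by
  simp [EuclideanSpace.norm_sq_eq, characteristicMap_apply, inv_mul_eq_div, div_pow]

theorem mem_ellipsoid_iff_norm_characteristicMap_eq_one {w : EuclideanSpace ℂ ι} :
    w ∈ ellipsoid a ↔ ‖characteristicMap a w‖ = 1 := by
  rw [ellipsoid, Set.mem_ofPred_eq, ← norm_characteristicMap_sq,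
    pow_eq_one_iff_of_nonneg (norm_nonneg _) two_ne_zero]

theorem stmt_12_general (ha : ∀ j, a j ≠ 0)
    {R Rinv : EuclideanSpace ℂ ι → EuclideanSpace ℂ ι}
    (hR : ∀ z j, R z j = Complex.I / a j * z j)
    (hRinv : ∀ z j, Rinv z j = a j / Complex.I * z j)
    {Z₀ Z₁ Z₂ Z₃ Z₄ : EuclideanSpace ℂ ι}
    (hZ₀ : ‖Z₀‖ = 1) (hZ₁ : ‖Z₁‖ = 1) (hZ₂ : ‖Z₂‖ = 1) (hZ₃ : ‖Z₃‖ = 1) (hZ₄ : ‖Z₄‖ = 1)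
    (h₁ : IsSymplecticReflection R Z₀ Z₁ Z₂)
    (h₂ : IsSymplecticReflection R Z₁ Z₂ Z₃)
    (h₃ : IsSymplecticReflection R Z₂ Z₃ Z₄) :
    Rinv Z₀ ∈ ellipsoid a ∧ Rinv Z₂ ∈ ellipsoid a ∧ Rinv Z₄ ∈ ellipsoid a ∧
      IsBirkhoffReflection (R (R (Rinv Z₂))) (Rinv Z₀) (Rinv Z₂) (Rinv Z₄) := by
  obtain rfl : R = characteristicMap a := funext fun z ↦ PiLp.ext (hR z)
  have apply_inv (Z) : characteristicMap a (Rinv Z) = Z := by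
    ext j
    have haj : (a j : ℂ) ≠ 0 := Complex.ofReal_ne_zero.mpr (ha j)
    rw [characteristicMap_apply, hRinv]
    field_simp
  have inv_mem {Z} (hZ : ‖Z‖ = 1) : Rinv Z ∈ ellipsoid a :=
    mem_ellipsoid_iff_norm_characteristicMap_eq_one.mpr ((apply_inv Z).symm ▸ hZ)
  refine ⟨inv_mem hZ₀, inv_mem hZ₂, inv_mem hZ₄,
    IsSymplecticReflection.isBirkhoffReflection (characteristicMap_injective ha) hZ₁ hZ₃ ?_ ?_ ?_⟩
  all_goals simpa only [apply_inv]

end Ellipsoid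

/-- Let `R : ℂⁿ → ℂⁿ`, `(Rz)ⱼ = (i/aⱼ)zⱼ` (with `aⱼ > 0`), `R⁻¹` its
inverse.  If `Z₀,…,Z₄` are unit vectors with `Z₂ − Z₀ = t₁·R(Z₁)`, `Z₃ − Z₁ = t₂·R(Z₂)`,
`Z₄ − Z₂ = t₃·R(Z₃)` (`tᵢ > 0`), and `Wⱼ = R⁻¹(Zⱼ)` for `j = 0,2,4`, then the `Wⱼ` lie on
the ellipsoid `∑ |wⱼ|²/aⱼ² = 1`, `W₀ ≠ W₂ ≠ W₄`, and there is `t > 0` with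
`R²(W₂) = t·((W₀−W₂)/‖W₀−W₂‖ + (W₄−W₂)/‖W₄−W₂‖)` (Birkhoff reflection in the ellipsoid). -/
theorem stmt_12 (n : ℕ) (hn : 1 ≤ n) (a : Fin n → ℝ) (ha : ∀ j, 0 < a j)
    (R Rinv : EuclideanSpace ℂ (Fin n) → EuclideanSpace ℂ (Fin n))
    (hR : ∀ z j, R z j = (Complex.I / (a j : ℂ)) * z j)
    (hRinv : ∀ z j, Rinv z j = ((a j : ℂ) / Complex.I) * z j)
    (Z₀ Z₁ Z₂ Z₃ Z₄ : EuclideanSpace ℂ (Fin n))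
    (hZ₀ : ‖Z₀‖ = 1) (hZ₁ : ‖Z₁‖ = 1) (hZ₂ : ‖Z₂‖ = 1) (hZ₃ : ‖Z₃‖ = 1) (hZ₄ : ‖Z₄‖ = 1)
    (t₁ t₂ t₃ : ℝ) (ht₁ : 0 < t₁) (ht₂ : 0 < t₂) (ht₃ : 0 < t₃)
    (h₁ : Z₂ - Z₀ = t₁ • R Z₁)
    (h₂ : Z₃ - Z₁ = t₂ • R Z₂)
    (h₃ : Z₄ - Z₂ = t₃ • R Z₃)
    (W₀ W₂ W₄ : EuclideanSpace ℂ (Fin n))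
    (hW₀ : W₀ = Rinv Z₀) (hW₂ : W₂ = Rinv Z₂) (hW₄ : W₄ = Rinv Z₄) :
    (∑ j, ‖W₀ j‖ ^ 2 / (a j) ^ 2 = 1) ∧
    (∑ j, ‖W₂ j‖ ^ 2 / (a j) ^ 2 = 1) ∧
    (∑ j, ‖W₄ j‖ ^ 2 / (a j) ^ 2 = 1) ∧
    W₀ ≠ W₂ ∧ W₄ ≠ W₂ ∧
    ∃ t : ℝ, 0 < t ∧
      R (R W₂) = t • (‖W₀ - W₂‖⁻¹ • (W₀ - W₂) + ‖W₄ - W₂‖⁻¹ • (W₄ - W₂)) := by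
  subst hW₀ hW₂ hW₄
  exact stmt_12_general (fun j ↦ (ha j).ne') hR hRinv hZ₀ hZ₁ hZ₂ hZ₃ hZ₄
    ⟨t₁, ht₁, h₁⟩ ⟨t₂, ht₂, h₂⟩ ⟨t₃, ht₃, h₃⟩
end

section
/- Let n ≥ 1 and let a₁,…,aₙ be positive reals; let A : ℂⁿ → ℂⁿ be the diagonal map (Az)ⱼ = aⱼ·zⱼ and A^{−1/2} the diagonal map with entries aⱼ^{−1/2}. Let f : ℝ → ℝ be a C¹ function with f(t) ≠ 0 for all t, and let x : ℝ → ℂⁿ be a C² curve satisfying the characteristic equation x'(t) = f(t)·(i·A x(t)) for all t and the normalization ⟨A x(0), x(0)⟩ = 1, where ⟨u,v⟩ = Re(∑ⱼ uⱼ·conj(vⱼ)). Set y(t) = A^{−1/2} x(t). Then for all t: ⟨A² y(t), y(t)⟩ = 1 and y''(t) = (f'(t)/f(t))·y'(t) − f(t)²·A² y(t). In particular, y''(t) lies in the span of y'(t) and the normal A²y(t) to the ellipsoid {⟨A²y, y⟩ = 1}, i.e. y is a (reparameterized) geodesic on that ellipsoid. -/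
/-!
Let `B` be symmetric with `A B² = 1`. Then `B` commutes with `A`, hence maps a characteristic curve
`x` to a curve `y = B x` satisfying the same equation `y' = f · iAy`. Differentiating once more and
using `(iA)² = -A²` gives `y'' = f' · iAy - f² A²y`, where `iAy = y' / f`. The Hamiltonian `⟨Ax, x⟩`
is conserved along `x`, and it equals `⟨A²y, y⟩` because `B` can be moved across the inner product.
-/

/-- A characteristic curve of the quadrics `⟨A v, v⟩ = const`: its velocity is a real multiple of
the characteristic direction `i A x`. The multiplier `f` is part of the data because the geodesic
equation of the transformed curve depends on the parametrization. -/
def IsCharacteristicCurve {E : Type*} [NormedAddCommGroup E] [NormedSpace ℂ E]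
    (A : E →L[ℂ] E) (f : ℝ → ℝ) (x : ℝ → E) : Prop :=
  ∀ t, HasDerivAt x (f t • Complex.I • A (x t)) t

namespace IsCharacteristicCurve

section NormedSpace

variable {E : Type*} [NormedAddCommGroup E] [NormedSpace ℂ E] {A B : E →L[ℂ] E}
  {f : ℝ → ℝ} {x : ℝ → E}

theorem hasDerivAt_map (hx : IsCharacteristicCurve A f x) (B : E →L[ℂ] E) (t : ℝ) :
    HasDerivAt (fun t => B (x t)) (f t • Complex.I • B (A (x t))) t := by
  have h : HasDerivAt (fun t => B (x t)) (B (f t • Complex.I • A (x t))) t :=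
    (B.restrictScalars ℝ).hasFDerivAt.comp_hasDerivAt t (hx t)
  rwa [map_real_smul B B.continuous, map_smul] at h

theorem map_of_commute (hx : IsCharacteristicCurve A f x) (hAB : Commute A B) :
    IsCharacteristicCurve A f (fun t => B (x t)) := fun t => by
  have hcomm : A (B (x t)) = B (A (x t)) := congr($hAB.eq (x t))
  simpa only [hcomm] using hx.hasDerivAt_map B t

theorem hasDerivAt_deriv (hx : IsCharacteristicCurve A f x) {f' t : ℝ} (hf : HasDerivAt f f' t)
    (hft : f t ≠ 0) :
    HasDerivAt (deriv x) ((f' / f t) • deriv x t - f t ^ 2 • A (A (x t))) t := by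
  have hvel : deriv x = fun t => f t • Complex.I • A (x t) := deriv_eq hx
  have hIAx : HasDerivAt (fun t => Complex.I • A (x t)) (-(f t • A (A (x t)))) t := by
    refine ((hx.hasDerivAt_map A t).const_smul Complex.I).congr_deriv ?_
    rw [smul_comm, smul_smul Complex.I, Complex.I_mul_I, neg_one_smul, smul_neg]
  rw [hvel]
  refine (hf.smul hIAx).congr_deriv ?_
  rw [smul_smul (f' / f t), div_mul_cancel₀ _ hft, smul_neg, smul_smul, ← sq]
  abel

end NormedSpace

theorem inner_map_self_eq {E : Type*} [NormedAddCommGroup E] [InnerProductSpace ℂ E]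
    {A : E →L[ℂ] E} {f : ℝ → ℝ} {x : ℝ → E} (hx : IsCharacteristicCurve A f x)
    (hA : (A : E →ₗ[ℂ] E).IsSymmetric) (s t : ℝ) :
    inner ℂ (A (x s)) (x s) = inner ℂ (A (x t)) (x t) := by
  have hconst (r : ℝ) : HasDerivAt (fun r => inner ℂ (A (x r)) (x r)) 0 r := by
    refine ((hx.hasDerivAt_map A r).inner ℂ (hx r)).congr_deriv ?_
    have hsymm : inner ℂ (A (A (x r))) (x r) = inner ℂ (A (x r)) (A (x r)) := hA _ _
    simp only [inner_smul_left_eq_smul, inner_smul_right_eq_smul, inner_smul_left, smul_eq_mul,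
      Complex.conj_I, hsymm, neg_mul, smul_neg, add_neg_cancel]
  exact is_const_of_deriv_eq_zero (fun r => (hconst r).differentiableAt)
    (fun r => (hconst r).deriv) s t

end IsCharacteristicCurve

theorem commute_of_mul_sq_eq_one {M : Type*} [Monoid M] {a b : M} (hab : a * b ^ 2 = 1)
    (hba : b ^ 2 * a = 1) : Commute a b :=
  calc a * b = a * b * (b ^ 2 * a) := by rw [hba, mul_one]
    _ = a * b ^ 2 * b * a := by simp only [sq, mul_assoc]
    _ = b * a := by rw [hab, one_mul]

section InverseSquareRoot

variable {E : Type*} [NormedAddCommGroup E] [InnerProductSpace ℂ E] {A B : E →L[ℂ] E}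

theorem commute_of_isSymmetric_of_mul_sq_eq_one (hA : (A : E →ₗ[ℂ] E).IsSymmetric)
    (hB : (B : E →ₗ[ℂ] E).IsSymmetric) (hAB : A * B ^ 2 = 1) : Commute A B := by
  have hBA : B ^ 2 * A = 1 := by
    ext v
    refine ext_inner_left ℂ fun w => ?_
    calc inner ℂ w (B (B (A v))) = inner ℂ (B w) (B (A v)) := (hB _ _).symm
      _ = inner ℂ (B (B w)) (A v) := (hB _ _).symm
      _ = inner ℂ (A (B (B w))) v := (hA _ _).symm
      _ = inner ℂ w v := congr(inner ℂ ($hAB w) v)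
  exact commute_of_mul_sq_eq_one hAB hBA

theorem inner_map_map_self_of_mul_sq_eq_one (hB : (B : E →ₗ[ℂ] E).IsSymmetric)
    (hcomm : Commute A B) (hAB : A * B ^ 2 = 1) (v : E) :
    inner ℂ (A (A (B v))) (B v) = inner ℂ (A v) v := by
  have hABv (w : E) : A (B w) = B (A w) := congr($hcomm.eq w)
  have hone : A (B (B (A v))) = A v := congr($hAB (A v))
  calc inner ℂ (A (A (B v))) (B v) = inner ℂ (B (A (A (B v)))) v := (hB _ _).symm
    _ = inner ℂ (A (B (B (A v)))) v := by simp only [hABv]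
    _ = inner ℂ (A v) v := by rw [hone]

theorem stmt_13_general (hA : (A : E →ₗ[ℂ] E).IsSymmetric) (hB : (B : E →ₗ[ℂ] E).IsSymmetric)
    (hAB : A * B ^ 2 = 1) {f : ℝ → ℝ} (hf : Differentiable ℝ f) (hf0 : ∀ t, f t ≠ 0)
    {x y : ℝ → E} (hx : IsCharacteristicCurve A f x) (hy : ∀ t, y t = B (x t)) (t : ℝ) :
    inner ℂ (A (A (y t))) (y t) = inner ℂ (A (x 0)) (x 0) ∧
      deriv (deriv y) t = (deriv f t / f t) • deriv y t - f t ^ 2 • A (A (y t)) := by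
  obtain rfl : y = fun t => B (x t) := funext hy
  have hcomm : Commute A B := commute_of_isSymmetric_of_mul_sq_eq_one hA hB hAB
  have henergy : inner ℂ (A (A (B (x t)))) (B (x t)) = inner ℂ (A (x t)) (x t) :=
    inner_map_map_self_of_mul_sq_eq_one hB hcomm hAB (x t)
  exact ⟨henergy.trans (hx.inner_map_self_eq hA t 0),
    ((hx.map_of_commute hcomm).hasDerivAt_deriv (hf t).hasDerivAt (hf0 t)).deriv⟩

end InverseSquareRoot

section DiagonalOperator

open Matrix

variable {ι : Type*} [Fintype ι] [DecidableEq ι]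

theorem eq_toEuclideanCLM_diagonal {𝕜 : Type*} [RCLike 𝕜] {d : ι → 𝕜}
    {T : EuclideanSpace 𝕜 ι → EuclideanSpace 𝕜 ι} (hT : ∀ z j, T z j = d j * z j) :
    T = toEuclideanCLM (𝕜 := 𝕜) (diagonal d) := by
  ext z j
  rw [hT, ofLp_toEuclideanCLM, mulVec_diagonal]

theorem isSymmetric_toEuclideanCLM_diagonal_ofReal (d : ι → ℝ) :
    (toEuclideanCLM (𝕜 := ℂ) (diagonal fun j => (d j : ℂ)) :
      EuclideanSpace ℂ ι →ₗ[ℂ] EuclideanSpace ℂ ι).IsSymmetric := by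
  rw [coe_toEuclideanCLM_eq_toEuclideanLin, isSymmetric_toEuclideanLin_iff,
    isHermitian_diagonal_iff]
  exact fun j => Complex.conj_ofReal (d j)

theorem toEuclideanCLM_diagonal_mul_inv_sqrt_sq {a : ι → ℝ} (ha : ∀ j, 0 < a j) :
    toEuclideanCLM (𝕜 := ℂ) (diagonal fun j => (a j : ℂ)) *
      toEuclideanCLM (𝕜 := ℂ) (diagonal fun j => (((√(a j))⁻¹ : ℝ) : ℂ)) ^ 2 = 1 := by
  have hentry (j : ι) : (a j : ℂ) * (((√(a j))⁻¹ : ℝ) : ℂ) ^ 2 = 1 := by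
    rw [← Complex.ofReal_pow, ← Complex.ofReal_mul, inv_pow, Real.sq_sqrt (ha j).le,
      mul_inv_cancel₀ (ha j).ne', Complex.ofReal_one]
  rw [← map_pow, ← map_mul, diagonal_pow, diagonal_mul_diagonal]
  simp only [Pi.pow_apply, hentry, diagonal_one, map_one]

end DiagonalOperator

/-- Let `A : ℂⁿ → ℂⁿ` be `(Az)ⱼ = aⱼzⱼ` (`aⱼ > 0`), `A^{−1/2}` the
diagonal map with entries `aⱼ^{−1/2}`.  If `x` is a `C²` characteristic curve,
`x'(t) = f(t)·(i·Ax(t))` with `f` a nonvanishing `C¹` function, normalized so that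
`⟨Ax(0), x(0)⟩ = 1`, then `y = A^{−1/2}x` satisfies `⟨A²y(t), y(t)⟩ = 1` and
`y'' = (f'/f)·y' − f²·A²y`; i.e. `y` is a reparameterized geodesic on `{⟨A²y,y⟩ = 1}`. -/
theorem stmt_13 (n : ℕ) (hn : 1 ≤ n) (a : Fin n → ℝ) (ha : ∀ j, 0 < a j)
    (A Asqrtinv : EuclideanSpace ℂ (Fin n) → EuclideanSpace ℂ (Fin n))
    (hA : ∀ z j, A z j = (a j : ℂ) * z j)
    (hAsqrtinv : ∀ z j, Asqrtinv z j = (((Real.sqrt (a j))⁻¹ : ℝ) : ℂ) * z j)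
    (f : ℝ → ℝ) (hf : ContDiff ℝ 1 f) (hf0 : ∀ t, f t ≠ 0)
    (x : ℝ → EuclideanSpace ℂ (Fin n)) (hx : ContDiff ℝ 2 x)
    (hchar : ∀ t, deriv x t = f t • (Complex.I • A (x t)))
    (hnorm : rinner (A (x 0)) (x 0) = 1)
    (y : ℝ → EuclideanSpace ℂ (Fin n)) (hy : ∀ t, y t = Asqrtinv (x t)) :
    ∀ t, rinner (A (A (y t))) (y t) = 1 ∧
      deriv (deriv y) t = (deriv f t / f t) • deriv y t - (f t ^ 2) • A (A (y t)) := by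
  obtain rfl := eq_toEuclideanCLM_diagonal hA
  obtain rfl := eq_toEuclideanCLM_diagonal hAsqrtinv
  have hcurve : IsCharacteristicCurve _ f x := fun t =>
    hchar t ▸ (hx.differentiable two_ne_zero t).hasDerivAt
  intro t
  obtain ⟨henergy, hgeodesic⟩ := stmt_13_general (isSymmetric_toEuclideanCLM_diagonal_ofReal a)
    (isSymmetric_toEuclideanCLM_diagonal_ofReal _) (toEuclideanCLM_diagonal_mul_inv_sqrt_sq ha)
    (hf.differentiable one_ne_zero) hf0 hcurve hy t
  exact ⟨congr(Complex.re $henergy).trans hnorm, hgeodesic⟩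
end
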